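/- arXiv:2605.28449 — 4 statements merged into one kernel-verified Lean document; each statement's English description precedes it below -/
import Mathlib

section
/- With notation as in the context, let k and A be fixed positive integers, set c₁ = Y⁸ and c₂ = 2.02·10¹²·(log Y)², and let γ = max{|α|, |β|}. Suppose the integers n ≥ 0, a₁, …, a_k with |a_i| ≤ A for all i, and m₁ > m₂ > ⋯ > m_k ≥ 1 satisfy u_n = a₁·m₁! + ⋯ + a_k·m_k!, and suppose that for all indices 1 ≤ j₁ ≤ j₂ ≤ k the partial sum Σ_{i=j₁}^{j₂} a_i·m_i! is different from both (a·n + c)·α^n and b·β^n. Then either n ≤ c₁ or n < (1/log γ)·(log(4A) + 10.49·c₂·(log n)³)^k; in particular, n ≤ max{c₁, n₀}, where n₀ is the largest positive integer solution of the inequality n < (1/log γ)·(log(4A) + 10.49·c₂·(log n)³)^k. -/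
/-!
After clearing denominators the equation reads `E * g ^ n + F = D * ∑ i, a i * (m i)!`, where `g`
is the one of `α` and `β` other than `1`. With the factorials in increasing order, each `(m j)!`
divides what is left of `E * g ^ n + F` once the smaller terms of the right-hand side have been
absorbed into `F`, so the factorials can be bounded one by one as soon as the 2-adic valuation of
such a form is. After the last step, `|g| ^ n ≤ |E * g ^ n|` is itself bounded.

The 2-adic bound comes from the Schneider method. By pigeonhole there is a nonzero polynomial with
small integer coefficients whose values at the points `(z, g ^ z)` are all divisible by a high power
of `8`; finitely many congruences suffice because `8 ∣ g - 1` (which holds for the square of an odd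
`g`) makes high finite differences of these values vanish modulo that power. If the same power
divided `E * g ^ n + F`, then `g ^ n` could be replaced by `-F / E`, and the values at
`(t + s * n, g ^ t * (-F / E) ^ s)` would be divisible by it too. Being small they would vanish,
which is more zeros than the Casorati determinant of the polynomial allows.
-/

section FiniteDifferences

open Polynomial

theorem eq_zero_of_fwdDiff_iter_eq_zero {G : Type*} [AddCommGroup G] {J : ℕ} {f : ℕ → G}
    (hJ : (fwdDiff 1)^[J] f = 0) (h0 : ∀ z < J, f z = 0) : f = 0 := by
  induction J generalizing f with
  | zero => exact hJ
  | succ J ih =>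
    have hstep : fwdDiff 1 f = 0 :=
      ih hJ fun z hz => by rw [fwdDiff, h0 _ (by omega), h0 _ (by omega), sub_self]
    funext z
    induction z with
    | zero => exact h0 0 J.succ_pos
    | succ z ihz => exact (sub_eq_zero.mp (congrFun hstep z)).trans ihz

variable {R : Type*} [CommRing R]

theorem degree_taylor_sub_self_lt {P : R[X]} {a : ℕ} (hP : P.degree < (a + 1 : ℕ)) (r : R) :
    (taylor r P - P).degree < a := by
  rcases eq_or_ne P 0 with rfl | hP0
  · simp
  have hlt : (taylor r P - P).degree < P.degree := by
    have h := degree_sub_lt_left (degree_taylor P r) (by simpa using hP0) (by simp)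
    rwa [degree_taylor] at h
  rw [degree_eq_natDegree hP0, Nat.cast_lt, Nat.lt_succ_iff] at hP
  exact hlt.trans_le (degree_le_of_natDegree_le hP)

theorem fwdDiff_iter_pow_mul_eval_mul_pow {ε : R} {M : ℕ} (hε : ε ^ M = 0) {J m a : ℕ} {P : R[X]}
    (hP : P.degree < a) (hJ : a + M ≤ J + m) :
    (fwdDiff 1)^[J] (fun z : ℕ => ε ^ m * P.eval (z : R) * (1 + ε) ^ z) = 0 := by
  induction J generalizing m a P with
  | zero =>
    funext z
    simp [pow_eq_zero_of_le (show M ≤ m by omega) hε]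
  | succ J ih =>
    rcases eq_or_ne P 0 with rfl | hP0
    · simp [fwdDiff_iter_eq_sum_shift, funext_iff]
    obtain ⟨a, rfl⟩ : ∃ b, a = b + 1 := by
      rw [degree_eq_natDegree hP0, Nat.cast_lt] at hP
      exact Nat.exists_eq_succ_of_ne_zero (by omega)
    -- Each difference either lowers the degree of `P` or produces a further factor `ε`.
    have hstep : fwdDiff 1 (fun z : ℕ => ε ^ m * P.eval (z : R) * (1 + ε) ^ z) =
        (fun z : ℕ => ε ^ m * (taylor 1 P - P).eval (z : R) * (1 + ε) ^ z) +
        (fun z : ℕ => ε ^ (m + 1) * (taylor 1 P).eval (z : R) * (1 + ε) ^ z) := by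
      funext z
      simp only [fwdDiff, Pi.add_apply, eval_sub, taylor_eval, Nat.cast_add, Nat.cast_one]
      ring
    rw [Function.iterate_succ_apply, hstep, fwdDiff_iter_add,
      ih (degree_taylor_sub_self_lt hP 1) (by omega),
      ih (m := m + 1) (a := a + 1) (by rwa [degree_taylor]) (by omega), add_zero]

theorem fwdDiff_iter_eval_mul_pow_eq_zero {r : R} {M : ℕ} (hr : (r - 1) ^ M = 0) {a : ℕ} {P : R[X]}
    (hP : P.degree < a) : (fwdDiff 1)^[a + M] (fun z : ℕ => P.eval (z : R) * r ^ z) = 0 := by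
  simpa using fwdDiff_iter_pow_mul_eval_mul_pow hr (m := 0) hP le_rfl

end FiniteDifferences

section AuxiliaryPolynomial

open Polynomial

variable {R : Type*} {K L : ℕ}

/-- The value at `(x, y, z)` of the polynomial with coefficients `p (k, l)` for `k < K`, `l < L`,
inhomogeneous of degree `< K` in `x` and homogenized to degree `L` in `(y, z)`; taking `y / z` with
a denominator keeps the values of the auxiliary polynomial of the Schneider method integral. -/
def auxEval [CommSemiring R] (p : Fin K × Fin L → R) (x y z : R) : R :=
  ∑ i, p i * (x ^ (i.1 : ℕ) * (y ^ (i.2 : ℕ) * z ^ (L - i.2)))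

theorem map_auxEval [CommSemiring R] {S : Type*} [CommSemiring S] (φ : R →+* S)
    (p : Fin K × Fin L → R) (x y z : R) :
    φ (auxEval p x y z) = auxEval (φ ∘ p) (φ x) (φ y) (φ z) := by
  simp only [auxEval, map_sum, map_mul, map_pow, Function.comp_apply]

theorem auxEval_mul_mul [CommSemiring R] (p : Fin K × Fin L → R) (x y z w : R) :
    auxEval p x (y * w) (z * w) = w ^ L * auxEval p x y z := by
  rw [auxEval, auxEval, Finset.mul_sum]
  refine Finset.sum_congr rfl fun i _ => ?_
  rw [mul_pow, mul_pow, ← pow_mul_pow_sub w i.2.isLt.le]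
  ring

theorem abs_auxEval_le {p : Fin K × Fin L → ℤ} {B X V x y z : ℤ} (hp : ∀ i, |p i| ≤ B)
    (hX : 1 ≤ X) (hx : |x| ≤ X) (hy : |y| ≤ V) (hz : |z| ≤ V) :
    |auxEval p x y z| ≤ K * L * (B * (X ^ K * V ^ L)) := by
  have hV : 0 ≤ V := (abs_nonneg _).trans hy
  have hterm (i : Fin K × Fin L) :
      |p i * (x ^ (i.1 : ℕ) * (y ^ (i.2 : ℕ) * z ^ (L - i.2)))| ≤ B * (X ^ K * V ^ L) := by
    rw [abs_mul, abs_mul, abs_mul, abs_pow, abs_pow, abs_pow, ← pow_mul_pow_sub V i.2.isLt.le]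
    have hxK : |x| ^ (i.1 : ℕ) ≤ X ^ K :=
      (pow_le_pow_left₀ (abs_nonneg _) hx _).trans (pow_le_pow_right₀ hX i.1.isLt.le)
    have hB : 0 ≤ B := (abs_nonneg _).trans (hp i)
    gcongr
    exact hp i
  calc |auxEval p x y z| ≤ ∑ _i : Fin K × Fin L, B * (X ^ K * V ^ L) :=
        (Finset.abs_sum_le_sum_abs _ _).trans (Finset.sum_le_sum fun i _ => hterm i)
    _ = K * L * (B * (X ^ K * V ^ L)) := by simp

theorem fwdDiff_iter_auxEval_eq_zero [CommRing R] {g : R} {M : ℕ} (hg : (g - 1) ^ M = 0)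
    (p : Fin K × Fin L → R) :
    (fwdDiff 1)^[K + M] (fun z : ℕ => auxEval p z (g ^ z) 1) = 0 := by
  have hexp : (fun z : ℕ => auxEval p z (g ^ z) 1) = ∑ i : Fin K × Fin L, p i • fun z : ℕ =>
      (X ^ (i.1 : ℕ) : R[X]).eval (z : R) * (g ^ (i.2 : ℕ)) ^ z := by
    funext z
    simp [auxEval, pow_right_comm]
  rw [hexp, fwdDiff_iter_finsetSum]
  refine Finset.sum_eq_zero fun i _ => ?_
  have hnil : (g ^ (i.2 : ℕ) - 1) ^ M = 0 :=
    zero_dvd_iff.mp (hg ▸ pow_dvd_pow_of_dvd (sub_one_dvd_pow_sub_one g i.2) M)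
  have hdeg : (X ^ (i.1 : ℕ) : R[X]).degree < K :=
    (degree_X_pow_le _).trans_lt (Nat.cast_lt.mpr i.1.isLt)
  rw [fwdDiff_iter_const_smul, fwdDiff_iter_eval_mul_pow_eq_zero hnil hdeg, smul_zero]

/-- Siegel's lemma modulo `q`. -/
theorem exists_ne_zero_abs_lt_forall_dvd_mulVec {ι κ : Type*} [Fintype ι] [Fintype κ]
    (A : Matrix κ ι ℤ) {q B : ℕ} (hq : q ≠ 0)
    (hcard : q ^ Fintype.card κ < B ^ Fintype.card ι) :
    ∃ p : ι → ℤ, p ≠ 0 ∧ (∀ i, |p i| < B) ∧ ∀ j, (q : ℤ) ∣ A.mulVec p j := by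
  classical
  have : NeZero q := ⟨hq⟩
  obtain ⟨r, s, hne, heq⟩ := Fintype.exists_ne_map_eq_of_card_lt
    (fun (r : ι → Fin B) (j : κ) => ((A.mulVec (fun i => (r i : ℤ)) j : ℤ) : ZMod q))
    (by simpa using hcard)
  refine ⟨fun i => (r i : ℤ) - s i, fun h => hne ?_, fun i => ?_, fun j => ?_⟩
  · funext i
    exact Fin.ext (by exact_mod_cast sub_eq_zero.mp (congrFun h i))
  · rw [abs_sub_lt_iff]
    omega
  · have hsub : (fun i => (r i : ℤ) - s i) = (fun i => (r i : ℤ)) - fun i => (s i : ℤ) := rfl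
    rw [hsub, Matrix.mulVec_sub, ← ZMod.intCast_zmod_eq_zero_iff_dvd, Pi.sub_apply, Int.cast_sub,
      sub_eq_zero]
    exact congrFun heq j

theorem exists_ne_zero_forall_pow_dvd_auxEval {d M B : ℕ} {g : ℤ} (hd : d ≠ 0)
    (hg : (d : ℤ) ∣ g - 1) (hcard : (d ^ M) ^ (K + M) < B ^ (K * L)) :
    ∃ p : Fin K × Fin L → ℤ, p ≠ 0 ∧ (∀ i, |p i| < B) ∧
      ∀ z : ℕ, (d : ℤ) ^ M ∣ auxEval p z (g ^ z) 1 := by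
  obtain ⟨p, hp0, hpB, hp⟩ := exists_ne_zero_abs_lt_forall_dvd_mulVec
    (.of fun (j : Fin (K + M)) (i : Fin K × Fin L) =>
      ((j : ℕ) : ℤ) ^ (i.1 : ℕ) * ((g ^ (j : ℕ)) ^ (i.2 : ℕ) * 1 ^ (L - i.2)))
    (pow_ne_zero M hd) (by simpa using hcard)
  refine ⟨p, hp0, hpB, fun z => ?_⟩
  have hcast (x : ℤ) : (x : ZMod (d ^ M)) = 0 ↔ (d : ℤ) ^ M ∣ x := by
    rw [ZMod.intCast_zmod_eq_zero_iff_dvd, Nat.cast_pow]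
  have hnil : ((g : ZMod (d ^ M)) - 1) ^ M = 0 := by
    exact_mod_cast (hcast ((g - 1) ^ M)).mpr (pow_dvd_pow_of_dvd hg M)
  have hmap (z : ℕ) : ((auxEval p z (g ^ z) 1 : ℤ) : ZMod (d ^ M)) =
      auxEval (Int.castRingHom (ZMod (d ^ M)) ∘ p) (z : ZMod (d ^ M)) (g ^ z) 1 := by
    simpa using map_auxEval (Int.castRingHom (ZMod (d ^ M))) p z (g ^ z) 1
  rw [← hcast, hmap]
  refine congrFun (eq_zero_of_fwdDiff_iter_eq_zero (fwdDiff_iter_auxEval_eq_zero hnil _)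
    fun j hj => ?_) z
  rw [← hmap, hcast]
  simpa [auxEval, Matrix.mulVec, dotProduct, mul_comm] using hp ⟨j, hj⟩

end AuxiliaryPolynomial

section ZeroEstimate

open Polynomial

/-- The Casorati matrix of the functions `z ↦ v j ^ z * Q j (z)`, whose row `i` holds the shifts by
`i`, with the common factor `v j ^ z` of column `j` removed. -/
noncomputable def casoratiMatrix {R : Type*} [CommSemiring R] {m : ℕ} (Q : Fin m → R[X])
    (v : Fin m → R) : Matrix (Fin m) (Fin m) R[X] :=
  .of fun i j => C (v j ^ (i : ℕ)) * taylor ((i : ℕ) : R) (Q j)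

/-- The coefficient of `y ^ l` in the auxiliary polynomial, as a polynomial in `x`. -/
noncomputable def auxCoeff {R : Type*} [Semiring R] {K L : ℕ} (p : Fin K × Fin L → R) (l : Fin L) :
    R[X] :=
  ∑ k : Fin K, C (p (k, l)) * X ^ (k : ℕ)

section Casorati

variable {R : Type*} [CommRing R] [IsDomain R] {m : ℕ} {Q : Fin m → R[X]} {v : Fin m → R}

theorem natDegree_prod_casoratiMatrix (hQ : ∀ j, Q j ≠ 0) (hv0 : ∀ j, v j ≠ 0)
    (σ : Equiv.Perm (Fin m)) :
    (∏ j, casoratiMatrix Q v (σ j) j).natDegree = ∑ j, (Q j).natDegree := by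
  rw [natDegree_prod _ _ fun j _ => by simpa [casoratiMatrix, hv0] using hQ j]
  refine Finset.sum_congr rfl fun j _ => ?_
  rw [casoratiMatrix, Matrix.of_apply, natDegree_C_mul (pow_ne_zero _ (hv0 j)), natDegree_taylor]

theorem natDegree_det_casoratiMatrix_le (hQ : ∀ j, Q j ≠ 0) (hv0 : ∀ j, v j ≠ 0) :
    (casoratiMatrix Q v).det.natDegree ≤ ∑ j, (Q j).natDegree := by
  rw [Matrix.det_apply]
  exact natDegree_sum_le_of_forall_le _ _ fun σ _ =>
    (natDegree_smul_le _ _).trans (natDegree_prod_casoratiMatrix hQ hv0 σ).le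

theorem coeff_det_casoratiMatrix (hQ : ∀ j, Q j ≠ 0) (hv0 : ∀ j, v j ≠ 0) :
    (casoratiMatrix Q v).det.coeff (∑ j, (Q j).natDegree) =
      (∏ j, (Q j).leadingCoeff) * (Matrix.vandermonde v).det := by
  rw [← Matrix.det_transpose (Matrix.vandermonde v), Matrix.det_apply, Matrix.det_apply,
    finsetSum_coeff, Finset.mul_sum]
  refine Finset.sum_congr rfl fun σ _ => ?_
  rw [coeff_smul, ← natDegree_prod_casoratiMatrix hQ hv0 σ, coeff_natDegree, leadingCoeff_prod,
    mul_smul_comm, ← Finset.prod_mul_distrib]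
  congr 1
  refine Finset.prod_congr rfl fun j _ => ?_
  rw [casoratiMatrix, Matrix.of_apply, leadingCoeff_mul, leadingCoeff_C, leadingCoeff_taylor,
    Matrix.transpose_apply, Matrix.vandermonde_apply, mul_comm]

theorem det_casoratiMatrix_ne_zero (hQ : ∀ j, Q j ≠ 0) (hv0 : ∀ j, v j ≠ 0)
    (hv : Function.Injective v) : (casoratiMatrix Q v).det ≠ 0 := by
  intro h
  have hcoeff := coeff_det_casoratiMatrix hQ hv0
  rw [h, coeff_zero] at hcoeff
  exact mul_ne_zero (Finset.prod_ne_zero_iff.mpr fun j _ => leadingCoeff_ne_zero.mpr (hQ j))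
    (Matrix.det_vandermonde_ne_zero_iff.mpr hv) hcoeff.symm

end Casorati

variable {R : Type*} [CommRing R] {K L : ℕ} {p : Fin K × Fin L → R}

theorem natDegree_auxCoeff_le (p : Fin K × Fin L → R) (l : Fin L) :
    (auxCoeff p l).natDegree ≤ K - 1 :=
  natDegree_sum_le_of_forall_le _ _ fun k _ =>
    (natDegree_C_mul_X_pow_le _ _).trans (by omega)

theorem coeff_auxCoeff (p : Fin K × Fin L → R) (k : Fin K) (l : Fin L) :
    (auxCoeff p l).coeff k = p (k, l) := by
  simp [auxCoeff, finsetSum_coeff, Fin.val_inj]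

theorem sum_eval_auxCoeff_mul (p : Fin K × Fin L → R) (x y z : R) :
    ∑ l, (auxCoeff p l).eval x * (y ^ (l : ℕ) * z ^ (L - l)) = auxEval p x y z := by
  simp only [auxEval, auxCoeff, Fintype.sum_prod_type_right, eval_finsetSum, eval_mul, eval_C,
    eval_pow, eval_X, Finset.sum_mul, mul_assoc]

theorem eval_det_casoratiMatrix_auxCoeff_eq_zero [IsDomain R] {m : ℕ} [NeZero m]
    {e : Fin m → Fin L} (he : Function.Injective e)
    (hrange : ∀ l ∉ Set.range e, auxCoeff p l = 0) {g x y z : R} (hy : y ≠ 0) (hz : z ≠ 0)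
    (hvan : ∀ i < m, auxEval p (x + i) (g ^ i * y) z = 0) :
    (casoratiMatrix (fun j => auxCoeff p (e j)) (fun j => g ^ (e j : ℕ))).det.eval x = 0 := by
  rw [← coe_evalRingHom, RingHom.map_det, ← Matrix.exists_mulVec_eq_zero_iff]
  refine ⟨fun j => y ^ (e j : ℕ) * z ^ (L - e j), fun h => ?_, funext fun i => ?_⟩
  · exact mul_ne_zero (pow_ne_zero _ hy) (pow_ne_zero _ hz) (congrFun h 0)
  · rw [Pi.zero_apply, ← hvan i i.isLt, ← sum_eval_auxCoeff_mul]
    refine Fintype.sum_of_injective e he _ _ (fun l hl => by simp [hrange l hl]) fun j => ?_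
    simp only [casoratiMatrix, RingHom.mapMatrix_apply, Matrix.map_apply, Matrix.of_apply,
      coe_evalRingHom, eval_mul, eval_C, taylor_eval, mul_pow, pow_right_comm g]
    ring

theorem injective_add_mul {T S n : ℕ} (hTn : T ≤ n) :
    Function.Injective fun x : Fin T × Fin S => (x.1 : ℕ) + x.2 * n := by
  intro x x' h
  have hx := x.1.isLt.trans_le hTn
  have hx' := x'.1.isLt.trans_le hTn
  have hmod := congrArg (· % n) h
  have hdiv := congrArg (· / n) h
  simp only [Nat.add_mul_mod_self_right, Nat.mod_eq_of_lt, hx, hx'] at hmod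
  simp only [Nat.add_mul_div_right _ _ (Nat.zero_lt_of_lt hx), Nat.div_eq_of_lt, hx, hx',
    zero_add] at hdiv
  exact Prod.ext (Fin.ext hmod) (Fin.ext hdiv)

/-- A zero estimate: the Casorati determinant of the nonzero columns of `p` has degree at most
`L * (K - 1)` and would vanish at the `T * S` points `t + s * n`. -/
theorem eq_zero_of_forall_auxEval_eq_zero [IsDomain R] [CharZero R] {g : R}
    (hg : Function.Injective fun i : ℕ => g ^ i) {y z : ℕ → R} (hy : ∀ s, y s ≠ 0)
    (hz : ∀ s, z s ≠ 0) {n T S : ℕ} (hTn : T ≤ n) (hcard : L * (K - 1) < T * S)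
    (hvan : ∀ t < T + L, ∀ s < S, auxEval p (t + s * n : ℕ) (g ^ t * y s) (z s) = 0) :
    p = 0 := by
  classical
  by_contra hp
  let Λ : Finset (Fin L) := {l | auxCoeff p l ≠ 0}
  have hΛ : Λ.card ≠ 0 := fun hΛ => hp <| funext fun i => by
    have hi : auxCoeff p i.2 = 0 := by
      simpa [Λ] using Finset.eq_empty_iff_forall_notMem.mp (Finset.card_eq_zero.mp hΛ) i.2
    rw [Pi.zero_apply, ← coeff_zero (i.1 : ℕ), ← hi, coeff_auxCoeff]
  have : NeZero Λ.card := ⟨hΛ⟩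
  have hΛL : Λ.card ≤ L := by simpa using Finset.card_le_univ Λ
  have hg0 : g ≠ 0 := by
    rintro rfl
    exact absurd (@hg 1 2 (by simp)) (by norm_num)
  let e : Fin Λ.card ↪o Fin L := Λ.orderEmbOfFin rfl
  have hQ (j) : auxCoeff p (e j) ≠ 0 := (Finset.mem_filter.mp (Λ.orderEmbOfFin_mem rfl j)).2
  have hrange : ∀ l ∉ Set.range e, auxCoeff p l = 0 := by
    simp [e, Λ]
  have hv0 (j) : g ^ (e j : ℕ) ≠ 0 := pow_ne_zero _ hg0
  refine det_casoratiMatrix_ne_zero hQ hv0 (hg.comp (Fin.val_injective.comp e.injective))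
    (eq_zero_of_natDegree_lt_card_of_eval_eq_zero _
      (Nat.cast_injective.comp (injective_add_mul hTn (S := S))) (fun x => ?_) ?_)
  · refine eval_det_casoratiMatrix_auxCoeff_eq_zero e.injective hrange
      (mul_ne_zero (pow_ne_zero x.1 hg0) (hy x.2)) (hz x.2) fun i hi => ?_
    have hzero := hvan (x.1 + i) (by omega) x.2 x.2.isLt
    rwa [add_right_comm, Nat.cast_add, add_comm (x.1 : ℕ) i, pow_add, mul_assoc] at hzero
  · calc _ ≤ ∑ j, (auxCoeff p (e j)).natDegree := natDegree_det_casoratiMatrix_le hQ hv0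
      _ ≤ ∑ _j : Fin Λ.card, (K - 1) := Finset.sum_le_sum fun j _ => natDegree_auxCoeff_le p _
      _ ≤ L * (K - 1) := by simpa using Nat.mul_le_mul_right _ hΛL
      _ < Fintype.card (Fin T × Fin S) := by simpa using hcard

end ZeroEstimate

section SchneiderMethod

theorem auxEval_modEq {K L : ℕ} (p : Fin K × Fin L → ℤ) {q y y' : ℤ} (h : y ≡ y' [ZMOD q])
    (x z : ℤ) : auxEval p x y z ≡ auxEval p x y' z [ZMOD q] :=
  Int.ModEq.sum fun _ _ => (((h.pow _).mul_right _).mul_left _).mul_left _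

theorem pow_mul_neg_pow_modEq {q g E F : ℤ} {n : ℕ} (h : q ∣ E * g ^ n + F) (t s : ℕ) :
    g ^ t * (-F) ^ s ≡ g ^ (t + s * n) * E ^ s [ZMOD q] := by
  have hF : -F ≡ E * g ^ n [ZMOD q] := by
    rwa [Int.modEq_iff_dvd, sub_neg_eq_add]
  calc g ^ t * (-F) ^ s ≡ g ^ t * (E * g ^ n) ^ s [ZMOD q] := (hF.pow s).mul_left _
    _ = g ^ (t + s * n) * E ^ s := by ring

theorem not_pow_dvd_mul_pow_add_of_lt {d K L T S M B X U W n : ℕ} {g E F : ℤ} (hd : d ≠ 0)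
    (hdg : (d : ℤ) ∣ g - 1) (hg : 1 < |g|) (hE0 : E ≠ 0) (hF0 : F ≠ 0) (hgW : |g| ≤ W)
    (hE : |E| ≤ U) (hF : |F| ≤ U) (hTn : T ≤ n) (hX : T + L + S * n ≤ X)
    (hsiegel : (d ^ M) ^ (K + M) < B ^ (K * L)) (hzero : L * (K - 1) < T * S)
    (hsmall : K * L * (B * (X ^ K * (W ^ (T + L) * U ^ S) ^ L)) < d ^ M) :
    ¬ (d : ℤ) ^ M ∣ E * g ^ n + F := by
  intro hdvd
  obtain ⟨p, hp0, hpB, hpd⟩ := exists_ne_zero_forall_pow_dvd_auxEval hd hdg hsiegel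
  have hW1 : (1 : ℤ) ≤ W := hg.le.trans hgW
  have hU1 : (1 : ℤ) ≤ U := (Int.one_le_abs hE0).trans hE
  have hX1 : (1 : ℤ) ≤ X := by
    have hT : 0 < T := Nat.pos_of_mul_pos_right (Nat.zero_lt_of_lt hzero)
    exact_mod_cast (by omega : 1 ≤ X)
  refine hp0 (eq_zero_of_forall_auxEval_eq_zero (Int.pow_right_injective (by zify; exact hg))
    (fun s => pow_ne_zero s (neg_ne_zero.mpr hF0)) (fun s => pow_ne_zero s hE0) hTn hzero
    fun t ht s hs => ?_)
  have hdiv : (d : ℤ) ^ M ∣ auxEval p (t + s * n : ℕ) (g ^ t * (-F) ^ s) (E ^ s) := by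
    rw [(auxEval_modEq p (pow_mul_neg_pow_modEq hdvd t s) _ _).dvd_iff,
      ← one_mul (E ^ s), mul_left_comm, one_mul, auxEval_mul_mul]
    exact (hpd _).mul_left _
  have hUs : (U : ℤ) ^ s ≤ U ^ S := pow_le_pow_right₀ hU1 hs.le
  have hx : |((t + s * n : ℕ) : ℤ)| ≤ X := by
    rw [Nat.abs_cast, Nat.cast_le]
    exact le_trans (by gcongr) hX
  have hy : |g ^ t * (-F) ^ s| ≤ W ^ (T + L) * U ^ S := by
    rw [abs_mul, abs_pow, abs_pow, abs_neg]
    gcongr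
    · exact (pow_le_pow_left₀ (abs_nonneg g) hgW t).trans (pow_le_pow_right₀ hW1 ht.le)
    · exact (pow_le_pow_left₀ (abs_nonneg F) hF s).trans hUs
  have hz : |E ^ s| ≤ W ^ (T + L) * U ^ S := by
    rw [abs_pow]
    exact ((pow_le_pow_left₀ (abs_nonneg E) hE s).trans hUs).trans
      (le_mul_of_one_le_left (by positivity) (one_le_pow₀ hW1))
  refine Int.eq_zero_of_abs_lt_dvd hdiv ((abs_auxEval_le (fun i => (hpB i).le)
    hX1 hx hy hz).trans_lt ?_)
  exact_mod_cast hsmall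

theorem auxEval_bound_lt_eight_pow {G H N : ℕ} (hG : 0 < G) (hH : 0 < H) (hN : 0 < N) :
    2400 * (G * H * N) * (20 * N) * (2 ^ (24000 * (G * H * N ^ 2)) *
      ((2 ^ (2 * N)) ^ (2400 * (G * H * N)) *
        ((2 ^ G) ^ (200 * (H * N) + 20 * N) * (2 ^ H) ^ (240 * (G * N))) ^ (20 * N))) <
      8 ^ (16000 * (G * H * N ^ 2)) := by
  have hP : 0 < G * H * N ^ 2 := by positivity
  have hKL : 2400 * (G * H * N) * (20 * N) ≤ 2 ^ (17 * (G * H * N ^ 2)) := by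
    have hlt : G * H * N ^ 2 < 2 ^ (G * H * N ^ 2) := Nat.lt_two_pow_self
    calc 2400 * (G * H * N) * (20 * N) = 48000 * (G * H * N ^ 2) := by ring
      _ ≤ 2 ^ 16 * 2 ^ (G * H * N ^ 2) := by omega
      _ ≤ 2 ^ (17 * (G * H * N ^ 2)) := by
        rw [← pow_add]
        exact Nat.pow_le_pow_right two_pos (by omega)
  refine (Nat.mul_le_mul_right _ hKL).trans_lt ?_
  simp only [show 8 = 2 ^ 3 by norm_num, ← pow_mul, ← pow_add]
  refine Nat.pow_lt_pow_right one_lt_two ?_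
  have hGN2 : G * N ^ 2 ≤ G * H * N ^ 2 := Nat.mul_le_mul_right _ (Nat.le_mul_of_pos_right G hH)
  linarith

theorem not_pow_dvd_mul_pow_add_of_dvd {q g E F : ℤ} {j n : ℕ} (hq : q ∣ g) (hF0 : F ≠ 0)
    (hF : |F| < |q| ^ j) (hj : j ≤ n) : ¬ q ^ j ∣ E * g ^ n + F := by
  intro hdvd
  have hFq : q ^ j ∣ F := (Int.dvd_add_right
    (((pow_dvd_pow q hj).trans (pow_dvd_pow_of_dvd hq n)).mul_left E)).mp hdvd
  exact hF0 (Int.eq_zero_of_abs_lt_dvd (by rwa [← abs_pow, abs_dvd]) hF)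

/-- The size bounds on a form `E * g ^ n + F` that the whole argument carries along, in terms of
binary logarithms: `G` bounds that of `g`, `H` those of `E` and `F`, and `N` that of `n`. -/
structure FormBounds (g E F : ℤ) (n G H N : ℕ) : Prop where
  one_lt_abs : 1 < |g|
  abs_le : |g| ≤ 2 ^ G
  left_ne_zero : E ≠ 0
  right_ne_zero : F ≠ 0
  abs_left_le : |E| ≤ 2 ^ H
  abs_right_le : |F| ≤ 2 ^ H
  le_two_pow : n ≤ 2 ^ N

namespace FormBounds

variable {g E F : ℤ} {n G H N : ℕ}

theorem pos (h : FormBounds g E F n G H N) : 0 < G :=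
  Nat.pos_of_ne_zero fun hG => by simpa [hG] using h.one_lt_abs.trans_le h.abs_le

theorem not_eight_pow_dvd (h : FormBounds g E F n G H N) (hg8 : 8 ∣ g - 1) (hH : 0 < H)
    (hN : 0 < N) (hn : 500 * (G * H * N) ≤ n) :
    ¬ (8 : ℤ) ^ (16000 * (G * H * N ^ 2)) ∣ E * g ^ n + F := by
  have hG := h.pos
  have hQ : 0 < G * H * N := by positivity
  have hP : G * H * N ≤ G * H * N ^ 2 := by
    gcongr
    exact Nat.le_self_pow two_ne_zero N
  have hGN : G * N ≤ G * H * N := Nat.mul_le_mul_right N (Nat.le_mul_of_pos_right G hH)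
  have hHN : H * N ≤ G * H * N := Nat.mul_le_mul_right N (Nat.le_mul_of_pos_left H hG)
  have hNH : N ≤ H * N := Nat.le_mul_of_pos_left N hH
  -- `T * S = L * K` suits the zero estimate, and the coefficient bound `B` takes half of the
  -- `48000 * (G * H * N ^ 2)` bits of `8 ^ M`.
  refine not_pow_dvd_mul_pow_add_of_lt (d := 8) (K := 2400 * (G * H * N)) (L := 20 * N)
    (T := 200 * (H * N)) (S := 240 * (G * N)) (B := 2 ^ (24000 * (G * H * N ^ 2)))
    (X := 2 ^ (2 * N)) (W := 2 ^ G) (U := 2 ^ H) (by norm_num) hg8 h.one_lt_abs h.left_ne_zero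
    h.right_ne_zero (mod_cast h.abs_le) (mod_cast h.abs_left_le) (mod_cast h.abs_right_le)
    (by omega) ?_ ?_ ?_ ?_
  · calc 200 * (H * N) + 20 * N + 240 * (G * N) * n ≤ n * n := by nlinarith
      _ ≤ 2 ^ N * 2 ^ N := Nat.mul_le_mul h.le_two_pow h.le_two_pow
      _ = 2 ^ (2 * N) := by rw [two_mul, pow_add]
  · rw [show 8 = 2 ^ 3 by norm_num, ← pow_mul, ← pow_mul, ← pow_mul]
    refine Nat.pow_lt_pow_right one_lt_two ?_
    rw [show 2400 * (G * H * N) * (20 * N) = 48000 * (G * H * N ^ 2) by ring]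
    nlinarith
  · rw [show 200 * (H * N) * (240 * (G * N)) = 20 * N * (2400 * (G * H * N)) by ring]
    exact Nat.mul_lt_mul_of_pos_left (by omega) (by positivity)
  · exact auxEval_bound_lt_eight_pow hG hH hN

theorem sq (h : FormBounds g E F n G H N) (hGH : G ≤ H) :
    FormBounds (g ^ 2) (E * g ^ (n % 2)) F (n / 2) (2 * G) (2 * H) N where
  one_lt_abs := by
    rw [abs_pow]
    exact one_lt_pow₀ h.one_lt_abs two_ne_zero
  abs_le := by
    rw [abs_pow, mul_comm, pow_mul]
    exact pow_le_pow_left₀ (abs_nonneg g) h.abs_le 2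
  left_ne_zero := mul_ne_zero h.left_ne_zero
    (pow_ne_zero _ (abs_pos.mp (zero_lt_one.trans h.one_lt_abs)))
  right_ne_zero := h.right_ne_zero
  abs_left_le := by
    have hmod : |g| ^ (n % 2) ≤ 2 ^ H :=
      calc |g| ^ (n % 2) ≤ |g| ^ 1 := pow_le_pow_right₀ h.one_lt_abs.le (by omega)
        _ ≤ 2 ^ G := by simpa using h.abs_le
        _ ≤ 2 ^ H := pow_le_pow_right₀ one_le_two hGH
    rw [abs_mul, abs_pow, two_mul, pow_add]
    exact mul_le_mul h.abs_left_le hmod (by positivity) (by positivity)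
  abs_right_le := h.abs_right_le.trans (pow_le_pow_right₀ one_le_two (by omega))
  le_two_pow := (n.div_le_self 2).trans h.le_two_pow

theorem not_two_pow_dvd_of_odd (h : FormBounds g E F n G H N) (hg : Odd g) (hGH : G ≤ H)
    (hN : 0 < N) (hn : 4000 * (G * H * N) ≤ n) :
    ¬ (2 : ℤ) ^ (192000 * (G * H * N ^ 2)) ∣ E * g ^ n + F := by
  have hG := h.pos
  have hsq : E * g ^ (n % 2) * (g ^ 2) ^ (n / 2) = E * g ^ n := by
    rw [mul_assoc, ← pow_mul, ← pow_add, Nat.mod_add_div]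
  have height := (h.sq hGH).not_eight_pow_dvd (Int.eight_dvd_sq_sub_one_of_odd hg)
    (by omega) hN (by linarith [(by omega : 2000 * (G * H * N) ≤ n / 2)])
  rw [hsq, show (8 : ℤ) = 2 ^ 3 by norm_num, ← pow_mul] at height
  convert height using 3
  ring

theorem not_two_pow_dvd (h : FormBounds g E F n G H N) (hGH : G ≤ H) (hN : 0 < N)
    (hn : 4000 * (G * H * N) ≤ n) :
    ¬ (2 : ℤ) ^ (192000 * (G * H * N ^ 2)) ∣ E * g ^ n + F := by
  rcases Int.even_or_odd g with hg | hg
  · have hG := h.pos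
    have hHGHN : H ≤ G * H * N :=
      calc H ≤ G * H := Nat.le_mul_of_pos_left H hG
        _ ≤ G * H * N := Nat.le_mul_of_pos_right _ hN
    have hP : G * H * N ≤ G * H * N ^ 2 := by
      gcongr
      exact Nat.le_self_pow two_ne_zero N
    have hF : |F| < |(2 : ℤ)| ^ (H + 1) :=
      h.abs_right_le.trans_lt (pow_lt_pow_right₀ one_lt_two H.lt_succ_self)
    exact fun hdvd => not_pow_dvd_mul_pow_add_of_dvd hg.two_dvd h.right_ne_zero hF (by omega)
      ((pow_dvd_pow 2 (by omega)).trans hdvd)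
  · exact h.not_two_pow_dvd_of_odd hg hGH hN hn

end FormBounds

end SchneiderMethod

section Factorials

theorem pow_dvd_factorial {q i m : ℕ} (hq : 0 < q) (h : q * i ≤ m) : q ^ i ∣ m.factorial := by
  calc q ^ i ∣ q.factorial ^ i := pow_dvd_pow_of_dvd (Nat.dvd_factorial hq le_rfl) i
    _ ∣ (q * i).factorial := by
      simpa [mul_comm] using Nat.prod_factorial_dvd_factorial_sum (Finset.range i) fun _ => q
    _ ∣ m.factorial := Nat.factorial_dvd_factorial h

theorem factorial_le_two_pow {m e b : ℕ} (hm : m ≤ 2 ^ e) (hb : m * e ≤ b) :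
    m.factorial ≤ 2 ^ b := by
  calc m.factorial ≤ m ^ m := Nat.factorial_le_pow m
    _ ≤ (2 ^ e) ^ m := Nat.pow_le_pow_left hm m
    _ = 2 ^ (m * e) := by rw [← pow_mul, mul_comm]
    _ ≤ 2 ^ b := Nat.pow_le_pow_right two_pos hb

variable {g E F : ℤ} {n G H N m : ℕ}

theorem FormBounds.lt_of_factorial_dvd (h : FormBounds g E F n G H N) (hGH : G ≤ H) (hN : 0 < N)
    (hn : 4000 * (G * H * N) ≤ n) (hm : (m.factorial : ℤ) ∣ E * g ^ n + F) :
    m < 384000 * (G * H * N ^ 2) := by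
  by_contra! hle
  refine h.not_two_pow_dvd hGH hN hn (dvd_trans ?_ hm)
  exact_mod_cast pow_dvd_factorial two_pos (by omega)

theorem FormBounds.lt_natAbs_mul_of_factorial_dvd (h : FormBounds g E F n G H N) (hn : H < n)
    (hm : (m.factorial : ℤ) ∣ E * g ^ n + F) : m < g.natAbs * (H + 1) := by
  by_contra! hle
  have hF : |F| < |g| ^ (H + 1) :=
    calc |F| ≤ 2 ^ H := h.abs_right_le
      _ < 2 ^ (H + 1) := pow_lt_pow_right₀ one_lt_two H.lt_succ_self
      _ ≤ |g| ^ (H + 1) := pow_le_pow_left₀ zero_le_two (by linarith [h.one_lt_abs]) _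
  refine not_pow_dvd_mul_pow_add_of_dvd dvd_rfl h.right_ne_zero hF hn (dvd_trans ?_ hm)
  rw [← Int.natAbs_dvd, Int.natAbs_pow]
  exact_mod_cast pow_dvd_factorial (by zify; linarith [h.one_lt_abs]) hle

theorem FormBounds.factorial_le_of_dvd (h : FormBounds g E F n G H N) (hGH : G ≤ H) (hN : 0 < N)
    (hn : 384000 * (G * N ^ 3 * H) ≤ n)
    (hm : (m.factorial : ℤ) ∣ E * g ^ n + F) :
    m.factorial ≤ 2 ^ (384000 * (G * N ^ 3 * H)) := by
  have hP : G * H * N ^ 2 ≤ G * N ^ 3 * H :=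
    calc G * H * N ^ 2 = G * N ^ 2 * H := by ring
      _ ≤ G * N ^ 3 * H := by gcongr; omega
  have hlt := h.lt_of_factorial_dvd hGH hN (by nlinarith) hm
  refine factorial_le_two_pow (e := N) ?_ ?_
  · have := h.le_two_pow
    omega
  · calc m * N ≤ 384000 * (G * H * N ^ 2) * N := by gcongr
      _ = 384000 * (G * N ^ 3 * H) := by ring

/-- While `H` is only of the order of `log n`, the crude bound by `g` and the 2-adic bound combine
to an exponent with `G ^ 2` in place of `G * N`. -/
theorem FormBounds.factorial_le_of_dvd_of_two_mul (h : FormBounds g E F n G (2 * N) N)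
    (hGN : G ≤ N) (hn : 768000 * (G * N ^ 3) ≤ n) (hm : (m.factorial : ℤ) ∣ E * g ^ n + F) :
    m.factorial ≤ 2 ^ (18432000 * (G ^ 2 * N ^ 3)) := by
  have hG := h.pos
  have hN : 0 < N := by omega
  have hN3 : N ≤ N ^ 3 := Nat.le_self_pow three_ne_zero N
  have hN23 : N ^ 2 ≤ N ^ 3 := Nat.pow_le_pow_right hN (by norm_num)
  have hGN3 : N ^ 3 ≤ G * N ^ 3 := Nat.le_mul_of_pos_left _ hG
  have hGN2 : G * N ^ 2 ≤ G * N ^ 3 := Nat.mul_le_mul_left G hN23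
  have hG2N3 : N ^ 3 ≤ G ^ 2 * N ^ 3 := Nat.le_mul_of_pos_left _ (by positivity)
  have hlt : m < 768000 * (G * N ^ 3) := by
    have := h.lt_of_factorial_dvd (by omega) hN (by linarith) hm
    linarith
  rcases le_or_gt g.natAbs N with hgN | hgN
  · have hgm := h.lt_natAbs_mul_of_factorial_dvd (by omega) hm
    refine factorial_le_two_pow (e := N) (by linarith [h.le_two_pow]) ?_
    have hm3 : m ≤ 3 * N ^ 2 := by nlinarith
    calc m * N ≤ 3 * N ^ 2 * N := by gcongr
      _ = 3 * N ^ 3 := by ring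
      _ ≤ 18432000 * (G ^ 2 * N ^ 3) := by omega
  · have hN2G : N ≤ 2 ^ G := by
      zify at hgN ⊢
      exact hgN.le.trans h.abs_le
    refine factorial_le_two_pow (e := 20 + G + 3 * G) ?_ ?_
    · calc m ≤ 2 ^ 20 * (G * N ^ 3) := by omega
        _ ≤ 2 ^ 20 * (2 ^ G * (2 ^ G) ^ 3) := by gcongr; exact Nat.lt_two_pow_self.le
        _ = 2 ^ (20 + G + 3 * G) := by ring
    · calc m * (20 + G + 3 * G) ≤ 768000 * (G * N ^ 3) * (24 * G) := by gcongr; omega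
        _ = 18432000 * (G ^ 2 * N ^ 3) := by ring

theorem abs_sub_mul_le_two_pow {F D a : ℤ} {f H N B e : ℕ} (hF : |F| ≤ 2 ^ H) (hD : |D| ≤ 2 ^ N)
    (ha : |a| ≤ 2 ^ B) (hf : f ≤ 2 ^ e) (hH : 0 < H) (hN : 0 < N) :
    |F - D * (a * f)| ≤ 2 ^ (H + (N + B + e)) := by
  have hterm : |D * (a * f)| ≤ 2 ^ (N + B + e) := by
    rw [abs_mul, abs_mul, pow_add, pow_add, mul_assoc, Nat.abs_cast]
    gcongr
    exact_mod_cast hf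
  have hH2 : (2 : ℤ) ≤ 2 ^ H := le_self_pow₀ one_le_two hH.ne'
  have hN2 : (2 : ℤ) ≤ 2 ^ (N + B + e) := le_self_pow₀ one_le_two (by omega)
  calc |F - D * (a * f)| ≤ |F| + |D * (a * f)| := abs_sub _ _
    _ ≤ 2 ^ H + 2 ^ (N + B + e) := add_le_add hF hterm
    _ ≤ 2 ^ (H + (N + B + e)) := by rw [pow_add 2 H]; nlinarith

end Factorials

section SumsOfFactorials

theorem factorial_dvd_add_sub_mul_sum {x F D : ℤ} {a : ℕ → ℤ} {m : ℕ → ℕ} {j k : ℕ}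
    (heq : x + F = D * ∑ i ∈ Finset.range k, a i * ((m i).factorial : ℤ))
    (hm : MonotoneOn m (Set.Iio k)) (hjk : j < k) :
    ((m j).factorial : ℤ) ∣
      x + (F - D * ∑ i ∈ Finset.range j, a i * ((m i).factorial : ℤ)) := by
  rw [← add_sub_assoc, heq, ← mul_sub, ← Finset.sum_Ico_eq_sub _ hjk.le]
  refine Dvd.dvd.mul_left (Finset.dvd_sum fun i hi => Dvd.dvd.mul_left ?_ _) D
  obtain ⟨hji, hik⟩ := Finset.mem_Ico.mp hi
  exact_mod_cast Nat.factorial_dvd_factorial (hm hjk hik hji)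

theorem ten_pow_seven_mul_lt {G N B : ℕ} {X : ℝ}
    (hX : Real.log 2 * (B + 2e7 * (G ^ 2 * N ^ 3)) < X) :
    Real.log 2 * B + 1e7 * (G ^ 2 * N ^ 3) < X := by
  have hlog : 1 / 2 < Real.log 2 := by linarith [Real.log_two_gt_d9]
  have hGN : (0 : ℝ) ≤ G ^ 2 * N ^ 3 := by positivity
  nlinarith

variable {g E F D a : ℤ} {n G H N B m : ℕ} {X : ℝ}

namespace FormBounds

theorem log_abs_le (h : FormBounds g E F n G H N) : Real.log |(g : ℝ)| ≤ G * Real.log 2 := by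
  rw [← Real.log_pow]
  exact Real.log_le_log (by exact_mod_cast zero_lt_one.trans h.one_lt_abs) (mod_cast h.abs_le)

theorem mul_le_of_pow_le {i k H' : ℕ} (h : FormBounds g E F n G H N)
    (hX : Real.log 2 * (B + 2e7 * (G ^ 2 * N ^ 3)) < X) (hX1 : 1 ≤ X)
    (hXk : X ^ k ≤ n * Real.log |(g : ℝ)|) (hik : i < k) (hH : Real.log 2 * H' ≤ X ^ i) :
    10000000 * (G * N ^ 3 * H') ≤ n := by
  have hlog : 0 < Real.log 2 := Real.log_pos one_lt_two
  have hG : (0 : ℝ) < G := Nat.cast_pos.mpr h.pos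
  have hXH : Real.log 2 * (X * H') ≤ Real.log 2 * (n * G) :=
    calc Real.log 2 * (X * H') = X * (Real.log 2 * H') := by ring
      _ ≤ X * X ^ i := by gcongr
      _ = X ^ (i + 1) := (pow_succ' X i).symm
      _ ≤ X ^ k := pow_le_pow_right₀ hX1 hik
      _ ≤ n * Real.log |(g : ℝ)| := hXk
      _ ≤ n * (G * Real.log 2) := by gcongr; exact h.log_abs_le
      _ = Real.log 2 * (n * G) := by ring
  have hXlow : 1e7 * (G ^ 2 * N ^ 3) ≤ X := by
    have hB : 0 ≤ Real.log 2 * B := by positivity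
    linarith [ten_pow_seven_mul_lt hX]
  have hmul : (1e7 * (G * N ^ 3 * H')) * G ≤ n * (G : ℝ) :=
    calc (1e7 * (G * N ^ 3 * H')) * G = 1e7 * (G ^ 2 * N ^ 3) * (H' : ℝ) := by ring
      _ ≤ X * H' := by gcongr
      _ ≤ n * G := le_of_mul_le_mul_left hXH hlog
  have hle := le_of_mul_le_mul_right hmul hG
  norm_num at hle
  exact_mod_cast hle

theorem exists_abs_sub_le_of_two_mul (h : FormBounds g E F n G (2 * N) N) (hD : |D| ≤ 2 ^ N)
    (hGN : G ≤ N) (ha : |a| ≤ 2 ^ B) (hX : Real.log 2 * (B + 2e7 * (G ^ 2 * N ^ 3)) < X)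
    (hn : 768000 * (G * N ^ 3) ≤ n) (hm : (m.factorial : ℤ) ∣ E * g ^ n + F) :
    ∃ H, 2 * N ≤ H ∧ |F - D * (a * m.factorial)| ≤ 2 ^ H ∧ Real.log 2 * H < X := by
  have hG := h.pos
  have hN : 0 < N := hG.trans_le hGN
  refine ⟨2 * N + (N + B + 18432000 * (G ^ 2 * N ^ 3)), by omega, abs_sub_mul_le_two_pow
    h.abs_right_le hD ha (h.factorial_le_of_dvd_of_two_mul hGN hn hm) (by omega) hN,
    lt_of_le_of_lt ?_ hX⟩
  have hNGN : N ≤ G ^ 2 * N ^ 3 :=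
    (Nat.le_self_pow three_ne_zero N).trans (Nat.le_mul_of_pos_left _ (by positivity))
  have hle : 2 * N + (N + B + 18432000 * (G ^ 2 * N ^ 3)) ≤ B + 20000000 * (G ^ 2 * N ^ 3) := by
    omega
  gcongr
  norm_num
  exact_mod_cast hle

theorem exists_abs_sub_le {Z : ℝ} (h : FormBounds g E F n G H N) (hNH : 2 * N ≤ H)
    (hD : |D| ≤ 2 ^ N) (hGN : G ≤ N) (ha : |a| ≤ 2 ^ B)
    (hX : Real.log 2 * (B + 2e7 * (G ^ 2 * N ^ 3)) < X) (hZ : 1 ≤ Z) (hHZ : Real.log 2 * H ≤ Z)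
    (hn : 384000 * (G * N ^ 3 * H) ≤ n) (hm : (m.factorial : ℤ) ∣ E * g ^ n + F) :
    ∃ H', 2 * N ≤ H' ∧ |F - D * (a * m.factorial)| ≤ 2 ^ H' ∧ Real.log 2 * H' < Z * X := by
  have hG := h.pos
  have hN : 0 < N := hG.trans_le hGN
  refine ⟨H + (N + B + 384000 * (G * N ^ 3 * H)), by omega, abs_sub_mul_le_two_pow
    h.abs_right_le hD ha (h.factorial_le_of_dvd (by omega) hN hn hm) (by omega) hN, ?_⟩
  have hlog : 0 < Real.log 2 := Real.log_pos one_lt_two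
  have hlog1 : Real.log 2 < 1 := by linarith [Real.log_two_lt_d9]
  have hone : 1 ≤ G * N ^ 3 := Nat.mul_pos hG (by positivity)
  have hNGN : N ≤ G * N ^ 3 :=
    (Nat.le_self_pow three_ne_zero N).trans (Nat.le_mul_of_pos_left _ hG)
  have hGGN : G * N ^ 3 ≤ G ^ 2 * N ^ 3 := by
    gcongr
    exact Nat.le_self_pow two_ne_zero G
  have hsum : (1 + (384000 * (G * N ^ 3) + N) : ℝ) ≤ 1e7 * (G ^ 2 * N ^ 3) := by
    norm_num
    exact_mod_cast (by omega : 1 + (384000 * (G * N ^ 3) + N) ≤ 10000000 * (G ^ 2 * N ^ 3))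
  push_cast
  calc Real.log 2 * (H + (N + B + 384000 * (G * N ^ 3 * H)))
      = Real.log 2 * H * (1 + 384000 * (G * N ^ 3)) + (Real.log 2 * N + Real.log 2 * B) * 1 := by
        ring
    _ ≤ Z * (1 + 384000 * (G * N ^ 3)) + (N + Real.log 2 * B) * Z := by
        gcongr
        exact mul_le_of_le_one_left (by positivity) hlog1.le
    _ = Z * (1 + (384000 * (G * N ^ 3) + N) + Real.log 2 * B) := by ring
    _ < Z * X := by
        refine mul_lt_mul_of_pos_left ?_ (by linarith)
        linarith [ten_pow_seven_mul_lt hX]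

theorem one_le_of_lt (h : FormBounds g E F n G H N) (hN : 0 < N)
    (hX : Real.log 2 * (B + 2e7 * (G ^ 2 * N ^ 3)) < X) : 1 ≤ X := by
  have hGN : (1 : ℝ) ≤ G ^ 2 * N ^ 3 := by
    exact_mod_cast (Nat.mul_pos (pow_pos h.pos 2) (pow_pos hN 3) : 1 ≤ G ^ 2 * N ^ 3)
  have hB : 0 ≤ Real.log 2 * B := by positivity
  linarith [ten_pow_seven_mul_lt hX]

theorem exists_abs_sub_mul_sum_le {j k : ℕ} {a : ℕ → ℤ} {m : ℕ → ℕ}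
    (h : FormBounds g E F n G (2 * N) N) (hD : |D| ≤ 2 ^ N) (hGN : G ≤ N)
    (ha : ∀ i < k, |a i| ≤ 2 ^ B) (hm : MonotoneOn m (Set.Iio k))
    (heq : E * g ^ n + F = D * ∑ i ∈ Finset.range k, a i * ((m i).factorial : ℤ))
    (hne : ∀ i < k, F - D * ∑ l ∈ Finset.range i, a l * ((m l).factorial : ℤ) ≠ 0)
    (hX : Real.log 2 * (B + 2e7 * (G ^ 2 * N ^ 3)) < X) (hXk : X ^ k ≤ n * Real.log |(g : ℝ)|)
    (hj : j < k) :
    ∃ H, 2 * N ≤ H ∧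
      |F - D * ∑ i ∈ Finset.range (j + 1), a i * ((m i).factorial : ℤ)| ≤ 2 ^ H ∧
      Real.log 2 * H < X ^ (j + 1) := by
  have hX1 : 1 ≤ X := h.one_le_of_lt (h.pos.trans_le hGN) hX
  have hdvd := factorial_dvd_add_sub_mul_sum heq hm hj
  rw [Finset.sum_range_succ, mul_add, ← sub_sub, pow_succ]
  induction j with
  | zero =>
    have hlog : Real.log 2 * (1 : ℕ) ≤ X ^ 0 := by
      rw [Nat.cast_one, mul_one, pow_zero]
      linarith [Real.log_two_lt_d9]
    have hn := h.mul_le_of_pow_le hX hX1 hXk hj hlog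
    simp only [Finset.range_zero, Finset.sum_empty, mul_zero, sub_zero, pow_zero, one_mul]
      at hdvd ⊢
    exact h.exists_abs_sub_le_of_two_mul hD hGN (ha 0 hj) hX (by omega) hdvd
  | succ j ih =>
    obtain ⟨H, hNH, hFH, hHX⟩ := ih (by omega) (factorial_dvd_add_sub_mul_sum heq hm (by omega))
    rw [sub_sub, ← mul_add, ← Finset.sum_range_succ] at hFH
    rw [← pow_succ] at hHX
    have hn := h.mul_le_of_pow_le hX hX1 hXk hj hHX.le
    have h' : FormBounds g E (F - D * ∑ i ∈ Finset.range (j + 1), a i * ((m i).factorial : ℤ))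
        n G H N := { h with
      right_ne_zero := hne (j + 1) hj
      abs_left_le := h.abs_left_le.trans (pow_le_pow_right₀ one_le_two hNH)
      abs_right_le := hFH }
    exact h'.exists_abs_sub_le hNH hD hGN (ha _ hj) hX (one_le_pow₀ hX1) hHX.le (by omega) hdvd

theorem mul_log_lt_pow {k : ℕ} {a : ℕ → ℤ} {m : ℕ → ℕ} (h : FormBounds g E F n G (2 * N) N)
    (hD : |D| ≤ 2 ^ N) (hGN : G ≤ N) (hk : 0 < k) (ha : ∀ i < k, |a i| ≤ 2 ^ B)
    (hm : MonotoneOn m (Set.Iio k))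
    (heq : E * g ^ n + F = D * ∑ i ∈ Finset.range k, a i * ((m i).factorial : ℤ))
    (hne : ∀ j < k, F - D * ∑ i ∈ Finset.range j, a i * ((m i).factorial : ℤ) ≠ 0)
    (hX : Real.log 2 * (B + 2e7 * (G ^ 2 * N ^ 3)) < X) :
    n * Real.log |(g : ℝ)| < X ^ k := by
  by_contra! hXk
  obtain ⟨H, -, hFH, hHX⟩ := h.exists_abs_sub_mul_sum_le (j := k - 1) hD hGN ha hm heq hne hX hXk
    (by omega)
  rw [Nat.sub_add_cancel hk] at hFH hHX
  have hgn : |g| ^ n ≤ 2 ^ H :=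
    calc |g| ^ n ≤ |E| * |g| ^ n :=
          le_mul_of_one_le_left (by positivity) (Int.one_le_abs h.left_ne_zero)
      _ = |F - D * ∑ i ∈ Finset.range k, a i * ((m i).factorial : ℤ)| := by
          rw [← heq, sub_add_cancel_right, abs_neg, abs_mul, abs_pow]
      _ ≤ 2 ^ H := hFH
  have hlog := Real.log_le_log (by exact_mod_cast pow_pos (zero_lt_one.trans h.one_lt_abs) n)
    (by exact_mod_cast hgn : |(g : ℝ)| ^ n ≤ 2 ^ H)
  rw [Real.log_pow, Real.log_pow] at hlog
  linarith

end FormBounds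

end SumsOfFactorials

section IndexBound

theorem log_two_mul_clog_le {n : ℕ} (hn : 0 < n) :
    Real.log 2 * Nat.clog 2 n ≤ Real.log 2 + Real.log n := by
  have hceil : (Nat.clog 2 n : ℝ) < Real.logb 2 n + 1 := by
    rw [← Real.natCeil_logb_natCast]
    exact Nat.ceil_lt_add_one (Real.logb_nonneg one_lt_two (by exact_mod_cast hn))
  calc Real.log 2 * Nat.clog 2 n ≤ Real.log 2 * (Real.logb 2 n + 1) := by gcongr
    _ = Real.log 2 + Real.log n := by
      rw [Real.logb]
      field_simp
      ring

theorem clog_two_le_two_mul_log {n : ℕ} (hn : 11 ≤ n) : (Nat.clog 2 n : ℝ) ≤ 2 * Real.log n := by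
  have hlog : 3 * Real.log 2 ≤ Real.log n := by
    have h : Real.log ((2 : ℝ) ^ 3) ≤ Real.log n :=
      Real.log_le_log (by norm_num) (by exact_mod_cast (by omega : 2 ^ 3 ≤ n))
    simpa using h
  nlinarith [log_two_mul_clog_le (by omega : 0 < n), Real.log_two_gt_d9]

theorem log_two_mul_clog_add_lt {Y n A : ℕ} (hY : 11 ≤ Y) (hYn : Y ≤ n) (hA : 0 < A) :
    Real.log 2 * (Nat.clog 2 A + 2e7 * (Nat.clog 2 Y ^ 2 * Nat.clog 2 n ^ 3)) <
      Real.log (4 * A) + 10.49 * (2.02e12 * Real.log Y ^ 2) * Real.log n ^ 3 := by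
  have hlogY : 0 < Real.log Y := Real.log_pos (by exact_mod_cast (by omega : 1 < Y))
  have hlogn : 0 < Real.log n := Real.log_pos (by exact_mod_cast (by omega : 1 < n))
  have hYn2 : 0 < Real.log Y ^ 2 * Real.log n ^ 3 := by positivity
  have h4A : Real.log (4 * A) = Real.log 2 + Real.log A + Real.log 2 := by
    rw [show (4 * A : ℝ) = 2 * A * 2 by ring, Real.log_mul (by positivity) two_ne_zero,
      Real.log_mul two_ne_zero (by positivity)]
  have hlog2 : 0 < Real.log 2 := Real.log_pos one_lt_two
  calc Real.log 2 * (Nat.clog 2 A + 2e7 * (Nat.clog 2 Y ^ 2 * Nat.clog 2 n ^ 3))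
      = Real.log 2 * Nat.clog 2 A +
          Real.log 2 * (2e7 * (Nat.clog 2 Y ^ 2 * Nat.clog 2 n ^ 3)) := mul_add _ _ _
    _ ≤ (Real.log 2 + Real.log A) +
          1 * (2e7 * ((2 * Real.log Y) ^ 2 * (2 * Real.log n) ^ 3)) := by
        gcongr
        · exact log_two_mul_clog_le hA
        · linarith [Real.log_two_lt_d9]
        · exact clog_two_le_two_mul_log hY
        · exact clog_two_le_two_mul_log (hY.trans hYn)
    _ < _ := by rw [h4A]; nlinarith

variable {g E F D Y : ℤ} {n A k : ℕ} {a : ℕ → ℤ} {m : ℕ → ℕ}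

theorem natCast_lt_of_eq_mul_sum_factorial (hY : 11 ≤ Y) (hYn : Y ≤ n) (hg1 : 1 < |g|)
    (hgY : |g| ≤ Y) (hE0 : E ≠ 0) (hE : |E| ≤ n ^ 2) (hF : |F| ≤ n ^ 2) (hD : |D| ≤ n)
    (hk : 0 < k) (hA : 0 < A) (ha : ∀ i < k, |a i| ≤ A) (hm : MonotoneOn m (Set.Iio k))
    (heq : E * g ^ n + F = D * ∑ i ∈ Finset.range k, a i * ((m i).factorial : ℤ))
    (hne : ∀ j < k, F - D * ∑ i ∈ Finset.range j, a i * ((m i).factorial : ℤ) ≠ 0) :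
    (n : ℝ) < 1 / Real.log (|g| : ℤ) *
      (Real.log (4 * A) + 10.49 * (2.02e12 * Real.log Y ^ 2) * Real.log n ^ 3) ^ k := by
  lift Y to ℕ using by omega
  norm_cast at hY hYn
  have hle_pow (x : ℕ) : (x : ℤ) ≤ 2 ^ Nat.clog 2 x := by
    exact_mod_cast Nat.le_pow_clog one_lt_two x
  have hn2 : (n : ℤ) ^ 2 ≤ 2 ^ (2 * Nat.clog 2 n) := by
    rw [mul_comm, pow_mul]
    exact pow_le_pow_left₀ (by positivity) (hle_pow n) 2
  have hform : FormBounds g E F n (Nat.clog 2 Y) (2 * Nat.clog 2 n) (Nat.clog 2 n) :=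
    { one_lt_abs := hg1
      abs_le := hgY.trans (hle_pow Y)
      left_ne_zero := hE0
      right_ne_zero := by simpa using hne 0 hk
      abs_left_le := hE.trans hn2
      abs_right_le := hF.trans hn2
      le_two_pow := Nat.le_pow_clog one_lt_two n }
  have hg : 0 < Real.log (|g| : ℤ) := Real.log_pos (by exact_mod_cast hg1)
  rw [one_div, inv_mul_eq_div, lt_div_iff₀ hg, Int.cast_abs]
  exact hform.mul_log_lt_pow (hD.trans (hle_pow n)) (Nat.clog_mono_right 2 hYn) hk
    (fun i hi => (ha i hi).trans (hle_pow A)) hm heq hne (log_two_mul_clog_add_lt hY hYn hA)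

theorem sum_Icc_eq_sum_range_sub {M : Type*} [AddCommMonoid M] (f : ℕ → M) {j k : ℕ}
    (hjk : j ≤ k + 1) : ∑ i ∈ Finset.Icc j k, f i = ∑ i ∈ Finset.range (k + 1 - j), f (k - i) := by
  rw [Finset.range_eq_Ico, Finset.sum_Ico_reflect _ _ (Nat.sub_le _ _), Nat.sub_sub_self hjk]
  rfl

theorem natCast_lt_of_eq_sum_factorial {e f : ℚ} (hY : 11 ≤ Y) (hYn : Y ≤ n) (hg1 : 1 < |g|)
    (hgY : |g| ≤ Y) (hD0 : D ≠ 0) (hDe : D * e = E) (hDf : D * f = F) (hD : |D| ≤ n)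
    (hE : |E| ≤ n ^ 2) (hF : |F| ≤ n ^ 2) (hk : 0 < k) (hA : 0 < A)
    (ha : ∀ i ∈ Set.Icc 1 k, |a i| ≤ A) (hm : AntitoneOn m (Set.Icc 1 k))
    (heq : e * g ^ n + f = ∑ i ∈ Finset.Icc 1 k, (a i : ℚ) * (m i).factorial)
    (hne : ∑ i ∈ Finset.Icc 1 k, (a i : ℚ) * (m i).factorial ≠ e * g ^ n)
    (htail : ∀ j ∈ Set.Icc 1 k, ∑ i ∈ Finset.Icc j k, (a i : ℚ) * (m i).factorial ≠ f) :
    (n : ℝ) < 1 / Real.log (|g| : ℤ) *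
      (Real.log (4 * A) + 10.49 * (2.02e12 * Real.log Y ^ 2) * Real.log n ^ 3) ^ k := by
  have hD0' : (D : ℚ) ≠ 0 := Int.cast_ne_zero.mpr hD0
  have hmem {i : ℕ} (hi : i < k) : k - i ∈ Set.Icc 1 k := ⟨by omega, by omega⟩
  have hE0 : E ≠ 0 := by
    rintro rfl
    have he : e = 0 := by simpa [hD0'] using hDe
    exact htail 1 ⟨le_rfl, hk⟩ (by rw [← heq, he, zero_mul, zero_add])
  have hF0 : f ≠ 0 := by
    rintro rfl
    exact hne (by rw [← heq, add_zero])
  refine natCast_lt_of_eq_mul_sum_factorial (a := fun i => a (k - i)) (m := fun i => m (k - i))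
    hY hYn hg1 hgY hE0 hE hF hD hk hA (fun i hi => ha _ (hmem hi))
    (fun i hi j hj hij => hm (hmem hj) (hmem hi) (Nat.sub_le_sub_left hij k)) ?_ fun j hj h0 => ?_
  · rw [sum_Icc_eq_sum_range_sub _ (by omega)] at heq
    rw [Nat.add_sub_cancel] at heq
    have hcast : (E : ℚ) * g ^ n + F =
        D * ∑ i ∈ Finset.range k, (a (k - i) : ℚ) * (m (k - i)).factorial := by
      rw [← hDe, ← hDf, ← heq]
      ring
    exact_mod_cast hcast
  · have hf : f = ∑ i ∈ Finset.range j, (a (k - i) : ℚ) * (m (k - i)).factorial := by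
      refine mul_left_cancel₀ hD0' ?_
      rw [hDf]
      exact_mod_cast sub_eq_zero.mp h0
    rcases Nat.eq_zero_or_pos j with rfl | hj0
    · exact hF0 (by simpa using hf)
    · refine htail (k + 1 - j) ⟨by omega, by omega⟩ ?_
      rw [hf, sum_Icc_eq_sum_range_sub _ (Nat.sub_le _ _), Nat.sub_sub_self (by omega)]

end IndexBound

section Recurrence

variable {α β Y : ℤ} {u : ℕ → ℤ} {a b c : ℚ}

theorem abs_sub_sq_mul_le {x : ℤ} (hα : |α| ≤ Y) (hβ : |β| ≤ Y) (hx : |x| ≤ Y) :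
    |(β - α) ^ 2 * x| ≤ 4 * Y ^ 3 := by
  have hδ : |β - α| ^ 2 ≤ (2 * Y) ^ 2 :=
    pow_le_pow_left₀ (abs_nonneg _) (by linarith [abs_sub β α]) 2
  rw [abs_mul, abs_pow]
  calc |β - α| ^ 2 * |x| ≤ (2 * Y) ^ 2 * Y := by gcongr
    _ = 4 * Y ^ 3 := by ring

theorem abs_sub_two_mul_add_sq_mul_le {x y z : ℤ} (hY : 1 ≤ Y) (hα : |α| ≤ Y) (hx : |x| ≤ Y)
    (hy : |y| ≤ Y) (hz : |z| ≤ Y) : |z - 2 * α * y + α ^ 2 * x| ≤ 4 * Y ^ 3 := by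
  have hmid : |2 * α * y| ≤ 2 * Y * Y := by
    rw [abs_mul, abs_mul, abs_two]
    gcongr
  have hlast : |α ^ 2 * x| ≤ Y ^ 2 * Y := by
    rw [abs_mul, abs_pow]
    gcongr
  have hY3 : Y ≤ Y ^ 3 := le_self_pow₀ hY three_ne_zero
  have hY23 : Y ^ 2 ≤ Y ^ 3 := pow_le_pow_right₀ hY (by norm_num)
  linarith [abs_add_le (z - 2 * α * y) (α ^ 2 * x), abs_sub z (2 * α * y)]

theorem exists_mul_eq_and_abs_le (hY : 1 ≤ Y) (hα0 : α ≠ 0) (hαβ : α ≠ β) (hα : |α| ≤ Y)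
    (hβ : |β| ≤ Y) (hu0 : |u 0| ≤ Y) (hu1 : |u 1| ≤ Y) (hu2 : |u 2| ≤ Y)
    (hu : ∀ n : ℕ, (u n : ℚ) = (a * n + c) * (α : ℚ) ^ n + b * (β : ℚ) ^ n) :
    ∃ D p q r : ℤ, D ≠ 0 ∧ D * a = p ∧ D * b = q ∧ D * c = r ∧
      |D| ≤ 4 * Y ^ 3 ∧ |p| ≤ 16 * Y ^ 4 ∧ |q| ≤ 4 * Y ^ 4 ∧ |r| ≤ 8 * Y ^ 4 := by
  have hu0' : (u 0 : ℚ) = c + b := by simpa using hu 0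
  have hu1' : (u 1 : ℚ) = (a + c) * α + b * β := by simpa using hu 1
  have hu2' : (u 2 : ℚ) = (a * 2 + c) * α ^ 2 + b * β ^ 2 := by simpa using hu 2
  -- With `T` the shift, `(T - α) ^ 2` annihilates the `α`-part of `u`; this isolates `b`.
  obtain ⟨v, hv⟩ : ∃ v, v = u 2 - 2 * α * u 1 + α ^ 2 * u 0 := ⟨_, rfl⟩
  have hvb : (v : ℚ) = (β - α) ^ 2 * b := by
    rw [hv]
    push_cast
    rw [hu0', hu1', hu2']
    ring
  have hvY : |v| ≤ 4 * Y ^ 3 := hv ▸ abs_sub_two_mul_add_sq_mul_le hY hα hu0 hu1 hu2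
  have hmul {x y : ℤ} (hx : |x| ≤ Y) (hy : |y| ≤ 4 * Y ^ 3) : |x * y| ≤ 4 * Y ^ 4 := by
    rw [abs_mul]
    calc |x| * |y| ≤ Y * (4 * Y ^ 3) := by gcongr
      _ = 4 * Y ^ 4 := by ring
  have hD := abs_sub_sq_mul_le hα hβ hα
  have hr : |u 0 * ((β - α) ^ 2 * α) - α * v| ≤ 8 * Y ^ 4 := by
    linarith [abs_sub (u 0 * ((β - α) ^ 2 * α)) (α * v), hmul hu0 hD, hmul hα hvY]
  refine ⟨(β - α) ^ 2 * α, (β - α) ^ 2 * u 1 - β * v - (u 0 * ((β - α) ^ 2 * α) - α * v), α * v,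
    u 0 * ((β - α) ^ 2 * α) - α * v, by simp [hα0, sub_eq_zero, hαβ.symm], ?_, ?_, ?_, hD, ?_,
    hmul hα hvY, hr⟩
  · push_cast
    rw [hvb, hu0', hu1']
    ring
  · push_cast
    rw [hvb]
    ring
  · push_cast
    rw [hvb, hu0']
    ring
  · have hY34 : Y ^ 3 ≤ Y ^ 4 := pow_le_pow_right₀ hY (by norm_num)
    linarith [abs_sub ((β - α) ^ 2 * u 1 - β * v) (u 0 * ((β - α) ^ 2 * α) - α * v),
      abs_sub ((β - α) ^ 2 * u 1) (β * v), abs_sub_sq_mul_le hα hβ hu1, hmul hβ hvY]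

theorem exists_mul_eq_and_abs_le_sq {n : ℕ} (hY : 11 ≤ Y) (hYn : Y ^ 8 ≤ n) (hα0 : α ≠ 0)
    (hαβ : α ≠ β) (hα : |α| ≤ Y) (hβ : |β| ≤ Y) (hu0 : |u 0| ≤ Y) (hu1 : |u 1| ≤ Y)
    (hu2 : |u 2| ≤ Y) (hu : ∀ n : ℕ, (u n : ℚ) = (a * n + c) * (α : ℚ) ^ n + b * (β : ℚ) ^ n) :
    ∃ D E F : ℤ, D ≠ 0 ∧ D * (a * n + c) = E ∧ D * b = F ∧
      |D| ≤ n ∧ |E| ≤ n ^ 2 ∧ |F| ≤ n ^ 2 := by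
  obtain ⟨D, p, q, r, hD0, hp, hq, hr, hDY, hpY, hqY, hrY⟩ :=
    exists_mul_eq_and_abs_le (by linarith) hα0 hαβ hα hβ hu0 hu1 hu2 hu
  have hY4 : 24 * Y ^ 4 ≤ n :=
    calc 24 * Y ^ 4 ≤ 11 ^ 4 * Y ^ 4 := by gcongr; norm_num
      _ ≤ Y ^ 4 * Y ^ 4 := by gcongr
      _ = Y ^ 8 := by ring
      _ ≤ n := hYn
  have hY34 : Y ^ 3 ≤ Y ^ 4 := pow_le_pow_right₀ (by linarith) (by norm_num)
  have hY3 : 0 < Y ^ 3 := by positivity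
  have hn1 : (1 : ℤ) ≤ n := by linarith
  refine ⟨D, p * n + r, q, hD0, ?_, hq, by linarith, ?_, ?_⟩
  · push_cast
    rw [← hp, ← hr]
    ring
  · calc |p * n + r| ≤ |p| * n + |r| := by
          simpa [abs_mul] using abs_add_le (p * n) r
      _ ≤ 16 * Y ^ 4 * n + 8 * Y ^ 4 * n := by
          gcongr
          exact hrY.trans (le_mul_of_one_le_right (by positivity) hn1)
      _ = 24 * Y ^ 4 * n := by ring
      _ ≤ n ^ 2 := by rw [sq]; gcongr
  · calc |q| ≤ n := by linarith
      _ ≤ n ^ 2 := le_self_pow₀ hn1 two_ne_zero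

theorem finitely_many_factorial_representations_general {k A n : ℕ} {a' : ℕ → ℤ} {m : ℕ → ℕ}
    (hone : α = 1 ∨ β = 1) (hγ : 1 < max |α| |β|) (hY : 11 ≤ Y) (hα : |α| ≤ Y) (hβ : |β| ≤ Y)
    (hu0 : |u 0| ≤ Y) (hu1 : |u 1| ≤ Y) (hu2 : |u 2| ≤ Y)
    (hu : ∀ n : ℕ, (u n : ℚ) = (a * n + c) * (α : ℚ) ^ n + b * (β : ℚ) ^ n)
    (hk : 0 < k) (hA : 0 < A) (ha' : ∀ i ∈ Set.Icc 1 k, |a' i| ≤ A)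
    (hm : AntitoneOn m (Set.Icc 1 k))
    (heq : u n = ∑ i ∈ Finset.Icc 1 k, a' i * ((m i).factorial : ℤ))
    (htail : ∀ j ∈ Set.Icc 1 k,
      ∑ i ∈ Finset.Icc j k, (a' i : ℚ) * (m i).factorial ≠ (a * n + c) * (α : ℚ) ^ n ∧
      ∑ i ∈ Finset.Icc j k, (a' i : ℚ) * (m i).factorial ≠ b * (β : ℚ) ^ n) :
    (n ≤ Y ^ 8 ∨ (n : ℝ) < 1 / Real.log (max |α| |β| : ℤ) *
      (Real.log (4 * A) + 10.49 * (2.02e12 * Real.log Y ^ 2) * Real.log n ^ 3) ^ k) ∧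
    ∀ n₀ : ℕ, IsGreatest {ν : ℕ | 0 < ν ∧ (ν : ℝ) < 1 / Real.log (max |α| |β| : ℤ) *
      (Real.log (4 * A) + 10.49 * (2.02e12 * Real.log Y ^ 2) * Real.log ν ^ 3) ^ k} n₀ →
      n ≤ max (Y ^ 8) n₀ := by
  rcases le_or_gt (n : ℤ) (Y ^ 8) with hYn | hYn
  · exact ⟨Or.inl hYn, fun n₀ _ => le_max_of_le_left hYn⟩
  suffices hlt : (n : ℝ) < 1 / Real.log (max |α| |β| : ℤ) *
      (Real.log (4 * A) + 10.49 * (2.02e12 * Real.log Y ^ 2) * Real.log n ^ 3) ^ k by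
    have hn0 : 0 < n := by exact_mod_cast (by positivity : 0 ≤ Y ^ 8).trans_lt hYn
    exact ⟨Or.inr hlt, fun n₀ hn₀ => le_max_of_le_right (by exact_mod_cast hn₀.2 ⟨hn0, hlt⟩)⟩
  have hα0 : α ≠ 0 := by
    rintro rfl
    simp_all
  have hαβ : α ≠ β := by
    rintro rfl
    simp_all
  obtain ⟨D, E, F, hD0, hDE, hDF, hD, hE, hF⟩ :=
    exists_mul_eq_and_abs_le_sq hY hYn.le hα0 hαβ hα hβ hu0 hu1 hu2 hu
  have hYn' : Y ≤ n := (le_self_pow₀ (by linarith) (by norm_num : 8 ≠ 0)).trans hYn.le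
  have hsum : (a * n + c) * (α : ℚ) ^ n + b * (β : ℚ) ^ n =
      ∑ i ∈ Finset.Icc 1 k, (a' i : ℚ) * (m i).factorial := by
    rw [← hu, heq]
    push_cast
    rfl
  have hfull := htail 1 ⟨le_rfl, hk⟩
  rcases hone with rfl | rfl
  · simp only [Int.cast_one, one_pow, mul_one, abs_one] at *
    have hβ1 : 1 < |β| := by simpa using hγ
    rw [max_eq_right hβ1.le]
    exact natCast_lt_of_eq_sum_factorial hY hYn' hβ1 hβ hD0 hDF hDE hD hF hE hk hA ha' hm
      ((add_comm _ _).trans hsum) hfull.2 fun j hj => (htail j hj).1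
  · simp only [Int.cast_one, one_pow, mul_one, abs_one] at *
    have hα1 : 1 < |α| := by simpa using hγ
    rw [max_eq_left hα1.le]
    exact natCast_lt_of_eq_sum_factorial hY hYn' hα1 hα hD0 hDE hDF hD hE hF hk hA ha' hm
      hsum hfull.1 fun j hj => (htail j hj).2

theorem one_lt_max_abs (hα0 : α ≠ 0) (hβ0 : β ≠ 0) (hone : α = 1 ∨ β = 1) (hαβ : α ≠ β)
    (hαβ' : α ≠ -β) : 1 < max |α| |β| := by
  rcases hone with rfl | rfl <;> grind

theorem ne_zero_and_abs_le_of_sq_mul_ne_zero (h : α ^ 2 * β ≠ 0) :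
    (α ≠ 0 ∧ |α| ≤ |α ^ 2 * β|) ∧ β ≠ 0 ∧ |β| ≤ |α ^ 2 * β| := by
  have hle {x : ℤ} (hx : x ∣ α ^ 2 * β) : x ≠ 0 ∧ |x| ≤ |α ^ 2 * β| :=
    ⟨ne_zero_of_dvd_ne_zero h hx, Int.le_of_dvd (abs_pos.mpr h) ((abs_dvd_abs _ _).mpr hx)⟩
  exact ⟨hle ((dvd_pow_self α two_ne_zero).mul_right β), hle (dvd_mul_left β _)⟩

end Recurrence

/-- Lemma (finiteness of representations): with notation as in the context,
`c₁ = Y⁸`, `c₂ = 2.02·10¹² (log Y)²`, `γ = max{|α|, |β|}`. If `u_n = a₁ m₁! + ⋯ + a_k m_k!`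
with `|aᵢ| ≤ A`, `m₁ > m₂ > ⋯ > m_k ≥ 1`, and no partial sum `Σ_{i=j₁}^{j₂} aᵢ mᵢ!`
equals `(a n + c) α^n` or `b β^n`, then either `n ≤ c₁` or
`n < (1/log γ)(log 4A + 10.49 c₂ (log n)³)^k`; in particular `n ≤ max{c₁, n₀}` for `n₀`
the largest positive integer solution of that inequality. -/
theorem finitely_many_factorial_representations
    (r₁ r₂ r₃ : ℤ) (hr₁ : r₁ ≠ 0) (hr₂ : r₂ ≠ 0) (hr₃ : r₃ ≠ 0)
    (α β : ℤ)
    (hpoly : ∀ X : ℤ, X ^ 3 - r₁ * X ^ 2 - r₂ * X - r₃ = (X - α) ^ 2 * (X - β))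
    (hone : α = 1 ∨ β = 1) (hαβ : α ≠ β) (hαβ' : α ≠ -β)
    (u : ℕ → ℤ)
    (hrec : ∀ n, 3 ≤ n → u n = r₁ * u (n - 1) + r₂ * u (n - 2) + r₃ * u (n - 3))
    (a b c : ℚ) (ha : a ≠ 0)
    (hu : ∀ n : ℕ, (u n : ℚ) = (a * n + c) * (α : ℚ) ^ n + b * (β : ℚ) ^ n)
    (Y : ℤ)
    (hY : Y = max (max (max |r₁| |r₂|) (max |r₃| |u 0|)) (max (max |u 1| |u 2|) 11))
    (c₂ : ℝ) (hc₂ : c₂ = 2.02e12 * (Real.log (Y : ℝ)) ^ 2)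
    (γ : ℤ) (hγ : γ = max |α| |β|)
    (k A : ℕ) (hk : 0 < k) (hA : 0 < A)
    (a' : ℕ → ℤ) (m : ℕ → ℕ)
    (haA : ∀ i, 1 ≤ i → i ≤ k → |a' i| ≤ (A : ℤ))
    (hmdec : ∀ i, 1 ≤ i → i < k → m (i + 1) < m i) (hmk : 1 ≤ m k)
    (n : ℕ)
    (heq : u n = ∑ i ∈ Finset.Icc 1 k, a' i * (Nat.factorial (m i) : ℤ))
    (hnd : ∀ j₁ j₂, 1 ≤ j₁ → j₁ ≤ j₂ → j₂ ≤ k →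
      (∑ i ∈ Finset.Icc j₁ j₂, (a' i : ℚ) * (Nat.factorial (m i) : ℚ))
          ≠ (a * n + c) * (α : ℚ) ^ n ∧
      (∑ i ∈ Finset.Icc j₁ j₂, (a' i : ℚ) * (Nat.factorial (m i) : ℚ))
          ≠ b * (β : ℚ) ^ n) :
    ((n : ℤ) ≤ Y ^ 8 ∨
      (n : ℝ) < (1 / Real.log (γ : ℝ)) *
        (Real.log (4 * A) + 10.49 * c₂ * (Real.log n) ^ 3) ^ k) ∧
    ∀ n₀ : ℕ, IsGreatest {ν : ℕ | 0 < ν ∧ (ν : ℝ) < (1 / Real.log (γ : ℝ)) *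
        (Real.log (4 * A) + 10.49 * c₂ * (Real.log ν) ^ 3) ^ k} n₀ →
      (n : ℤ) ≤ max (Y ^ 8) (n₀ : ℤ) := by
  have hr₃_eq : r₃ = α ^ 2 * β := by linear_combination -(hpoly 0)
  obtain ⟨⟨hα0, hα⟩, hβ0, hβ⟩ := ne_zero_and_abs_le_of_sq_mul_ne_zero (hr₃_eq ▸ hr₃)
  have hr₃Y : |α ^ 2 * β| ≤ Y := by rw [hY, hr₃_eq]; simp
  have hm : AntitoneOn m (Set.Icc 1 k) :=
    antitoneOn_of_succ_le Set.ordConnected_Icc fun i _ hi hi' => (hmdec i hi.1 hi'.2).le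
  subst hc₂ hγ
  exact finitely_many_factorial_representations_general hone
    (one_lt_max_abs hα0 hβ0 hone hαβ hαβ') (by rw [hY]; simp) (hα.trans hr₃Y) (hβ.trans hr₃Y)
    (by rw [hY]; simp) (by rw [hY]; simp) (by rw [hY]; simp) hu hk hA
    (fun i hi => haA i hi.1 hi.2) hm heq fun j hj => hnd j k hj.1 hj.2 le_rfl
end

section
/- Let C_n = n·2^n + 1 and let S denote the set of positive integers all of whose prime factors lie in {2, 3, 5, 7}. Suppose n, m₁, m₂ are positive integers with m₁ ≥ m₂ and s ∈ S satisfy C_n = m₁! + m₂! + s, and suppose the solution is non-degenerate, i.e., none of the three quantities m₁!, m₂!, and m₁! + m₂! is equal to n·2^n or to 1. Then (n, m₁, m₂, s) is one of the seven tuples (2, 2, 2, 5), (3, 2, 2, 21), (4, 4, 3, 35), (5, 4, 2, 135), (5, 5, 3, 35), (7, 6, 2, 175), (8, 6, 3, 1323). -/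
/-!
Let `p ∈ {3, 5, 7}` and `T ≠ 0`. If a high power of `p` divided `n * 2 ^ n + T`, then raising to a
power `e` with `2 ^ e ≡ 1` modulo `p` would make `n ^ e * g ^ n - (-T) ^ e`, with `g = 2 ^ e`,
divisible by it. The pigeonhole principle gives a nonzero exponential polynomial
`∑ l, P l (t) * g ^ (l * t)` with small coefficients and values divisible by a high power of `p`. At
`t = s + r * n` one can replace `g ^ n` by `(-T) ^ e / n ^ e`, and the resulting small integers have
to vanish, which a zero estimate rules out. Hence the exponent of `p` in `n * 2 ^ n + T` is
`O((log n) ^ 2 * log |T|)`, as in Gelfond's theorem on `p`-adic linear forms in logarithms.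

As `s` is odd, this bounds `s = n * 2 ^ n + 1 - m₁! - m₂!` whenever the part of `m₁! + m₂!` that is
not highly divisible by `3`, `5` and `7` is small. Since `n * 2 ^ n` is highly divisible by `2`,
such a bound for `s` successively bounds `m₂`, `m₁` and `n`. The bound for `n` is large, but the
exponents of `p` for smaller `n` can be computed: there are few residues of `m₁! + m₂!` modulo
`p ^ k`, and for each of them Hensel lifting finds the least `n` with `p ^ k ∣ s`. The resulting
bound for `s` bounds `n` by looking at the equation modulo powers of `2`, and the procedure is
repeated.
-/

section ExponentialPolynomials

open Polynomial Finset

theorem pow_dvd_fwdDiff_iter_pow_mul_pow {R : Type*} [CommRing R] {p w : R} (hw : p ∣ w - 1)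
    (k j t : ℕ) :
    p ^ (j - k) ∣ (fwdDiff (1 : ℕ))^[j] (fun t : ℕ => (t : R) ^ k * w ^ t) t := by
  induction j generalizing k t with
  | zero => simp
  | succ j ih =>
    have fwdDiff_eq : fwdDiff (1 : ℕ) (fun t : ℕ => (t : R) ^ k * w ^ t) =
        (w - 1) • (fun t : ℕ => (t : R) ^ k * w ^ t) +
          ∑ i ∈ range k, (w * k.choose i) • (fun t : ℕ => (t : R) ^ i * w ^ t) := by
      funext t
      have : ∑ i ∈ range k, w * (k.choose i : R) * ((t : R) ^ i * w ^ t) =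
          ∑ i ∈ range k, (t : R) ^ i * (k.choose i : R) * (w ^ t * w) :=
        sum_congr rfl fun i _ => by ring
      simp only [fwdDiff, Pi.add_apply, Pi.smul_apply, smul_eq_mul, Finset.sum_apply,
        Nat.cast_add, Nat.cast_one, add_pow, one_pow, mul_one, sum_range_succ,
        Nat.choose_self, pow_succ, sum_mul, add_mul, this]
      ring
    rw [Function.iterate_succ_apply, fwdDiff_eq, fwdDiff_iter_add, fwdDiff_iter_finsetSum,
      fwdDiff_iter_const_smul]
    simp only [fwdDiff_iter_const_smul, Pi.add_apply, Pi.smul_apply, smul_eq_mul,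
      Finset.sum_apply]
    refine dvd_add ?_ (dvd_sum fun i hi => Dvd.dvd.mul_left ?_ _)
    · refine (pow_dvd_pow p (show j + 1 - k ≤ (j - k) + 1 by omega)).trans ?_
      rw [pow_succ']
      exact mul_dvd_mul hw (ih k t)
    · have := mem_range.1 hi
      exact (pow_dvd_pow p (show j + 1 - k ≤ j - i by omega)).trans (ih i t)

/-- By the pigeonhole principle. -/
theorem exists_ne_zero_abs_le_forall_dvd_sum {ι κ : Type*} [Fintype ι] [Fintype κ] (X : ℕ)
    (N : κ → ℕ) [∀ j, NeZero (N j)] (q : κ → ι → ℤ) (hX : ∏ j, N j < X ^ Fintype.card ι) :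
    ∃ c : ι → ℤ, c ≠ 0 ∧ (∀ i, |c i| ≤ X) ∧ ∀ j, (N j : ℤ) ∣ ∑ i, c i * q j i := by
  classical
  let f : (ι → Fin X) → (∀ j, ZMod (N j)) := fun c j => (∑ i, ((c i : ℕ) : ℤ) * q j i : ℤ)
  have hcard : Fintype.card (∀ j, ZMod (N j)) < Fintype.card (ι → Fin X) := by
    simpa [Fintype.card_pi, ZMod.card] using hX
  obtain ⟨a, b, hab, hf⟩ := Fintype.exists_ne_map_eq_of_card_lt f hcard
  refine ⟨fun i => ((a i : ℕ) : ℤ) - ((b i : ℕ) : ℤ), fun h => hab ?_, fun i => ?_, fun j => ?_⟩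
  · funext i
    exact Fin.ext (Int.ofNat_inj.1 (sub_eq_zero.1 (congrFun h i)))
  · have := (a i).isLt
    have := (b i).isLt
    exact abs_le.2 ⟨by dsimp only; omega, by dsimp only; omega⟩
  · simp only [sub_mul, sum_sub_distrib]
    exact (ZMod.intCast_eq_intCast_iff_dvd_sub _ _ _).1 (congrFun hf j).symm

theorem sum_range_add_tsub (K V : ℕ) :
    (∑ j ∈ range (K + V), (V - (j - K))) * 2 = V * (2 * K + V + 1) := by
  induction K with
  | zero =>
    induction V with
    | zero => simp
    | succ V ih =>
      simp only [zero_add, Nat.sub_zero, sum_range_succ', Nat.add_sub_add_right] at ih ⊢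
      linarith
  | succ K ih =>
    rw [add_right_comm, sum_range_succ']
    simp only [Nat.add_sub_add_right, Nat.zero_sub, Nat.sub_zero]
    linarith

theorem dvd_of_forall_dvd_fwdDiff_iter {F : ℕ → ℤ} {m : ℤ}
    (h : ∀ j, m ∣ (fwdDiff (1 : ℕ))^[j] F 0) (t : ℕ) : m ∣ F t := by
  have newton := shift_eq_sum_fwdDiff_iter (1 : ℕ) F t 0
  rw [zero_add, smul_eq_mul, mul_one] at newton
  exact newton ▸ dvd_sum fun j _ => dvd_smul_of_dvd _ (h j)

theorem exists_coeff_forall_pow_dvd_sum {p g : ℕ} [NeZero p] (hg : (p : ℤ) ∣ g - 1) {K L V X : ℕ}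
    (hX : p ^ (V * (2 * K + V + 1)) < X ^ (2 * (K * L))) :
    ∃ c : Fin L × Fin K → ℤ, c ≠ 0 ∧ (∀ i, |c i| ≤ X) ∧
      ∀ t : ℕ, (p : ℤ) ^ V ∣ ∑ i, c i * ((t : ℤ) ^ (i.2 : ℕ) * ((g : ℤ) ^ (i.1 : ℕ)) ^ t) := by
  let F : Fin L × Fin K → ℕ → ℤ := fun i t => (t : ℤ) ^ (i.2 : ℕ) * ((g : ℤ) ^ (i.1 : ℕ)) ^ t
  have hF : ∀ j i, (p : ℤ) ^ (j - K) ∣ (fwdDiff (1 : ℕ))^[j] (F i) 0 := fun j i => by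
    have hw : (p : ℤ) ∣ (g : ℤ) ^ (i.1 : ℕ) - 1 :=
      hg.trans (by simpa using sub_dvd_pow_sub_pow (g : ℤ) 1 (i.1 : ℕ))
    exact (pow_dvd_pow _ (Nat.sub_le_sub_left i.2.isLt.le j)).trans
      (pow_dvd_fwdDiff_iter_pow_mul_pow hw i.2 j 0)
  choose q hq using hF
  obtain ⟨c, hc0, hcX, hc⟩ := exists_ne_zero_abs_le_forall_dvd_sum X
    (fun j : Fin (K + V) => p ^ (V - ((j : ℕ) - K))) (fun j i => q j i) (by
      rw [prod_pow_eq_pow_sum, Fin.sum_univ_eq_sum_range (fun j => V - (j - K))]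
      refine lt_of_pow_lt_pow_left₀ 2 (Nat.zero_le _) ?_
      rw [← pow_mul, sum_range_add_tsub, ← pow_mul, mul_comm _ 2]
      simpa [mul_comm L K] using hX)
  refine ⟨c, hc0, hcX, dvd_of_forall_dvd_fwdDiff_iter fun j => ?_⟩
  have fwdDiff_eq : (fwdDiff (1 : ℕ))^[j] (fun t => ∑ i, c i * F i t) 0 =
      (p : ℤ) ^ (j - K) * ∑ i, c i * q j i := by
    have : (fun t => ∑ i, c i * F i t) = ∑ i, c i • F i := by
      ext t
      simp
    simp only [this, fwdDiff_iter_finsetSum, fwdDiff_iter_const_smul, Finset.sum_apply,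
      Pi.smul_apply, smul_eq_mul, hq, mul_left_comm, mul_sum]
  rw [fwdDiff_eq]
  obtain hj | hj := lt_or_ge j (K + V)
  · refine (pow_dvd_pow _ (show V ≤ (j - K) + (V - (j - K)) by omega)).trans ?_
    rw [pow_add]
    exact mul_dvd_mul_left _ (by exact_mod_cast hc ⟨j, hj⟩)
  · exact (pow_dvd_pow _ (by omega)).mul_right _

theorem exists_polynomial_forall_pow_dvd_sum {p g : ℕ} [NeZero p] (hg : (p : ℤ) ∣ g - 1)
    {K L V X : ℕ} (hX : p ^ (V * (2 * K + V + 1)) < X ^ (2 * (K * L))) :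
    ∃ P : Fin L → ℤ[X], P ≠ 0 ∧ (∀ l, (P l).natDegree < K) ∧ (∀ l k, |(P l).coeff k| ≤ X) ∧
      ∀ t : ℕ, (p : ℤ) ^ V ∣ ∑ l, (P l).eval (t : ℤ) * ((g : ℤ) ^ (l : ℕ)) ^ t := by
  obtain ⟨c, hc0, hcX, hc⟩ := exists_coeff_forall_pow_dvd_sum hg hX
  obtain ⟨⟨l₀, k₀⟩, -⟩ := Function.ne_iff.1 hc0
  refine ⟨fun l => ofFn K fun k => c (l, k), fun h => hc0 ?_,
    fun l => ofFn_natDegree_lt k₀.pos _, fun l k => ?_, fun t => ?_⟩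
  · funext ⟨l, k⟩
    have := congrArg (fun Q : ℤ[X] => Q.coeff k) (congrFun h l)
    simpa [ofFn_coeff_eq_val_of_lt] using this
  · obtain hk | hk := lt_or_ge k K
    · simpa [ofFn_coeff_eq_val_of_lt _ hk] using hcX _
    · simp [ofFn_coeff_eq_zero_of_ge _ hk]
  · simpa [Fintype.sum_prod_type, ofFn_eq_sum_monomial, eval_finsetSum, sum_mul, mul_assoc]
      using hc t

theorem natDegree_det_le_sum {R n : Type*} [CommRing R] [Fintype n] [DecidableEq n]
    (M : Matrix n n R[X]) {d : n → ℕ} (h : ∀ i j, (M i j).natDegree ≤ d j) :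
    M.det.natDegree ≤ ∑ j, d j := by
  rw [Matrix.det_apply']
  refine natDegree_sum_le_of_forall_le _ _ fun σ _ => ?_
  rw [← C_eq_intCast]
  exact (natDegree_C_mul_le _ _).trans
    ((natDegree_prod_le _ _).trans (sum_le_sum fun j _ => h (σ j) j))

theorem coeff_prod_sum_of_natDegree_le {R ι : Type*} [CommSemiring R] (s : Finset ι)
    (f : ι → R[X]) (d : ι → ℕ) (h : ∀ i ∈ s, (f i).natDegree ≤ d i) :
    (∏ i ∈ s, f i).coeff (∑ i ∈ s, d i) = ∏ i ∈ s, (f i).coeff (d i) := by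
  classical
  induction s using Finset.induction_on with
  | empty => simp
  | insert a s ha ih =>
    rw [prod_insert ha, sum_insert ha, prod_insert ha,
      coeff_mul_add_eq_of_natDegree_le (h a (mem_insert_self a s))
        ((natDegree_prod_le s f).trans (sum_le_sum fun i hi => h i (mem_insert_of_mem hi))),
      ih fun i hi => h i (mem_insert_of_mem hi)]

theorem coeff_det_sum_of_natDegree_le {R n : Type*} [CommRing R] [Fintype n] [DecidableEq n]
    (M : Matrix n n R[X]) {d : n → ℕ} (h : ∀ i j, (M i j).natDegree ≤ d j) :
    M.det.coeff (∑ j, d j) = (Matrix.of fun i j => (M i j).coeff (d j)).det := by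
  rw [Matrix.det_apply', Matrix.det_apply', finsetSum_coeff]
  refine sum_congr rfl fun σ _ => ?_
  rw [← C_eq_intCast, coeff_C_mul,
    coeff_prod_sum_of_natDegree_le univ _ _ fun j _ => h (σ j) j]
  rfl

/-- The matrix of the translates `t ↦ t + e`, `e < L`, of the exponential polynomial
`∑ l, Q l (t) * γ l ^ t`: dividing its column `l` by `γ l ^ t` leaves a matrix of polynomials. -/
noncomputable def translateMatrix {R : Type*} [CommRing R] {L : ℕ} (Q : Fin L → R[X])
    (γ : Fin L → R) : Matrix (Fin L) (Fin L) R[X] :=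
  Matrix.of fun e l => taylor ((e : ℕ) : R) (Q l) * C (γ l ^ (e : ℕ))

section translateMatrix

variable {R : Type*} [CommRing R] {L : ℕ} (Q : Fin L → R[X]) (γ : Fin L → R)

theorem natDegree_translateMatrix_le (e l : Fin L) :
    (translateMatrix Q γ e l).natDegree ≤ (Q l).natDegree :=
  (natDegree_mul_C_le _ _).trans (natDegree_taylor _ _).le

theorem coeff_det_translateMatrix :
    (translateMatrix Q γ).det.coeff (∑ l, (Q l).natDegree) =
      (∏ l, (Q l).leadingCoeff) * (Matrix.vandermonde γ).det := by
  rw [coeff_det_sum_of_natDegree_le _ (natDegree_translateMatrix_le Q γ),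
    ← Matrix.det_transpose (Matrix.vandermonde γ), ← Matrix.det_mul_row]
  congr 1
  ext e l
  simp only [translateMatrix, Matrix.of_apply, coeff_mul_C, coeff_taylor_natDegree,
    Matrix.transpose_apply, Matrix.vandermonde_apply]

variable {Q γ} in
theorem det_translateMatrix_ne_zero [IsDomain R] (hQ : ∀ l, Q l ≠ 0) (hγ : Function.Injective γ) :
    (translateMatrix Q γ).det ≠ 0 := fun h => by
  have hcoeff := coeff_det_translateMatrix Q γ
  rw [h, coeff_zero] at hcoeff
  exact mul_ne_zero (prod_ne_zero_iff.2 fun l _ => leadingCoeff_ne_zero.2 (hQ l))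
    (Matrix.det_vandermonde_ne_zero_iff.2 hγ) hcoeff.symm

end translateMatrix

/-- A zero estimate: at each `t f` the vector `v f` is a kernel vector of the translate matrix, so
the determinant, a nonzero polynomial of small degree, has too many roots. -/
theorem eq_zero_of_forall_sum_eval_mul_pow_eq_zero {R F : Type*} [CommRing R] [IsDomain R]
    [Fintype F] {L : ℕ} {P : Fin L → R[X]} {γ : Fin L → R} (hγ : Function.Injective γ)
    {t : F → R} (ht : Function.Injective t) {v : F → Fin L → R} (hv : ∀ f l, v f l ≠ 0)
    (hcard : ∑ l, (P l).natDegree < Fintype.card F)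
    (hzero : ∀ f, ∀ e : ℕ, e < L → ∑ l, (P l).eval (t f + e) * γ l ^ e * v f l = 0) : P = 0 := by
  classical
  by_contra hP
  obtain ⟨l₀, hl₀⟩ := Function.ne_iff.1 hP
  let Q : Fin L → R[X] := fun l => if P l = 0 then 1 else P l
  have hQ : ∀ l, Q l ≠ 0 := fun l => by by_cases h : P l = 0 <;> simp [Q, h]
  have hdeg : ∀ l, (Q l).natDegree = (P l).natDegree := fun l => by
    by_cases h : P l = 0 <;> simp [Q, h]
  refine det_translateMatrix_ne_zero hQ hγ
    (eq_zero_of_natDegree_lt_card_of_eval_eq_zero _ ht (fun f => ?_) ?_)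
  · rw [← coe_evalRingHom, RingHom.map_det, ← Matrix.exists_mulVec_eq_zero_iff]
    refine ⟨fun l => if P l = 0 then 0 else v f l, fun h => ?_, funext fun e => ?_⟩
    · have := congrFun h l₀
      simp_all
    · rw [Matrix.mulVec, dotProduct]
      refine (sum_congr rfl fun l _ => ?_).trans (hzero f e e.isLt)
      by_cases h : P l = 0 <;> simp [h, translateMatrix, Q, taylor_eval]
  · refine (natDegree_det_le_sum _ (natDegree_translateMatrix_le Q γ)).trans_lt ?_
    simpa only [hdeg] using hcard

end ExponentialPolynomials

section Gelfond

open Polynomial Finset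

/-- The value at `s + r * n` of the exponential polynomial `∑ l, P l (t) * g ^ (l * t)` with
`g ^ n` replaced by `y / x`, multiplied by `x ^ (r * (L - 1))` to make it an integer. -/
noncomputable def clearedValue {L : ℕ} (P : Fin L → ℤ[X]) (g x y : ℤ) (n r s : ℕ) : ℤ :=
  ∑ l : Fin L, (P l).eval ((s + r * n : ℕ) : ℤ) *
    (g ^ (s * (l : ℕ)) * (y ^ (r * (l : ℕ)) * x ^ (r * (L - 1 - l))))

variable {L n : ℕ} {P : Fin L → ℤ[X]} {g : ℕ} {x y : ℤ}

theorem dvd_clearedValue {N : ℤ} (hN : N ∣ x * (g : ℤ) ^ n - y)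
    (hP : ∀ t : ℕ, N ∣ ∑ l, (P l).eval (t : ℤ) * ((g : ℤ) ^ (l : ℕ)) ^ t) (r s : ℕ) :
    N ∣ clearedValue P g x y n r s := by
  refine (dvd_sub_right ((hP (s + r * n)).mul_left (x ^ (r * (L - 1))))).1 ?_
  rw [clearedValue, mul_sum, ← sum_sub_distrib]
  refine dvd_sum fun l _ => ?_
  obtain ⟨l', hl'⟩ : ∃ l', L - 1 = (l : ℕ) + l' := ⟨L - 1 - l, by omega⟩
  have factor : x ^ (r * (L - 1)) * ((P l).eval ((s + r * n : ℕ) : ℤ) *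
        ((g : ℤ) ^ (l : ℕ)) ^ (s + r * n)) -
      (P l).eval ((s + r * n : ℕ) : ℤ) *
        ((g : ℤ) ^ (s * (l : ℕ)) * (y ^ (r * (l : ℕ)) * x ^ (r * (L - 1 - l)))) =
      ((P l).eval ((s + r * n : ℕ) : ℤ) * (g : ℤ) ^ (s * (l : ℕ)) * x ^ (r * l')) *
        ((x * (g : ℤ) ^ n) ^ (r * (l : ℕ)) - y ^ (r * (l : ℕ))) := by
    rw [hl', Nat.add_sub_cancel_left]
    generalize (P l).eval ((s + r * n : ℕ) : ℤ) = T
    ring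
  rw [factor]
  exact (hN.trans (sub_dvd_pow_sub_pow _ _ _)).mul_left _

theorem abs_eval_le_of_abs_coeff_le {Q : ℤ[X]} {K X T : ℕ} (hK : Q.natDegree < K)
    (hX : ∀ k, |Q.coeff k| ≤ X) (hT : T ≠ 0) {t : ℤ} (ht : |t| ≤ T) :
    |Q.eval t| ≤ K * (X * T ^ K) := by
  have hT' : (1 : ℤ) ≤ T := by exact_mod_cast Nat.one_le_iff_ne_zero.2 hT
  rw [eval_eq_sum_range' hK]
  calc |∑ k ∈ range K, Q.coeff k * t ^ k| ≤ ∑ k ∈ range K, |Q.coeff k * t ^ k| :=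
        abs_sum_le_sum_abs _ _
    _ ≤ ∑ _k ∈ range K, (X * T ^ K : ℤ) := by
        refine sum_le_sum fun k hk => ?_
        rw [abs_mul, abs_pow]
        have := hX k
        have : |t| ^ k ≤ (T : ℤ) ^ K :=
          (pow_le_pow_left₀ (abs_nonneg t) ht k).trans
            (pow_le_pow_right₀ hT' (mem_range.1 hk).le)
        gcongr
    _ = K * (X * T ^ K) := by simp

theorem abs_clearedValue_le {K R S X H : ℕ} (hK : ∀ l, (P l).natDegree < K)
    (hX : ∀ l k, |(P l).coeff k| ≤ X) (hg : g ≠ 0) (hH : H ≠ 0) (hx : |x| ≤ H) (hy : |y| ≤ H)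
    {r s : ℕ} (hr : r < R) (hs : s < S) :
    |clearedValue P g x y n r s| ≤
      L * (K * (X * (S + R * n) ^ K) * (g ^ (S * L) * H ^ (R * L))) := by
  have hg' : (1 : ℤ) ≤ g := by exact_mod_cast Nat.one_le_iff_ne_zero.2 hg
  have hH' : (1 : ℤ) ≤ H := by exact_mod_cast Nat.one_le_iff_ne_zero.2 hH
  have term_le : ∀ l : Fin L, |(P l).eval ((s + r * n : ℕ) : ℤ) *
      ((g : ℤ) ^ (s * (l : ℕ)) * (y ^ (r * (l : ℕ)) * x ^ (r * (L - 1 - l))))| ≤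
      K * (X * (S + R * n) ^ K) * (g ^ (S * L) * H ^ (R * L)) := fun l => by
    have eval_le : |(P l).eval ((s + r * n : ℕ) : ℤ)| ≤ K * (X * (S + R * n) ^ K) := by
      have ht : s + r * n ≤ S + R * n := add_le_add hs.le (Nat.mul_le_mul_right n hr.le)
      exact_mod_cast abs_eval_le_of_abs_coeff_le (hK l) (hX l) (by omega : S + R * n ≠ 0)
        (by rw [Nat.abs_cast]; exact_mod_cast ht)
    have pow_le : (g : ℤ) ^ (s * (l : ℕ)) ≤ (g : ℤ) ^ (S * L) :=
      pow_le_pow_right₀ hg' (Nat.mul_le_mul hs.le l.isLt.le)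
    have height_le : |y| ^ (r * (l : ℕ)) * |x| ^ (r * (L - 1 - l)) ≤ (H : ℤ) ^ (R * L) := by
      calc |y| ^ (r * (l : ℕ)) * |x| ^ (r * (L - 1 - l))
          ≤ (H : ℤ) ^ (r * (l : ℕ)) * (H : ℤ) ^ (r * (L - 1 - l)) := by gcongr
        _ = (H : ℤ) ^ (r * (L - 1)) := by
            rw [← pow_add, ← mul_add, Nat.add_sub_cancel' (by omega)]
        _ ≤ (H : ℤ) ^ (R * L) :=
            pow_le_pow_right₀ hH' (Nat.mul_le_mul hr.le (Nat.sub_le _ _))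
    rw [abs_mul, abs_mul, abs_mul, abs_pow, abs_pow, abs_pow, Nat.abs_cast]
    gcongr
  refine (abs_sum_le_sum_abs _ _).trans ((sum_le_sum fun l _ => term_le l).trans_eq ?_)
  simp

theorem injective_add_mul_s11 {S n : ℕ} (hSn : S ≤ n) (R : ℕ) :
    Function.Injective fun f : Fin R × Fin S => (f.2 : ℕ) + f.1 * n := by
  rintro ⟨r, s⟩ ⟨r', s'⟩ h
  have hmod : (s : ℕ) = s' := by
    simpa [Nat.mod_eq_of_lt (s.isLt.trans_le hSn), Nat.mod_eq_of_lt (s'.isLt.trans_le hSn)]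
      using congrArg (· % n) h
  have hmul : (r : ℕ) * n = r' * n := by simpa [hmod] using h
  exact Prod.ext (Fin.ext (Nat.eq_of_mul_eq_mul_right (s.pos.trans_le hSn) hmul)) (Fin.ext hmod)

theorem eq_zero_of_forall_clearedValue_eq_zero {R S : ℕ} (hg : 2 ≤ g) (hx : x ≠ 0) (hy : y ≠ 0)
    (hSn : S ≤ n) (hdeg : ∑ l, (P l).natDegree < R * S)
    (h : ∀ r s, r < R → s < S + L → clearedValue P g x y n r s = 0) : P = 0 := by
  have : (g : ℤ) ≠ 0 := by exact_mod_cast (by omega : g ≠ 0)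
  refine eq_zero_of_forall_sum_eval_mul_pow_eq_zero (F := Fin R × Fin S)
    (γ := fun l => (g : ℤ) ^ (l : ℕ))
    ((pow_right_injective₀ (by omega) (by omega)).comp Fin.val_injective)
    (t := fun f => (((f.2 : ℕ) + f.1 * n : ℕ) : ℤ))
    (Nat.cast_injective.comp (injective_add_mul_s11 hSn R))
    (v := fun f l => (g : ℤ) ^ ((f.2 : ℕ) * l) *
      (y ^ ((f.1 : ℕ) * l) * x ^ ((f.1 : ℕ) * (L - 1 - l))))
    (fun f l => by positivity) (by simpa using hdeg) fun f e he => ?_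
  rw [← h f.1 (f.2 + e) f.1.isLt (by omega), clearedValue]
  refine sum_congr rfl fun l _ => ?_
  rw [show (((f.2 : ℕ) + e + f.1 * n : ℕ) : ℤ) = ((f.2 : ℕ) + f.1 * n : ℕ) + e by push_cast; ring]
  ring

theorem not_pow_dvd_mul_pow_sub {p K R S V X H : ℕ} (hp : p ≠ 0) (hg : 2 ≤ g)
    (hpg : (p : ℤ) ∣ g - 1) (hx : x ≠ 0) (hy : y ≠ 0) (hxH : |x| ≤ H) (hyH : |y| ≤ H)
    (hX : p ^ (V * (2 * K + V + 1)) < X ^ (2 * (K * L))) (hRS : K * L ≤ R * S) (hSn : S ≤ n)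
    (hsize : L * (K * (X * (S + L + R * n) ^ K) * (g ^ ((S + L) * L) * H ^ (R * L))) < p ^ V) :
    ¬ (p : ℤ) ^ V ∣ x * (g : ℤ) ^ n - y := fun hdvd => by
  have : NeZero p := ⟨hp⟩
  obtain ⟨P, hP0, hPK, hPX, hP⟩ := exists_polynomial_forall_pow_dvd_sum hpg hX
  obtain ⟨l₀, -⟩ := Function.ne_iff.1 hP0
  have hH : H ≠ 0 := by
    have := (Int.one_le_abs hx).trans hxH
    omega
  have hdeg : ∑ l, (P l).natDegree < K * L :=
    calc ∑ l, (P l).natDegree < ∑ _l : Fin L, K :=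
          sum_lt_sum_of_nonempty ⟨l₀, mem_univ _⟩ fun l _ => hPK l
      _ = K * L := by simp [mul_comm]
  refine hP0 (eq_zero_of_forall_clearedValue_eq_zero hg hx hy hSn (hdeg.trans_le hRS)
    fun r s hr hs => Int.eq_zero_of_abs_lt_dvd (dvd_clearedValue hdvd hP r s) ?_)
  refine (abs_clearedValue_le hPK hPX (by omega) hH hxH hyH hr hs).trans_lt ?_
  exact_mod_cast hsize

end Gelfond

section NumericalParameters

/-- An upper bound for the exponent of `p ∈ {3, 5, 7}` in `n * 2 ^ n + T`, where `n < 2 ^ (3 * d)`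
and `|T| ≤ 2 ^ τ`. -/
def precision (d τ : ℕ) : ℕ := 12100 * d ^ 2 * τ

theorem two_add_mul_le_two_pow {d : ℕ} (hd : 12 ≤ d) : 2 + 110 * d ≤ 2 ^ d := by
  induction d, hd using Nat.le_induction with
  | base => norm_num
  | succ d hd ih =>
    rw [pow_succ]
    omega

theorem add_mul_le_two_pow {d n a : ℕ} (hd : 12 ≤ d) (hn : n < 2 ^ (3 * d)) (ha : a ≤ 2 * n) :
    a + 110 * d * n ≤ 2 ^ (4 * d) :=
  calc a + 110 * d * n ≤ (2 + 110 * d) * n := by linarith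
    _ ≤ 2 ^ d * 2 ^ (3 * d) := Nat.mul_le_mul (two_add_mul_le_two_pow hd) hn.le
    _ = 2 ^ (4 * d) := by ring

theorem one_lt_of_two_pow_le_pow {p a b : ℕ} (ha : a ≠ 0) (h : 2 ^ a ≤ p ^ b) : 1 < p :=
  lt_of_pow_lt_pow_left' b ((one_pow b).trans_lt ((Nat.one_lt_two_pow ha).trans_le h))

theorem precision_le_two_pow (d τ : ℕ) : precision d τ ≤ 2 ^ (14 + 2 * d + τ) := by
  have hd : d ≤ 2 ^ d := d.lt_two_pow_self.le
  have hτ : τ ≤ 2 ^ τ := τ.lt_two_pow_self.le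
  calc 12100 * d ^ 2 * τ ≤ 2 ^ 14 * (2 ^ d) ^ 2 * 2 ^ τ := by gcongr; norm_num
    _ = 2 ^ (14 + 2 * d + τ) := by ring

/-- `not_pow_dvd_mul_pow_sub` will be applied with `K = 1210dτ`, `L = 10d`, `R = 110d`,
`S = 110dτ`, `V = KL = RS`, and `X` the least power of `p` allowed by the pigeonhole principle. -/
theorem size_lt_pow_precision {p e d n τ : ℕ} (he : e ≤ 4) (hpe : 2 ^ (45 + 20 * e) ≤ p ^ 54)
    (hd : 12 ≤ d) (hτ : 3 * d ≤ τ) (hn : n < 2 ^ (3 * d)) (hnτ : 110 * d * τ ≤ n) :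
    10 * d * (1210 * d * τ * (p ^ (1210 * d * τ + 6050 * d ^ 2 * τ + 1) *
      (110 * d * τ + 10 * d + 110 * d * n) ^ (1210 * d * τ)) *
      ((2 ^ e) ^ ((110 * d * τ + 10 * d) * (10 * d)) * (2 ^ (e * τ)) ^ (110 * d * (10 * d)))) <
    p ^ precision d τ := by
  have hp : 1 < p := one_lt_of_two_pow_le_pow (by omega) hpe
  have hdτ : 12 * (d * τ) ≤ d ^ 2 * τ := by nlinarith [Nat.mul_le_mul_right (d * τ) hd]
  have hd₂ : 36 * d ^ 2 ≤ d ^ 2 * τ := by nlinarith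
  have hτ₂ : 144 * τ ≤ d ^ 2 * τ := by nlinarith
  have hed : e * d ^ 2 ≤ 4 * d ^ 2 := Nat.mul_le_mul_right _ he
  have base_le : 110 * d * τ + 10 * d + 110 * d * n ≤ 2 ^ (4 * d) :=
    add_mul_le_two_pow hd hn (by nlinarith)
  calc _ = p ^ (1210 * d * τ + 6050 * d ^ 2 * τ + 1) * (precision d τ *
          ((110 * d * τ + 10 * d + 110 * d * n) ^ (1210 * d * τ) *
          2 ^ (e * (2200 * (d ^ 2 * τ) + 100 * d ^ 2)))) := by
        rw [precision]
        ring
    _ ≤ p ^ (1210 * d * τ + 6050 * d ^ 2 * τ + 1) * (2 ^ (14 + 2 * d + τ) *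
          ((2 ^ (4 * d)) ^ (1210 * d * τ) * 2 ^ (e * (2200 * (d ^ 2 * τ) + 100 * d ^ 2)))) := by
        gcongr
        exact precision_le_two_pow d τ
    _ = p ^ (1210 * d * τ + 6050 * d ^ 2 * τ + 1) * 2 ^ (14 + 2 * d + τ + 4840 * (d ^ 2 * τ) +
          e * (2200 * (d ^ 2 * τ) + 100 * d ^ 2)) := by ring
    _ ≤ p ^ (1210 * d * τ + 6050 * d ^ 2 * τ + 1) * (2 ^ (45 + 20 * e)) ^ (110 * (d ^ 2 * τ)) := by
        rw [← pow_mul]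
        gcongr
        · norm_num
        · nlinarith
    _ ≤ p ^ (1210 * d * τ + 6050 * d ^ 2 * τ + 1) * (p ^ 54) ^ (110 * (d ^ 2 * τ)) := by gcongr
    _ = p ^ (1210 * d * τ + 6050 * d ^ 2 * τ + 1 + 54 * (110 * (d ^ 2 * τ))) := by
        rw [← pow_mul, ← pow_add]
    _ < p ^ precision d τ := Nat.pow_lt_pow_right hp (by rw [precision]; nlinarith)

theorem not_pow_precision_dvd_mul_two_pow_add {p e : ℕ} (he₀ : e ≠ 0) (he : e ≤ 4)
    (hpe : (p : ℤ) ∣ 2 ^ e - 1) (hbits : 2 ^ (45 + 20 * e) ≤ p ^ 54) {n d τ : ℕ} (hd : 12 ≤ d)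
    (hn : n < 2 ^ (3 * d)) (hτ : 3 * d ≤ τ) (hnτ : 110 * d * τ ≤ n) {T : ℤ} (hT : T ≠ 0)
    (hTτ : |T| ≤ 2 ^ τ) : ¬ (p : ℤ) ^ precision d τ ∣ (n : ℤ) * 2 ^ n + T := by
  have : 0 < d := by omega
  have hτ₀ : 0 < τ := by omega
  have hp : 1 < p := one_lt_of_two_pow_le_pow (by omega) hbits
  have hn₀ : (n : ℤ) ≠ 0 := by
    have : 0 < 110 * d * τ := by positivity
    omega
  have pow_le : ∀ z : ℤ, |z| ≤ 2 ^ τ → |z ^ e| ≤ ((2 ^ (e * τ) : ℕ) : ℤ) := fun z hz => by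
    rw [abs_pow, mul_comm e, pow_mul]
    exact_mod_cast pow_le_pow_left₀ (abs_nonneg z) hz e
  have hnτ' : |(n : ℤ)| ≤ 2 ^ τ := by
    rw [Nat.abs_cast]
    exact_mod_cast hn.le.trans (Nat.pow_le_pow_right two_pos hτ)
  have dvd_pow_sub : (n : ℤ) * 2 ^ n + T ∣ (n : ℤ) ^ e * ((2 ^ e : ℕ) : ℤ) ^ n - (-T) ^ e := by
    have := sub_dvd_pow_sub_pow ((n : ℤ) * 2 ^ n) (-T) e
    rwa [sub_neg_eq_add, mul_pow, ← pow_mul, mul_comm n e, pow_mul] at this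
  refine fun hdvd => not_pow_dvd_mul_pow_sub (g := 2 ^ e) (K := 1210 * d * τ) (L := 10 * d)
    (R := 110 * d) (S := 110 * d * τ) (X := p ^ (1210 * d * τ + 6050 * d ^ 2 * τ + 1))
    (H := 2 ^ (e * τ)) (by omega) (Nat.le_self_pow he₀ 2) (by exact_mod_cast hpe)
    (pow_ne_zero e hn₀) (pow_ne_zero e (neg_ne_zero.2 hT)) (pow_le _ hnτ')
    (pow_le _ (by rwa [abs_neg])) ?_ (le_of_eq (by ring)) hnτ ?_ (hdvd.trans dvd_pow_sub)
  · rw [← pow_mul, precision]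
    have : 0 < 12100 * d ^ 2 * τ := by positivity
    exact Nat.pow_lt_pow_right hp (by nlinarith)
  · exact_mod_cast size_lt_pow_precision he hbits hd hτ hn hnτ

end NumericalParameters

section Bootstrap

open Nat

theorem dvd_prod_pow_of_not_pow_dvd {s : ℕ} (hs : s ≠ 0) {S : Finset ℕ} (hS : s.primeFactors ⊆ S)
    {k : ℕ → ℕ} (h : ∀ p ∈ S, ¬ p ^ k p ∣ s) : s ∣ ∏ p ∈ S, p ^ k p := by
  have le : ∀ p ∈ S, s.factorization p ≤ k p := fun p hp => by
    by_contra! hk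
    exact h p hp ((pow_dvd_pow p hk.le).trans (s.ordProj_dvd p))
  calc s = ∏ p ∈ s.primeFactors, p ^ s.factorization p := (s.prod_factorization_pow_eq_self hs).symm
    _ ∣ ∏ p ∈ s.primeFactors, p ^ k p :=
      Finset.prod_dvd_prod_of_dvd _ _ fun p hp => pow_dvd_pow p (le p (hS hp))
    _ ∣ ∏ p ∈ S, p ^ k p := Finset.prod_dvd_prod_of_subset _ _ _ hS

theorem pow_dvd_factorial_of_mul_le {p k m : ℕ} (hp : 0 < p) (h : p * k ≤ m) : p ^ k ∣ m ! :=
  calc p ^ k ∣ p ! ^ k := pow_dvd_pow_of_dvd (dvd_factorial hp le_rfl) k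
    _ ∣ (p * k)! := by simpa [mul_comm] using prod_factorial_dvd_factorial_sum (.range k) fun _ => p
    _ ∣ m ! := factorial_dvd_factorial h

theorem factorial_le_two_pow_mul {m M b : ℕ} (hm : m ≤ M) (hM : M ≤ 2 ^ b) : m ! ≤ 2 ^ (b * M) :=
  calc m ! ≤ M ! := factorial_le hm
    _ ≤ M ^ M := factorial_le_pow M
    _ ≤ (2 ^ b) ^ M := Nat.pow_le_pow_left hM M
    _ = 2 ^ (b * M) := (pow_mul ..).symm

theorem mul_le_precision (d τ : ℕ) : 110 * d * τ ≤ precision d τ := by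
  rw [precision]
  gcongr
  · norm_num
  · exact Nat.le_self_pow two_ne_zero d

theorem mul_pow_nine_le_eight_pow {d : ℕ} (hd : 37 ≤ d) :
    8 * (8 * (12100 ^ 3 * 169 * 168 * 3 * d ^ 9)) ≤ 8 ^ d := by
  induction d, hd using Nat.le_induction with
  | base => norm_num
  | succ d hd ih =>
    have ratio_le : (37 * (d + 1)) ^ 9 ≤ (38 * d) ^ 9 := Nat.pow_le_pow_left (by omega) 9
    rw [mul_pow, mul_pow] at ratio_le
    rw [pow_succ 8 d]
    norm_num at ratio_le ih ⊢
    omega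

/-- The solutions `(n, m₁, m₂, s)` of `C_n = m₁! + m₂! + s` to be determined. Non-degeneracy forces
`2 ≤ m₂`, hence `s` is odd, and `s ≠ 1`. -/
structure IsSolution (n m₁ m₂ s : ℕ) : Prop where
  le : m₂ ≤ m₁
  two_le : 2 ≤ m₂
  one_lt : 1 < s
  primeFactors_subset : s.primeFactors ⊆ {3, 5, 7}
  eq : n * 2 ^ n + 1 = m₁ ! + m₂ ! + s

namespace IsSolution

variable {n m₁ m₂ s : ℕ}

theorem dvd_of_not_pow_dvd (h : IsSolution n m₁ m₂ s) {i j k : ℕ} (h₃ : ¬ 3 ^ i ∣ s)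
    (h₅ : ¬ 5 ^ j ∣ s) (h₇ : ¬ 7 ^ k ∣ s) : s ∣ 3 ^ i * 5 ^ j * 7 ^ k := by
  have := dvd_prod_pow_of_not_pow_dvd (by have := h.one_lt; omega) h.primeFactors_subset
    (k := fun p => if p = 3 then i else if p = 5 then j else k) (by simp [h₃, h₅, h₇])
  simpa [mul_assoc] using this

theorem two_pow_dvd (h : IsSolution n m₁ m₂ s) {b : ℕ} (hb : b ≤ n) :
    2 ^ b ∣ m₁ ! + m₂ ! + (s - 1) := by
  have := h.eq
  have := h.one_lt
  rw [show m₁ ! + m₂ ! + (s - 1) = n * 2 ^ n by omega]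
  exact (pow_dvd_pow 2 hb).mul_left n

theorem two_le_factorial (h : IsSolution n m₁ m₂ s) : 2 ≤ m₂ ! := factorial_le h.two_le

theorem not_pow_precision_dvd (h : IsSolution n m₁ m₂ s) {p e : ℕ} (he₀ : e ≠ 0) (he : e ≤ 4)
    (hpe : (p : ℤ) ∣ 2 ^ e - 1) (hbits : 2 ^ (45 + 20 * e) ≤ p ^ 54) {d τ : ℕ} (hd : 12 ≤ d)
    (hn : n < 2 ^ (3 * d)) (hτ : 3 * d ≤ τ) (hnτ : 110 * d * τ ≤ n) {f r : ℕ}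
    (hfr : f + r = m₁ ! + m₂ !) (hf : f ≠ 1) (hfτ : f ≤ 2 ^ τ) (hr : p ^ precision d τ ∣ r) :
    ¬ p ^ precision d τ ∣ s := fun hs => by
  have one_le : (1 : ℤ) ≤ 2 ^ τ := one_le_pow₀ one_le_two
  have : (f : ℤ) ≤ 2 ^ τ := by exact_mod_cast hfτ
  refine not_pow_precision_dvd_mul_two_pow_add he₀ he hpe hbits hd hn hτ hnτ
    (T := 1 - f) (by omega) (abs_le.2 ⟨by linarith, by linarith⟩) ?_
  have eq : (n : ℤ) * 2 ^ n + (1 - f) = (r + s : ℕ) := by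
    have := h.eq
    zify at this hfr ⊢
    linarith
  rw [eq]
  exact_mod_cast dvd_add hr hs

theorem le_two_pow_of_not_pow_dvd (h : IsSolution n m₁ m₂ s) {k : ℕ} (h₃ : ¬ 3 ^ k ∣ s)
    (h₅ : ¬ 5 ^ k ∣ s) (h₇ : ¬ 7 ^ k ∣ s) : s ≤ 2 ^ (7 * k) :=
  calc s ≤ 3 ^ k * 5 ^ k * 7 ^ k := Nat.le_of_dvd (by positivity) (h.dvd_of_not_pow_dvd h₃ h₅ h₇)
    _ = (3 * 5 * 7) ^ k := by rw [← mul_pow, ← mul_pow]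
    _ ≤ (2 ^ 7) ^ k := Nat.pow_le_pow_left (by norm_num) k
    _ = 2 ^ (7 * k) := (pow_mul ..).symm

/-- If `m₁ ! + m₂ ! = f + r` with `f` small and `r` divisible by high powers, Gelfond's bound makes
`s` small, but `n * 2 ^ n = f + (s - 1) + r` is divisible by a high power of 2. -/
theorem not_forall_pow_dvd (h : IsSolution n m₁ m₂ s) {d τ : ℕ} (hd : 12 ≤ d)
    (hn : n < 2 ^ (3 * d)) (hτ : 3 * d ≤ τ) (hnτ : 8 * precision d τ ≤ n) {f r : ℕ}
    (hfr : f + r = m₁ ! + m₂ !) (hf : f ≠ 1) (hfτ : f ≤ 2 ^ τ) :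
    ¬ ∀ p, 0 < p → p ≤ 7 → p ^ (8 * precision d τ) ∣ r := fun hr => by
  have le_precision : τ ≤ 110 * d * τ := Nat.le_mul_of_pos_left τ (by omega)
  have le_precision' := mul_le_precision d τ
  have not_dvd : ∀ {p e : ℕ}, 0 < p → p ≤ 7 → e ≠ 0 → e ≤ 4 → (p : ℤ) ∣ 2 ^ e - 1 →
      2 ^ (45 + 20 * e) ≤ p ^ 54 → ¬ p ^ precision d τ ∣ s := fun hp hp₇ he₀ he hpe hbits =>
    h.not_pow_precision_dvd he₀ he hpe hbits hd hn hτ (by omega) hfr hf hfτ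
      ((pow_dvd_pow _ (by omega)).trans (hr _ hp hp₇))
  have hs : s ≤ 2 ^ (7 * precision d τ) := h.le_two_pow_of_not_pow_dvd
    (not_dvd (e := 2) (by simp) (by simp) (by simp) (by simp) (by decide) (by norm_num))
    (not_dvd (e := 4) (by simp) (by simp) (by simp) (by simp) (by decide) (by norm_num))
    (not_dvd (e := 3) (by simp) (by simp) (by simp) (by simp) (by decide) (by norm_num))
  have hf' : f ≤ 2 ^ (7 * precision d τ) :=
    hfτ.trans (Nat.pow_le_pow_right two_pos (by omega))
  have hs₁ := h.one_lt
  have lt : f + (s - 1) < 2 ^ (8 * precision d τ) := by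
    have : 2 * 2 ^ (7 * precision d τ) ≤ 2 ^ (8 * precision d τ) := by
      rw [← _root_.pow_succ']
      exact Nat.pow_le_pow_right two_pos (by omega)
    omega
  have hdvd := h.two_pow_dvd hnτ
  rw [← hfr, add_right_comm, Nat.dvd_add_left (hr 2 (by simp) (by simp))] at hdvd
  have := Nat.eq_zero_of_dvd_of_lt hdvd lt
  omega

theorem snd_lt (h : IsSolution n m₁ m₂ s) {d : ℕ} (hd : 12 ≤ d) (hn : n < 2 ^ (3 * d))
    (hnd : 8 * precision d (3 * d) ≤ n) : m₂ < 56 * precision d (3 * d) := by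
  by_contra! hm
  refine h.not_forall_pow_dvd hd hn le_rfl hnd (zero_add _) zero_ne_one (zero_le _)
    fun p hp hp₇ => ?_
  have : p * (8 * precision d (3 * d)) ≤ m₂ := (Nat.mul_le_mul_right _ hp₇).trans (by omega)
  exact dvd_add (pow_dvd_factorial_of_mul_le hp (this.trans h.le))
    (pow_dvd_factorial_of_mul_le hp this)

theorem fst_lt (h : IsSolution n m₁ m₂ s) {d τ : ℕ} (hd : 12 ≤ d) (hn : n < 2 ^ (3 * d))
    (hτ : 3 * d ≤ τ) (hnτ : 8 * precision d τ ≤ n) (hm₂ : m₂ ! ≤ 2 ^ τ) :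
    m₁ < 56 * precision d τ := by
  by_contra! hm
  refine h.not_forall_pow_dvd hd hn hτ hnτ (add_comm _ _) (by have := h.two_le_factorial; omega)
    hm₂ fun p hp hp₇ => pow_dvd_factorial_of_mul_le hp ?_
  exact (Nat.mul_le_mul_right _ hp₇).trans (by omega)

theorem lt_of_factorial_add_le (h : IsSolution n m₁ m₂ s) {d τ : ℕ} (hd : 12 ≤ d)
    (hn : n < 2 ^ (3 * d)) (hτ : 3 * d ≤ τ) (hm : m₁ ! + m₂ ! ≤ 2 ^ τ) :
    n < 8 * precision d τ := by
  by_contra! hnτ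
  exact h.not_forall_pow_dvd hd hn hτ hnτ (add_zero _) (by have := h.two_le_factorial; omega) hm
    fun p _ _ => dvd_zero _

theorem factorial_add_factorial_le (h : IsSolution n m₁ m₂ s) {b : ℕ} (hm₁ : m₁ ! ≤ 2 ^ b) :
    m₁ ! + m₂ ! ≤ 2 ^ (b + 1) := by
  have := factorial_le h.le
  rw [Nat.pow_succ]
  omega

theorem lt_mul_pow_nine (h : IsSolution n m₁ m₂ s) {d : ℕ} (hd : 12 ≤ d) (hn : n < 2 ^ (3 * d)) :
    n < 8 * (12100 ^ 3 * 169 * 168 * 3 * d ^ 9) := by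
  set V₁ := precision d (3 * d) with hV₁
  set V₂ := precision d (168 * d * V₁) with hV₂
  set V₃ := precision d (169 * d * V₂) with hV₃
  have eq : V₃ = 12100 ^ 3 * 169 * 168 * 3 * d ^ 9 := by
    simp only [hV₃, hV₂, hV₁, precision]
    ring
  rw [← eq]
  by_contra! hn₃
  have le_precision : ∀ τ, τ ≤ precision d τ := fun τ =>
    (Nat.le_mul_of_pos_left τ (by omega)).trans (mul_le_precision d τ)
  have hτ₁ := le_precision (3 * d)
  have hτ₂ := le_precision (168 * d * V₁)
  have hτ₃ := le_precision (169 * d * V₂)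
  have hV₁₂ : 2016 * V₁ ≤ 168 * d * V₁ := Nat.mul_le_mul_right _ (by omega)
  have hV₂₃ : 2028 * V₂ ≤ 169 * d * V₂ := Nat.mul_le_mul_right _ (by omega)
  have factorial_le : ∀ {m V}, m < 56 * V → 56 * V ≤ n → m ! ≤ 2 ^ (168 * d * V) := fun hm hV => by
    convert factorial_le_two_pow_mul hm.le (hV.trans hn.le) using 2
    ring
  have hm₂ : m₂ ! ≤ 2 ^ (168 * d * V₁) :=
    factorial_le (h.snd_lt hd hn (by omega)) (by omega)
  have hm₁ : m₁ ! ≤ 2 ^ (168 * d * V₂) :=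
    factorial_le (h.fst_lt hd hn (by omega) (by omega) hm₂) (by omega)
  refine hn₃.not_gt (h.lt_of_factorial_add_le hd hn (by omega) ?_)
  exact (h.factorial_add_factorial_le hm₁).trans (Nat.pow_le_pow_right two_pos (by nlinarith))

theorem lt_two_pow (h : IsSolution n m₁ m₂ s) : n < 2 ^ 108 := by
  by_contra! hn
  have log_ge : 36 ≤ Nat.log 8 n :=
    Nat.le_log_of_pow_le (by norm_num) (le_trans (by norm_num) hn)
  have hd := Nat.lt_pow_succ_log_self (b := 8) (by norm_num) n
  have := h.lt_mul_pow_nine (d := Nat.log 8 n + 1) (by omega) (by rwa [pow_mul])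
  have := Nat.pow_log_le_self 8 (x := n) (by omega)
  have := mul_pow_nine_le_eight_pow (d := Nat.log 8 n + 1) (by omega)
  rw [Nat.pow_succ] at this
  omega

theorem lt_two_pow_of_fst_lt (h : IsSolution n m₁ m₂ s) (hm₁ : m₁ < 368) : n < 2 ^ 36 := by
  have factorial_le : m₁ ! + m₂ ! ≤ 2 ^ (9 * 368 + 1) :=
    h.factorial_add_factorial_le (factorial_le_two_pow_mul (b := 9) hm₁.le (by norm_num))
  have hn : n < 2 ^ 39 :=
    (h.lt_of_factorial_add_le (d := 36) (by norm_num) h.lt_two_pow (by norm_num)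
      factorial_le).trans (by norm_num [precision])
  exact (h.lt_of_factorial_add_le (d := 13) (by norm_num) hn (by norm_num) factorial_le).trans
    (by norm_num [precision])

end IsSolution

end Bootstrap

section HenselLifting

/-- `force x f` is `f x`, but the kernel evaluates the numeral `x` before it substitutes. -/
def force {α : Sort*} (x : ℕ) (f : ℕ → α) : α :=
  Nat.rec (f 0) (fun k _ => f k.succ) x

theorem force_eq {α : Sort*} (x : ℕ) (f : ℕ → α) : force x f = f x := by
  cases x <;> rfl

/-- The list of the pairs `(q * p ^ i, g ^ p ^ i % P)` for `i < k`. -/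
def liftingTable (p P : ℕ) : ℕ → ℕ → ℕ → List (ℕ × ℕ)
  | 0, _, _ => []
  | k + 1, q, g =>
    force (q * p) fun q' => force (g ^ p % P) fun g' => (q, g) :: liftingTable p P k q' g'

/-- Hensel lifting for the equation `n * b ^ n + V ≡ 0`, from the approximation `x` of a solution
`n` with `n ≡ x` modulo `o`, where `b ^ o ≡ 1` modulo `p`. Here `w ≡ b ^ x` modulo `P = p ^ K`, the
list `t` contains the pairs `(p ^ j, b ^ (o * p ^ j) % P)`, and `u` satisfies `u * o * b ^ x ≡ -1`
modulo `p`. It is written with recursors and explicit operations as these are fast in the kernel. -/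
def henselLift (o p P V u : ℕ) (t : List (ℕ × ℕ)) : ℕ → ℕ → ℕ :=
  List.rec (fun x _ => x) (fun e _ ih x w =>
    (fun c => ih (x.add ((o.mul e.1).mul c)) ((w.mul (e.2.pow c)).mod P))
      (((((x.mul w).add V).div e.1).mul u).mod p)) t

theorem henselLift_cons (o p P V u : ℕ) (e : ℕ × ℕ) (t : List (ℕ × ℕ)) (x w : ℕ) :
    henselLift o p P V u (e :: t) x w =
      henselLift o p P V u t (x + o * e.1 * ((x * w + V) / e.1 * u % p))
        (w * e.2 ^ ((x * w + V) / e.1 * u % p) % P) :=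
  rfl

variable {b o p K V u n : ℕ}

theorem pow_mul_pow_modEq_one (ho : b ^ o ≡ 1 [MOD p]) (j : ℕ) :
    b ^ (o * p ^ j) ≡ 1 [MOD p ^ (j + 1)] := by
  have hdvd : (p : ℤ) ∣ b ^ o - 1 := by exact_mod_cast ho.symm.dvd
  refine (Nat.modEq_iff_dvd.2 ?_).symm
  simpa [pow_mul] using dvd_sub_pow_of_dvd_sub hdvd j

theorem hensel_digit_eq {j x w t : ℕ} (hp : 0 < p) (ho : b ^ o ≡ 1 [MOD p])
    (hdvd : p ^ (j + 1) ∣ n * b ^ n + V) (hn : n = x + o * p ^ j * t)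
    (hw : w ≡ b ^ x [MOD p ^ (j + 1)]) (hu : p ∣ u * o * w + 1) :
    (x * w + V) / p ^ j * u % p = t % p := by
  have hbn : b ^ n ≡ w [MOD p ^ (j + 1)] := by
    rw [hn, pow_add b x, pow_mul b]
    simpa using hw.symm.mul ((pow_mul_pow_modEq_one ho j).pow t)
  have hdvd' : p ^ (j + 1) ∣ p ^ j * (o * t * w) + (x * w + V) := by
    rw [show p ^ j * (o * t * w) + (x * w + V) = n * w + V by rw [hn]; ring]
    exact (((hbn.mul_left n).add_right V).dvd_iff dvd_rfl).1 hdvd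
  obtain ⟨z, hz⟩ : p ^ j ∣ x * w + V :=
    (Nat.dvd_add_right (dvd_mul_right ..)).1 ((pow_dvd_pow p j.le_succ).trans hdvd')
  rw [hz, Nat.mul_div_cancel_left _ (pow_pos hp j)]
  rw [hz, ← mul_add, pow_succ] at hdvd'
  have hz' : (p : ℤ) ∣ o * t * w + z := by
    exact_mod_cast Nat.dvd_of_mul_dvd_mul_left (pow_pos hp j) hdvd'
  have hu' : (p : ℤ) ∣ u * o * w + 1 := by exact_mod_cast hu
  have := dvd_sub (hu'.mul_left t) (hz'.mul_left u)
  refine (Nat.modEq_iff_dvd.2 ?_ : z * u ≡ t [MOD p])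
  rw [show (t : ℤ) * (u * o * w + 1) - u * (o * t * w + z) = t - z * u by ring] at this
  exact_mod_cast this

theorem henselLift_le (hp : 0 < p) (ho : b ^ o ≡ 1 [MOD p]) (hdvd : p ^ K ∣ n * b ^ n + V)
    {k j g x w t : ℕ} (hjk : j + k = K) (hg : g ≡ b ^ (o * p ^ j) [MOD p ^ K])
    (hn : n = x + o * p ^ j * t) (hw : w ≡ b ^ x [MOD p ^ K]) (hu : p ∣ u * o * w + 1) :
    henselLift o p (p ^ K) V u (liftingTable p (p ^ K) k (p ^ j) g) x w ≤ n := by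
  induction k generalizing j g x w t with
  | zero => exact hn ▸ Nat.le_add_right ..
  | succ k ih =>
    have hj : p ^ (j + 1) ∣ p ^ K := pow_dvd_pow p (by omega)
    have hp_dvd : p ∣ p ^ K := dvd_pow_self p (by omega)
    simp only [liftingTable, force_eq]
    rw [henselLift_cons, hensel_digit_eq hp ho (hj.trans hdvd) hn (hw.of_dvd hj) hu, ← pow_succ]
    refine ih (t := t / p) (by omega) ?_ ?_ ?_ ?_
    · refine (Nat.mod_modEq _ _).trans ((hg.pow p).trans ?_)
      rw [← pow_mul, mul_assoc, ← pow_succ]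
    · conv_lhs => rw [hn, ← Nat.mod_add_div t p]
      ring
    · refine (Nat.mod_modEq _ _).trans ((hw.mul (hg.pow _)).trans ?_)
      rw [← pow_mul, ← pow_add]
    · have hg_one : g ≡ 1 [MOD p] := by
        refine (hg.of_dvd hp_dvd).trans ?_
        simpa [pow_mul] using ho.pow (p ^ j)
      have hw' : w * g ^ (t % p) % p ^ K ≡ w [MOD p] := by
        refine ((Nat.mod_modEq _ _).of_dvd hp_dvd).trans ?_
        simpa using (hg_one.pow (t % p)).mul_left w
      exact (((hw'.mul_left (u * o)).add_right 1).dvd_iff dvd_rfl).2 hu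

/-- Whether lifting the solutions of `n * b ^ n + V ≡ 0` in all residue classes modulo `o` to the
modulus `P = p ^ K` yields only numbers `≥ N`. -/
def noSolutionBelow (b o p P N : ℕ) (t : List (ℕ × ℕ)) (V : ℕ) : Bool :=
  (List.range o).all fun r => force ((p - 1) * (o * b ^ r) ^ (p - 2)) fun u =>
    Nat.ble N (henselLift o p P V u t r (b ^ r))

theorem dvd_sub_one_mul_pow_sub_two_mul_add_one (hp : p.Prime) {a : ℕ} (ha : a.Coprime p) :
    p ∣ (p - 1) * a ^ (p - 2) * a + 1 := by
  obtain ⟨q, rfl⟩ := Nat.exists_eq_add_of_le' hp.two_le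
  have fermat : a ^ (q + 1) ≡ 1 [MOD q + 2] := by
    simpa [Nat.totient_prime hp] using Nat.ModEq.pow_totient ha
  rw [show (q + 2 - 1) * a ^ (q + 2 - 2) * a + 1 = (q + 1) * a ^ (q + 1) + 1 by simp; ring]
  exact (((fermat.mul_left (q + 1)).add_right 1).dvd_iff dvd_rfl).2 (by simp)

theorem not_pow_dvd_of_noSolutionBelow (hp : p.Prime) (ho : b ^ o ≡ 1 [MOD p])
    (hop : o.Coprime p) {N : ℕ}
    (h : noSolutionBelow b o p (p ^ K) N (liftingTable p (p ^ K) K 1 (b ^ o)) V = true)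
    (hn : n < N) : ¬ p ^ K ∣ n * b ^ n + V := fun hdvd => by
  have ho₀ : o ≠ 0 := by
    rintro rfl
    exact hp.one_lt.ne' ((Nat.coprime_zero_left p).1 hop)
  have hb : b.Coprime p :=
    (Nat.coprime_pow_left_iff (Nat.pos_of_ne_zero ho₀) b p).1 (ho.gcd_eq.trans (Nat.gcd_one_left p))
  have hr := List.all_eq_true.1 h (n % o) (List.mem_range.2 (n.mod_lt (Nat.pos_of_ne_zero ho₀)))
  rw [force_eq] at hr
  refine hn.not_ge ((Nat.le_of_ble_eq_true hr).trans ?_)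
  refine henselLift_le hp.pos ho hdvd (j := 0) (t := n / o) (zero_add K) (by simp [Nat.ModEq.rfl])
    ?_ rfl ?_
  · rw [pow_zero, mul_one, Nat.mod_add_div]
  · rw [mul_assoc]
    exact dvd_sub_one_mul_pow_sub_two_mul_add_one hp (hop.mul_left (hb.pow_left _))

end HenselLifting

section FactorialResidues

open Nat

/-- The residues modulo `P` of `m !, …, (m + k - 1)!`, where `f` is the residue of `m !`. -/
def factorialResiduesFrom (P : ℕ) : ℕ → ℕ → ℕ → List ℕ
  | 0, _, _ => []
  | k + 1, m, f =>
    force (m + 1) fun m' => force (m' * f % P) fun f' => f :: factorialResiduesFrom P k m' f'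

/-- The residues modulo `P` of `2!, …, M !`. If `P` divides `M !`, these are the residues of all
factorials `m !` with `2 ≤ m`. -/
def factorialResidues (P M : ℕ) : List ℕ := factorialResiduesFrom P (M - 1) 2 (2 % P)

theorem factorial_mod_mem_factorialResiduesFrom {P k m i : ℕ} (hmi : m ≤ i) (hi : i < m + k) :
    i ! % P ∈ factorialResiduesFrom P k m (m ! % P) := by
  induction k generalizing m with
  | zero => omega
  | succ k ih =>
    simp only [factorialResiduesFrom, force_eq, mul_mod_mod, ← factorial_succ]
    rcases hmi.eq_or_lt with rfl | hmi
    · exact List.mem_cons_self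
    · exact List.mem_cons_of_mem _ (ih hmi (by omega))

theorem factorial_mod_mem_factorialResidues {P M m : ℕ} (hM : 2 ≤ M) (hPM : P ∣ M !)
    (hm : 2 ≤ m) : m ! % P ∈ factorialResidues P M := by
  have mem : ∀ i, 2 ≤ i → i ≤ M → i ! % P ∈ factorialResidues P M := fun i hi hiM =>
    factorial_mod_mem_factorialResiduesFrom hi (by omega)
  rcases le_total m M with hmM | hMm
  · exact mem m hm hmM
  · rw [mod_eq_zero_of_dvd (hPM.trans (factorial_dvd_factorial hMm)), ← mod_eq_zero_of_dvd hPM]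
    exact mem M hM le_rfl

/-- Whether `c (a + b)` holds for all `a` and `b` in a list. -/
def allSums (c : ℕ → Bool) : List ℕ → Bool
  | [] => true
  | a :: l => ((a :: l).all fun b => c (a + b)) && allSums c l

theorem apply_add_of_allSums {c : ℕ → Bool} {l : List ℕ} (h : allSums c l = true) {a b : ℕ}
    (ha : a ∈ l) (hb : b ∈ l) : c (a + b) = true := by
  induction l with
  | nil => cases ha
  | cons x l ih =>
    obtain ⟨head, tail⟩ := Bool.and_eq_true_iff.1 h
    rw [List.all_eq_true] at head
    rcases List.mem_cons.1 ha with rfl | ha'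
    · exact head b hb
    · rcases List.mem_cons.1 hb with rfl | hb'
      · exact add_comm a b ▸ head a ha
      · exact ih tail ha' hb'

/-- Whether Hensel lifting modulo `P = p ^ K` excludes `n * 2 ^ n + 1 ≡ f` for all `n < N`. The
number `f` is at most `2 * P`, being a sum of two residues. -/
def excludes (o p K N P f : ℕ) : Bool :=
  force (2 * P + 1 - f) (noSolutionBelow 2 o p P N (liftingTable p P K 1 (2 ^ o)))

/-- Whether `n * 2 ^ n + 1 ≡ m !` modulo `p ^ K` is excluded for all `n < N` and `2 ≤ m`. -/
def excludesFactorials (o p K N M : ℕ) : Bool :=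
  force (p ^ K) fun P => force N fun N => (factorialResidues P M).all (excludes o p K N P)

/-- Whether `n * 2 ^ n + 1 ≡ m₁ ! + m₂ !` modulo `p ^ K` is excluded for all `n < N` and `2 ≤ m₁`,
`2 ≤ m₂`. -/
def excludesSums (o p K N M : ℕ) : Bool :=
  force (p ^ K) fun P => force N fun N => allSums (excludes o p K N P) (factorialResidues P M)

/-- Whether `f + s ≢ 1` modulo `P` for all `1 < s ≤ Q`. -/
def avoids (P Q f : ℕ) : Bool := Nat.ble (f % P + Q) P

theorem not_dvd_of_avoids {P Q f s : ℕ} (h : avoids P Q f = true) (hs : 1 < s) (hsQ : s ≤ Q) :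
    ¬ P ∣ f + (s - 1) := fun hdvd => by
  have hle : f % P + Q ≤ P := Nat.le_of_ble_eq_true h
  have hdvd' : P ∣ f % P + (s - 1) :=
    (((f.mod_modEq P).add_right (s - 1)).dvd_iff dvd_rfl).2 hdvd
  have := Nat.le_of_dvd (by omega) hdvd'
  omega

/-- `forceMap f l` is `l.map f`, but the kernel evaluates the entries to numerals. -/
def forceMap {α : Type*} (f : α → ℕ) : List α → List ℕ
  | [] => []
  | a :: l => force (f a) fun b => b :: forceMap f l

theorem forceMap_eq {α : Type*} (f : α → ℕ) (l : List α) : forceMap f l = l.map f := by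
  induction l with
  | nil => rfl
  | cons a l ih => rw [forceMap, force_eq, ih, List.map_cons]

/-- The numbers `2 ! / 2 ^ c, …, M ! / 2 ^ c` modulo `2 ^ b`. The kernel hashes numerals by their
last 64 bits, so that computing with many multiples of `2 ^ 64` would be slow. -/
def shiftedFactorialResidues (b c M : ℕ) : List ℕ :=
  forceMap (· / 2 ^ c) (factorialResidues (2 ^ (c + b)) M)

theorem not_dvd_of_avoids_div {B C Q x y s : ℕ} (hC : 0 < C)
    (h : avoids B Q (x / C + y / C) = true) (hs : 1 < s) (hsQ : s + 2 * C ≤ C * Q) :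
    ¬ C * B ∣ x + y + (s - 1) := fun hdvd => by
  set e := x % C + y % C + (s - 1) with he
  have eq : x + y + (s - 1) = C * (x / C + y / C) + e := by
    linear_combination -(Nat.div_add_mod x C) - Nat.div_add_mod y C - he
  rw [eq] at hdvd
  obtain ⟨z, hz⟩ : C ∣ e := (Nat.dvd_add_right (dvd_mul_right ..)).1 ((dvd_mul_right ..).trans hdvd)
  rw [hz, ← mul_add] at hdvd
  have hzQ : z < Q := by
    refine lt_of_mul_lt_mul_left' (a := C) ?_
    have := x.mod_lt hC
    have := y.mod_lt hC
    omega
  have hz₀ : 0 < z := Nat.pos_of_ne_zero fun h₀ => by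
    rw [h₀] at hz
    omega
  exact not_dvd_of_avoids h (s := z + 1) (by omega) hzQ (Nat.dvd_of_mul_dvd_mul_left hC hdvd)

namespace IsSolution

variable {n m₁ m₂ s o p K N M : ℕ}

theorem not_pow_dvd_of_excludes (h : IsSolution n m₁ m₂ s) (hp : p.Prime) (ho : 2 ^ o ≡ 1 [MOD p])
    (hop : o.Coprime p) (hc : excludes o p K N (p ^ K) (m₁ ! % p ^ K + m₂ ! % p ^ K) = true)
    (hn : n < N) : ¬ p ^ K ∣ s := fun hs => by
  rw [excludes, force_eq] at hc
  refine not_pow_dvd_of_noSolutionBelow hp ho hop hc hn ?_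
  have hP : 0 < p ^ K := pow_pos hp.pos K
  set P := p ^ K
  set V := 2 * P + 1 - (m₁ ! % P + m₂ ! % P)
  have eq : n * 2 ^ n + V + (m₁ ! % P + m₂ ! % P) = s + (2 * P + (m₁ ! + m₂ !)) := by
    have := mod_lt m₁ ! hP
    have := mod_lt m₂ ! hP
    have := h.eq
    omega
  have residues : m₁ ! % P + m₂ ! % P ≡ m₁ ! + m₂ ! [MOD P] :=
    (mod_modEq _ _).add (mod_modEq _ _)
  have : n * 2 ^ n + V ≡ 0 [MOD P] := by
    refine ModEq.add_right_cancel residues ?_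
    rw [eq, ← add_assoc]
    exact (modEq_zero_iff_dvd.2 (dvd_add hs (dvd_mul_left P 2))).add_right _
  exact modEq_zero_iff_dvd.1 this

theorem not_pow_dvd_of_excludesFactorials (h : IsSolution n m₁ m₂ s) (hp : p.Prime)
    (ho : 2 ^ o ≡ 1 [MOD p]) (hop : o.Coprime p) (hM : 2 ≤ M) (hpM : p ^ K ∣ M !)
    (hc : excludesFactorials o p K N M = true) (hn : n < N) (hm₁ : M ≤ m₁) : ¬ p ^ K ∣ s := by
  rw [excludesFactorials, force_eq, force_eq, List.all_eq_true] at hc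
  refine h.not_pow_dvd_of_excludes hp ho hop ?_ hn
  rw [mod_eq_zero_of_dvd (hpM.trans (factorial_dvd_factorial hm₁)), zero_add]
  exact hc _ (factorial_mod_mem_factorialResidues hM hpM h.two_le)

theorem not_pow_dvd_of_excludesSums (h : IsSolution n m₁ m₂ s) (hp : p.Prime)
    (ho : 2 ^ o ≡ 1 [MOD p]) (hop : o.Coprime p) (hM : 2 ≤ M) (hpM : p ^ K ∣ M !)
    (hc : excludesSums o p K N M = true) (hn : n < N) : ¬ p ^ K ∣ s := by
  rw [excludesSums, force_eq, force_eq] at hc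
  exact h.not_pow_dvd_of_excludes hp ho hop (apply_add_of_allSums hc
    (factorial_mod_mem_factorialResidues hM hpM (h.two_le.trans h.le))
    (factorial_mod_mem_factorialResidues hM hpM h.two_le)) hn

theorem dvd_of_excludesFactorials (h : IsSolution n m₁ m₂ s) {i j k N A B C : ℕ} (hn : n < N)
    (hA : 3 ^ i ∣ A !) (hB : 5 ^ j ∣ B !) (hC : 7 ^ k ∣ C !)
    (h₃ : excludesFactorials 2 3 i N A = true) (h₅ : excludesFactorials 4 5 j N B = true)
    (h₇ : excludesFactorials 3 7 k N C = true) (hA₂ : 2 ≤ A) (hAB : A ≤ B) (hBC : B ≤ C)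
    (hCm₁ : C ≤ m₁) : s ∣ 3 ^ i * 5 ^ j * 7 ^ k :=
  h.dvd_of_not_pow_dvd
    (h.not_pow_dvd_of_excludesFactorials (o := 2) prime_three (by decide) (by decide) hA₂ hA h₃ hn
      (by omega))
    (h.not_pow_dvd_of_excludesFactorials (o := 4) prime_five (by decide) (by decide) (by omega) hB
      h₅ hn (by omega))
    (h.not_pow_dvd_of_excludesFactorials (o := 3) (by norm_num) (by decide) (by decide) (by omega)
      hC h₇ hn hCm₁)

theorem dvd_of_excludesSums (h : IsSolution n m₁ m₂ s) {i j k N A B C : ℕ} (hn : n < N)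
    (hA : 3 ^ i ∣ A !) (hB : 5 ^ j ∣ B !) (hC : 7 ^ k ∣ C !)
    (h₃ : excludesSums 2 3 i N A = true) (h₅ : excludesSums 4 5 j N B = true)
    (h₇ : excludesSums 3 7 k N C = true) (hA₂ : 2 ≤ A) (hAB : A ≤ B) (hBC : B ≤ C) :
    s ∣ 3 ^ i * 5 ^ j * 7 ^ k :=
  h.dvd_of_not_pow_dvd
    (h.not_pow_dvd_of_excludesSums (o := 2) prime_three (by decide) (by decide) hA₂ hA h₃ hn)
    (h.not_pow_dvd_of_excludesSums (o := 4) prime_five (by decide) (by decide) (by omega) hB h₅ hn)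
    (h.not_pow_dvd_of_excludesSums (o := 3) (by norm_num) (by decide) (by decide) (by omega) hC h₇
      hn)

theorem fst_lt_of_avoids (h : IsSolution n m₁ m₂ s) {b Q : ℕ} (hM : 2 ≤ M) (hbM : 2 ^ b ∣ M !)
    (hc : (factorialResidues (2 ^ b) M).all (avoids (2 ^ b) Q) = true) (hsQ : s ≤ Q)
    (hb : b ≤ n) : m₁ < M := by
  by_contra! hm₁
  have hdvd := h.two_pow_dvd hb
  rw [add_assoc, Nat.dvd_add_right (hbM.trans (factorial_dvd_factorial hm₁))] at hdvd
  have hc' := List.all_eq_true.1 hc _ (factorial_mod_mem_factorialResidues hM hbM h.two_le)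
  exact not_dvd_of_avoids hc' h.one_lt hsQ
    ((((mod_modEq _ _).add_right (s - 1)).dvd_iff dvd_rfl).2 hdvd)

theorem lt_of_avoids (h : IsSolution n m₁ m₂ s) {b c Q : ℕ} (hM : 2 ≤ M)
    (hM_dvd : 2 ^ (c + b) ∣ M !)
    (hc : allSums (avoids (2 ^ b) Q) (shiftedFactorialResidues b c M) = true)
    (hsQ : s + 2 * 2 ^ c ≤ 2 ^ c * Q) : n < c + b := by
  by_contra! hn
  have mem : ∀ m, 2 ≤ m → m ! % 2 ^ (c + b) / 2 ^ c ∈ shiftedFactorialResidues b c M :=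
    fun m hm => by
      rw [shiftedFactorialResidues, forceMap_eq]
      exact List.mem_map_of_mem (factorial_mod_mem_factorialResidues hM hM_dvd hm)
  have hc' := apply_add_of_allSums hc (mem m₁ (h.two_le.trans h.le)) (mem m₂ h.two_le)
  refine not_dvd_of_avoids_div (Nat.two_pow_pos c) hc' h.one_lt hsQ ?_
  rw [← pow_add]
  exact ((((mod_modEq _ _).add (mod_modEq _ _)).add_right (s - 1)).dvd_iff dvd_rfl).2
    (h.two_pow_dvd hn)

end IsSolution

end FactorialResidues

section Computation

open Nat

namespace IsSolution

variable {n m₁ m₂ s : ℕ}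

/- The exponents of 3, 5 and 7 below are about the least for which the lifted solutions exceed the
known bound for `n`. The factorials `A !`, `B !`, `C !` are the first divisible by these powers. -/

theorem lt_two_pow_thirtySix (h : IsSolution n m₁ m₂ s) : n < 2 ^ 36 := by
  rcases lt_or_ge n 363 with hn | hn
  · exact hn.trans (by norm_num)
  · refine h.lt_two_pow_of_fst_lt ?_
    by_contra! hm₁
    have hs : s ∣ 3 ^ 73 * 5 ^ 51 * 7 ^ 43 := by
      refine h.dvd_of_excludesFactorials (A := 153) (B := 210) (C := 266) h.lt_two_pow
        ?_ ?_ ?_ ?_ ?_ ?_ ?_ ?_ ?_ (by omega) <;> decide +kernel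
    exact hm₁.not_gt (h.fst_lt_of_avoids (by norm_num) (by decide +kernel) (by decide +kernel)
      (Nat.le_of_dvd (by norm_num) hs) hn)

theorem lt_159 (h : IsSolution n m₁ m₂ s) : n < 159 := by
  have hs : s ∣ 3 ^ 30 * 5 ^ 21 * 7 ^ 18 := by
    refine h.dvd_of_excludesSums (A := 63) (B := 90) (C := 112) h.lt_two_pow_thirtySix
      ?_ ?_ ?_ ?_ ?_ ?_ ?_ ?_ ?_ <;> decide +kernel
  have hs_le : s ≤ 3 ^ 30 * 5 ^ 21 * 7 ^ 18 := Nat.le_of_dvd (by norm_num) hs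
  exact h.lt_of_avoids (b := 60) (c := 99) (Q := 2 ^ 48) (M := 162) (by norm_num)
    (by decide +kernel) (by decide +kernel) (by omega)

theorem dvd_three_pow_mul_five_pow_mul_seven_pow (h : IsSolution n m₁ m₂ s) :
    s ∣ 3 ^ 11 * 5 ^ 8 * 7 ^ 6 := by
  refine h.dvd_of_excludesSums (A := 27) (B := 35) (C := 42) h.lt_159
    ?_ ?_ ?_ ?_ ?_ ?_ ?_ ?_ ?_ <;> decide +kernel

theorem lt_65 (h : IsSolution n m₁ m₂ s) : n < 65 := by
  have hs_le : s ≤ 3 ^ 11 * 5 ^ 8 * 7 ^ 6 :=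
    Nat.le_of_dvd (by norm_num) h.dvd_three_pow_mul_five_pow_mul_seven_pow
  exact h.lt_of_avoids (b := 65) (c := 0) (Q := 2 ^ 53) (M := 68) (by norm_num)
    (by decide +kernel) (by decide +kernel) (by omega)

theorem fst_lt_23 (h : IsSolution n m₁ m₂ s) : m₁ < 23 := by
  by_contra! hm₁
  have hn : n ≤ 64 := le_of_lt_succ h.lt_65
  have : n * 2 ^ n ≤ 64 * 2 ^ 64 := Nat.mul_le_mul hn (Nat.pow_le_pow_right two_pos hn)
  have : 64 * 2 ^ 64 < 23 ! := by decide +kernel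
  have := factorial_le hm₁
  have := h.eq
  have := h.one_lt
  omega

/-- The tuples `(n, m₁, m₂, s)` with `IsSolution n m₁ m₂ s`. -/
def solutions : List (ℕ × ℕ × ℕ × ℕ) :=
  [(2, 2, 2, 5), (3, 2, 2, 21), (4, 4, 3, 35), (5, 4, 2, 135), (5, 5, 3, 35), (7, 6, 2, 175),
    (8, 6, 3, 1323)]

theorem mem_solutions (h : IsSolution n m₁ m₂ s) : (n, m₁, m₂, s) ∈ solutions := by
  have search : ∀ n ∈ List.range 65, ∀ m₁ ∈ List.range 23, ∀ m₂ ∈ List.range (m₁ + 1),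
      2 ≤ m₂ → m₁ ! + m₂ ! < n * 2 ^ n →
        n * 2 ^ n + 1 - (m₁ ! + m₂ !) ∣ 3 ^ 11 * 5 ^ 8 * 7 ^ 6 →
          (n, m₁, m₂, n * 2 ^ n + 1 - (m₁ ! + m₂ !)) ∈ solutions := by
    decide +kernel
  obtain rfl : s = n * 2 ^ n + 1 - (m₁ ! + m₂ !) := by
    have := h.eq
    omega
  have := h.one_lt
  exact search n (List.mem_range.2 h.lt_65) m₁ (List.mem_range.2 h.fst_lt_23) m₂
    (List.mem_range.2 (lt_succ_of_le h.le)) h.two_le (by omega)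
    h.dvd_three_pow_mul_five_pow_mul_seven_pow

end IsSolution

end Computation

/-- Theorem 3 (non-degenerate solutions): all non-degenerate solutions of
`C_n = m₁! + m₂! + s` with `C_n = n·2^n + 1`, `m₁ ≥ m₂ ≥ 1` and `s` a positive integer
whose prime factors lie in `{2, 3, 5, 7}` are the seven listed tuples. Non-degeneracy
means that none of `m₁!`, `m₂!`, `m₁! + m₂!` equals `n·2^n` or `1`. -/
theorem cullen_two_factorials_S_unit_nondegenerate
    (n m₁ m₂ s : ℕ) (hn : 0 < n) (hm₁ : 0 < m₁) (hm₂ : 0 < m₂) (hm : m₂ ≤ m₁)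
    (hs : 0 < s) (hsP : ∀ p, p.Prime → p ∣ s → p ∈ ({2, 3, 5, 7} : Finset ℕ))
    (heq : n * 2 ^ n + 1 = Nat.factorial m₁ + Nat.factorial m₂ + s)
    (hnd₁ : Nat.factorial m₁ ≠ n * 2 ^ n) (hnd₁' : Nat.factorial m₁ ≠ 1)
    (hnd₂ : Nat.factorial m₂ ≠ n * 2 ^ n) (hnd₂' : Nat.factorial m₂ ≠ 1)
    (hnd₃ : Nat.factorial m₁ + Nat.factorial m₂ ≠ n * 2 ^ n)
    (hnd₃' : Nat.factorial m₁ + Nat.factorial m₂ ≠ 1) :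
    (n, m₁, m₂, s) ∈ ({(2, 2, 2, 5), (3, 2, 2, 21), (4, 4, 3, 35), (5, 4, 2, 135),
      (5, 5, 3, 35), (7, 6, 2, 175), (8, 6, 3, 1323)} : Set (ℕ × ℕ × ℕ × ℕ)) := by
  have two_le : 2 ≤ m₂ := by
    by_contra! hlt
    exact hnd₂' (Nat.factorial_eq_one.2 (by omega))
  have odd : ¬ 2 ∣ s := by
    have hn₂ : 2 ∣ n * 2 ^ n := (dvd_pow_self 2 hn.ne').mul_left n
    have hm₁₂ : 2 ∣ m₁.factorial := Nat.dvd_factorial two_pos (two_le.trans hm)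
    have hm₂₂ : 2 ∣ m₂.factorial := Nat.dvd_factorial two_pos two_le
    omega
  have primeFactors_subset : s.primeFactors ⊆ {3, 5, 7} := fun p hp => by
    obtain ⟨hp, hps, -⟩ := Nat.mem_primeFactors.1 hp
    refine (Finset.mem_insert.1 (hsP p hp hps)).resolve_left ?_
    rintro rfl
    exact odd hps
  have h : IsSolution n m₁ m₂ s := ⟨hm, two_le, by omega, primeFactors_subset, heq⟩
  simpa [IsSolution.solutions] using h.mem_solutions
end

section
/- Let C_n = n·2^n + 1 and let S denote the set of positive integers all of whose prime factors lie in {2, 3, 5, 7}. Suppose n, m₁, m₂ are positive integers with m₁ ≥ m₂, s ∈ S, n < 10^66, and C_n = m₁! + m₂! + s, and suppose the solution is degenerate, i.e., at least one of the three quantities m₁!, m₂!, m₁! + m₂! equals n·2^n or equals 1. If it is not the case that m₂ = 1, m₁ > 10⁴ and C_n ≤ (m₁!)² hold simultaneously, then (n, m₁, m₂, s) is one of the twelve tuples (1, 1, 1, 1), (2, 1, 1, 7), (2, 2, 1, 6), (2, 3, 1, 2), (2, 3, 2, 1), (3, 3, 1, 18), (4, 1, 1, 63), (4, 4, 1, 40),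 (5, 5, 1, 40), (6, 3, 1, 378), (6, 4, 1, 360), (9, 6, 1, 3888). -/
/-!
In a degenerate solution either `m₁! + m₂! = n * 2 ^ n`, where `2 ^ n` divides `(m₂ + 2)!` and
everything is small, or `m₂ = 1` and `m₁! + s = n * 2 ^ n`. Write `m` for `m₁`. As `v₂(m!) < n`,
the odd parts `o` of `m!` and `u = 3 ^ a * 5 ^ b * 7 ^ c` of `s` satisfy
`o + u = n * 2 ^ (n - v₂(m!))`, which is divisible by `2 ^ (n - m)`.

If `2 ^ 720` divides `o + u`, then the 2-adic logarithm of `o` is congruent to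
`a log 3 + b log 5 + c log 7` modulo `2 ^ 720`, where `a + b + c < 2 n`. Some multiplier makes the
three logarithms simultaneously small modulo `2 ^ 720`, but a computation for `m < 512` shows that
it does not make the logarithm of `o` small. For `m < 11` this has to be modified, because `o` is
itself a product of powers of 3, 5 and 7; there three independent multipliers show that `o = u`.
Hence `n < m + 720` when `m < 512`, whereas the growth of `m!` gives `n > m + 720` when `512 ≤ m`.

As soon as `m!` is divisible by powers of 3, 5 and 7 exceeding `n`, the number `u` divides `n`, so
that `u` is small as well. For `32 ≤ m ≤ 10 ^ 4` a high power of 2 would divide `o + u`, which is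
refuted by computing `o` modulo that power; for larger `m` it gives `n * 2 ^ n < m! ^ 2`. The
remaining range `m < 32`, `n < 752` is searched.
-/

open scoped Nat

set_option exponentiation.threshold 1500

/-! ### Runs of a recursion with a check at each step -/

/-- `checkedRun P g k m x` performs the `2 ^ k` steps `(m, x) ↦ (m + 1, g m x)` and returns the
final second component, or `0` if `P` fails at one of the states or one of the values is `0`.
Splitting a run into two halves keeps the recursion shallow, and the match forces the state in
between to be evaluated; this makes long runs feasible in the kernel. -/
def checkedRun (P : ℕ → ℕ → Prop) [DecidableRel P] (g : ℕ → ℕ → ℕ) : ℕ → ℕ → ℕ → ℕ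
  | 0, m, x => if P m x then g m x else 0
  | k + 1, m, x =>
    match checkedRun P g k m x with
    | 0 => 0
    | y + 1 => checkedRun P g k (m + 2 ^ k) (y + 1)

theorem checkedRun_succ (P : ℕ → ℕ → Prop) [DecidableRel P] (g : ℕ → ℕ → ℕ) {k m x : ℕ}
    (h : checkedRun P g k m x ≠ 0) :
    checkedRun P g (k + 1) m x = checkedRun P g k (m + 2 ^ k) (checkedRun P g k m x) := by
  obtain ⟨y, hy⟩ := Nat.exists_eq_succ_of_ne_zero h
  rw [checkedRun, hy]

theorem checkedRun_spec {P : ℕ → ℕ → Prop} [DecidableRel P] {g : ℕ → ℕ → ℕ} {e : ℕ → ℕ}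
    (he : ∀ m, g m (e m) = e (m + 1)) {k m : ℕ} (h : checkedRun P g k m (e m) ≠ 0) :
    (∀ j, m ≤ j → j < m + 2 ^ k → P j (e j)) ∧ checkedRun P g k m (e m) = e (m + 2 ^ k) := by
  induction k generalizing m with
  | zero =>
    rw [checkedRun] at h ⊢
    split_ifs at h ⊢ with hP
    · refine ⟨fun j hmj hjm ↦ ?_, he m⟩
      obtain rfl : j = m := by omega
      exact hP
    · exact absurd rfl h
  | succ k ih =>
    have hfirst : checkedRun P g k m (e m) ≠ 0 := fun h0 ↦ h (by rw [checkedRun, h0])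
    obtain ⟨hP₁, hend₁⟩ := ih hfirst
    rw [checkedRun_succ P g hfirst, hend₁] at h ⊢
    obtain ⟨hP₂, hend₂⟩ := ih h
    rw [pow_succ, mul_two, ← add_assoc]
    refine ⟨fun j hmj hjm ↦ ?_, hend₂⟩
    rcases lt_or_ge j (m + 2 ^ k) with hj | hj
    · exact hP₁ j hmj hj
    · exact hP₂ j hj hjm

/-! ### Odd parts of factorials -/

theorem gcd_prime_pow_self {p : ℕ} (hp : p.Prime) (n : ℕ) : n.gcd (p ^ n) = ordProj[p] n := by
  obtain rfl | hn := eq_or_ne n 0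
  · simp
  refine Nat.dvd_antisymm ?_ (Nat.dvd_gcd (Nat.ordProj_dvd n p)
    (pow_dvd_pow p (Nat.factorization_lt p hn).le))
  obtain ⟨j, -, hj⟩ := (Nat.dvd_prime_pow hp).1 (Nat.gcd_dvd_right n (p ^ n))
  have hjn : p ^ j ∣ n := hj ▸ Nat.gcd_dvd_left n (p ^ n)
  exact hj ▸ pow_dvd_pow p ((hp.pow_dvd_iff_le_factorization hn).1 hjn)

theorem odd_ordCompl_two {n : ℕ} (hn : n ≠ 0) : Odd (ordCompl[2] n) := by
  rw [← Nat.not_even_iff_odd, even_iff_two_dvd]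
  exact Nat.not_dvd_ordCompl Nat.prime_two hn

theorem factorization_two_factorial_le (m : ℕ) : (m !).factorization 2 ≤ m := by
  rw [Nat.factorization_def _ Nat.prime_two]
  simpa using (sub_one_mul_padicValNat_factorial (p := 2) m).trans_le (Nat.sub_le _ _)

/-- Computes the odd part of `(m + 1)!` modulo `2 ^ K` from the odd part `r` of `m !`. -/
def oddFactorialStep (K m r : ℕ) : ℕ := r * ((m + 1) / (m + 1).gcd (2 ^ (m + 1))) % 2 ^ K

theorem oddFactorialStep_ordCompl_factorial (K m : ℕ) :
    oddFactorialStep K m (ordCompl[2] m ! % 2 ^ K) = ordCompl[2] (m + 1)! % 2 ^ K := by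
  rw [oddFactorialStep, gcd_prime_pow_self Nat.prime_two, Nat.mod_mul_mod,
    Nat.factorial_succ, Nat.ordCompl_mul, mul_comm]

theorem forall_ordCompl_factorial_mod {P : ℕ → ℕ → Prop} [DecidableRel P] {K k : ℕ} (hK : K ≠ 0)
    (h : checkedRun P (oddFactorialStep K) k 0 1 ≠ 0) {m : ℕ} (hm : m < 2 ^ k) :
    P m (ordCompl[2] m ! % 2 ^ K) := by
  have hstart : ordCompl[2] 0! % 2 ^ K = 1 := by
    simpa using Nat.mod_eq_of_lt (Nat.one_lt_two_pow hK)
  refine (checkedRun_spec (e := fun m ↦ ordCompl[2] m ! % 2 ^ K)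
    (oddFactorialStep_ordCompl_factorial K) ?_).1 m m.zero_le (by simpa using hm)
  rwa [hstart]

/-! ### The 2-adic logarithm modulo a power of two -/

/-- `l` is the 2-adic logarithm of `x` modulo `2 ^ N`: as `x ^ 2 ^ N = exp (2 ^ N * log x)`, it can
be read off from this power modulo `2 ^ (2 * N)`. -/
def IsTwoAdicLog (N : ℕ) (x l : ℤ) : Prop := x ^ 2 ^ N ≡ 1 + 2 ^ N * l [ZMOD 2 ^ (2 * N)]

namespace IsTwoAdicLog

variable {N : ℕ} {x y k l : ℤ}

theorem one (N : ℕ) : IsTwoAdicLog N 1 0 := by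
  simp [IsTwoAdicLog, Int.ModEq.refl]

theorem mul (hx : IsTwoAdicLog N x k) (hy : IsTwoAdicLog N y l) :
    IsTwoAdicLog N (x * y) (k + l) := by
  rw [IsTwoAdicLog, mul_pow]
  refine (Int.ModEq.mul hx hy).trans (Int.modEq_iff_dvd.2 ⟨-(k * l), ?_⟩)
  ring

theorem pow (hx : IsTwoAdicLog N x l) (e : ℕ) : IsTwoAdicLog N (x ^ e) (e * l) := by
  induction e with
  | zero => simpa using one N
  | succ e ih => simpa [pow_succ, add_mul] using ih.mul hx

theorem prod_pow {ι : Type*} [Fintype ι] {x l : ι → ℤ} (h : ∀ i, IsTwoAdicLog N (x i) (l i))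
    (e : ι → ℕ) : IsTwoAdicLog N (∏ i, x i ^ e i) (∑ i, e i * l i) := by
  classical
  induction (Finset.univ : Finset ι) using Finset.induction_on with
  | empty => simpa using one N
  | insert i s hi ih =>
    rw [Finset.prod_insert hi, Finset.sum_insert hi]
    exact ((h i).pow (e i)).mul ih

theorem unique (hk : IsTwoAdicLog N x k) (hl : IsTwoAdicLog N x l) : k ≡ l [ZMOD 2 ^ N] := by
  obtain ⟨c, hc⟩ := (Int.ModEq.trans hk.symm hl).dvd
  refine Int.modEq_iff_dvd.2 ⟨c, mul_left_cancel₀ (pow_ne_zero N (two_ne_zero (α := ℤ))) ?_⟩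
  rw [two_mul, pow_add] at hc
  linear_combination hc

end IsTwoAdicLog

theorem two_pow_add_dvd_pow_sub_pow {x y : ℤ} (hx : Odd x) (hy : Odd y) {N : ℕ}
    (h : (2 : ℤ) ^ N ∣ x - y) (j : ℕ) : (2 : ℤ) ^ (N + j) ∣ x ^ 2 ^ j - y ^ 2 ^ j := by
  induction j with
  | zero => simpa using h
  | succ j ih =>
    have hsum : (2 : ℤ) ∣ x ^ 2 ^ j + y ^ 2 ^ j := (hx.pow.add_odd hy.pow).two_dvd
    rw [← add_assoc, pow_succ, pow_succ 2 j, pow_mul, pow_mul, sq_sub_sq, mul_comm]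
    exact mul_dvd_mul hsum ih

theorem IsTwoAdicLog.of_dvd_add {N : ℕ} (hN : N ≠ 0) {x y l : ℤ} (hx : Odd x) (hy : Odd y)
    (h : (2 : ℤ) ^ N ∣ x + y) (hl : IsTwoAdicLog N y l) : IsTwoAdicLog N x l := by
  have hpow := two_pow_add_dvd_pow_sub_pow hx hy.neg (by simpa using h) N
  rw [Even.neg_pow ((Nat.even_pow' hN).2 even_two), ← two_mul] at hpow
  exact (Int.modEq_iff_dvd.2 hpow).symm.trans hl

/-- The 2-adic logarithm of an odd number modulo `2 ^ (4 * J)`, see `isTwoAdicLog_twoAdicLog`; the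
power defining it is computed by `J` successive sixteenth powers. -/
def twoAdicLog (J x : ℕ) : ℕ := (fun y ↦ y ^ 16 % 2 ^ (8 * J))^[J] x / 2 ^ (4 * J)

theorem iterate_pow_mod_modEq (a M j x : ℕ) :
    (fun y ↦ y ^ a % M)^[j] x ≡ x ^ a ^ j [MOD M] := by
  induction j with
  | zero => simp [Nat.ModEq.refl]
  | succ j ih =>
    rw [Function.iterate_succ_apply', pow_succ, pow_mul]
    exact (Nat.mod_modEq _ _).trans (ih.pow a)

theorem isTwoAdicLog_twoAdicLog (J : ℕ) {x : ℕ} (hx : Odd x) :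
    IsTwoAdicLog (4 * J) x (twoAdicLog J x) := by
  obtain rfl | hJ := eq_or_ne J 0
  · simp [IsTwoAdicLog, Int.modEq_one]
  set y := (fun y ↦ y ^ 16 % 2 ^ (8 * J))^[J] x with hy
  have hyx : y ≡ x ^ 2 ^ (4 * J) [MOD 2 ^ (2 * (4 * J))] := by
    have := iterate_pow_mod_modEq 16 (2 ^ (8 * J)) J x
    rwa [show 16 ^ J = 2 ^ (4 * J) by rw [pow_mul]; rfl, ← hy,
      show 8 * J = 2 * (4 * J) by ring] at this
  have hx1 : x ^ 2 ^ (4 * J) ≡ 1 [MOD 2 ^ (4 * J)] := by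
    have := two_pow_add_dvd_pow_sub_pow (x := x) (N := 0) (mod_cast hx) odd_one (by simp) (4 * J)
    rw [← Int.natCast_modEq_iff]
    push_cast
    simpa using (Int.modEq_iff_dvd.2 this).symm
  have hy1 : y % 2 ^ (4 * J) = 1 := by
    have := (hyx.of_dvd (pow_dvd_pow 2 (by omega))).trans hx1
    rwa [Nat.ModEq, Nat.mod_eq_of_lt (Nat.one_lt_two_pow (by omega))] at this
  have hsplit : 1 + 2 ^ (4 * J) * twoAdicLog J x = y := hy1 ▸ Nat.mod_add_div y (2 ^ (4 * J))
  rw [IsTwoAdicLog]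
  exact_mod_cast (Int.natCast_modEq_iff.2 (hsplit ▸ hyx)).symm

/-! ### Linear forms in 2-adic logarithms -/

section LinearForms

variable {ι : Type*} [Fintype ι] {N : ℕ} {x l : ι → ℤ}

theorem odd_prod_pow (hx : ∀ i, Odd (x i)) (e : ι → ℕ) : Odd (∏ i, x i ^ e i) :=
  Finset.prod_induction _ Odd (fun _ _ ↦ Odd.mul) odd_one fun i _ ↦ (hx i).pow

theorem sum_mul_modEq_of_two_pow_dvd_add_prod_pow (hN : N ≠ 0) (hx : ∀ i, Odd (x i))
    (hl : ∀ i, IsTwoAdicLog N (x i) (l i)) {c : ℤ} {w : ι → ℤ}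
    (hw : ∀ i, c * l i ≡ w i [ZMOD 2 ^ N]) {y k : ℤ} (hy : Odd y) (hk : IsTwoAdicLog N y k)
    {e : ι → ℕ} (hdvd : 2 ^ N ∣ y + ∏ i, x i ^ e i) :
    ∑ i, e i * w i ≡ c * k [ZMOD 2 ^ N] := by
  have hodd : Odd (∏ i, x i ^ e i) := odd_prod_pow hx _
  have hk' := (IsTwoAdicLog.prod_pow hl e).of_dvd_add hN hy hodd hdvd
  calc ∑ i, e i * w i ≡ ∑ i, e i * (c * l i) [ZMOD 2 ^ N] :=
        Int.ModEq.sum fun i _ ↦ (hw i).symm.mul_left _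
    _ = c * ∑ i, e i * l i := by
        rw [Finset.mul_sum]
        exact Finset.sum_congr rfl fun i _ ↦ mul_left_comm _ _ _
    _ ≡ c * k [ZMOD 2 ^ N] := (hk'.unique hk).mul_left c

theorem abs_sum_mul_le {w : ι → ℤ} {W : ℤ} (hW : ∀ i, |w i| ≤ W) (a : ι → ℤ) :
    |∑ i, a i * w i| ≤ (∑ i, |a i|) * W := by
  rw [Finset.sum_mul]
  refine (Finset.abs_sum_le_sum_abs _ _).trans (Finset.sum_le_sum fun i _ ↦ ?_)
  rw [abs_mul]
  exact mul_le_mul_of_nonneg_left (hW i) (abs_nonneg _)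

theorem not_modEq_of_two_mul_lt_emod {a z E P : ℤ} (hP : 0 ≤ P) (hz : |z| ≤ E)
    (ha : 2 * E < (a + E) % P) : ¬ z ≡ a [ZMOD P] := by
  intro h
  obtain ⟨hlow, hhigh⟩ := abs_le.1 hz
  have hmod : (z + E) % P = (a + E) % P := h.add_right E
  have hquot : 0 ≤ P * ((z + E) / P) := mul_nonneg hP (Int.ediv_nonneg (by linarith) hP)
  linarith [Int.emod_add_mul_ediv (z + E) P]

theorem not_two_pow_dvd_add_prod_pow (hN : N ≠ 0) (hx : ∀ i, Odd (x i))
    (hl : ∀ i, IsTwoAdicLog N (x i) (l i)) {c W : ℤ} {w : ι → ℤ}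
    (hw : ∀ i, c * l i ≡ w i [ZMOD 2 ^ N]) (hW : ∀ i, |w i| ≤ W) {y k E : ℤ} (hy : Odd y)
    (hk : IsTwoAdicLog N y k) {e : ι → ℕ} (he : (∑ i, (e i : ℤ)) * W ≤ E)
    (hE : 2 * E < (c * k + E) % 2 ^ N) : ¬ 2 ^ N ∣ y + ∏ i, x i ^ e i := fun hdvd ↦
  not_modEq_of_two_mul_lt_emod (by positivity)
    ((abs_sum_mul_le hW _).trans (by simpa only [Nat.abs_cast])) hE
    (sum_mul_modEq_of_two_pow_dvd_add_prod_pow hN hx hl hw hy hk hdvd)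

theorem not_two_pow_dvd_prod_pow_add_prod_pow [DecidableEq ι] (hN : 2 ≤ N) (hx : ∀ i, Odd (x i))
    (hl : ∀ i, IsTwoAdicLog N (x i) (l i)) {c : ι → ℤ} {W : ℤ} {A : Matrix ι ι ℤ}
    (hA : ∀ j i, c j * l i ≡ A j i [ZMOD 2 ^ N]) (hW : ∀ j i, |A j i| ≤ W) (hdet : A.det ≠ 0)
    {e e' : ι → ℕ} (he : (∑ i, (e i + e' i : ℤ)) * W < 2 ^ N) :
    ¬ 2 ^ N ∣ ∏ i, x i ^ e' i + ∏ i, x i ^ e i := by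
  intro hdvd
  have hodd : Odd (∏ i, x i ^ e' i) := odd_prod_pow hx _
  have hrow : ∀ j, ∑ i, A j i * (e i - e' i : ℤ) = 0 := by
    intro j
    have hcongr : ∑ i, e i * A j i ≡ ∑ i, e' i * A j i [ZMOD 2 ^ N] := by
      have hlog := IsTwoAdicLog.prod_pow hl e'
      refine (sum_mul_modEq_of_two_pow_dvd_add_prod_pow (by omega) hx hl (hA j) hodd hlog
        hdvd).trans ?_
      rw [Finset.mul_sum]
      exact Int.ModEq.sum fun i _ ↦ by
        simpa only [mul_left_comm] using (hA j i).mul_left (e' i : ℤ)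
    refine Int.eq_zero_of_abs_lt_dvd (m := 2 ^ N) ?_ (lt_of_le_of_lt ?_ he)
    · simpa only [mul_comm (A j _), sub_mul, Finset.sum_sub_distrib] using hcongr.symm.dvd
    · simp only [mul_comm (A j _)]
      refine (abs_sum_mul_le (hW j) _).trans ?_
      have hW0 : 0 ≤ W := (abs_nonneg _).trans (hW j j)
      gcongr with i
      exact abs_le.2 ⟨by linarith [Int.natCast_nonneg (e i)],
        by linarith [Int.natCast_nonneg (e' i)]⟩
  have heq : e = e' := funext fun i ↦ by
    have := congrFun (Matrix.eq_zero_of_mulVec_eq_zero hdet (funext hrow)) i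
    simpa [sub_eq_zero] using this
  rw [heq] at hdvd
  have hfour : (2 : ℤ) ^ 2 ∣ ∏ i, x i ^ e' i + ∏ i, x i ^ e' i := (pow_dvd_pow 2 hN).trans hdvd
  obtain ⟨a, ha⟩ := hodd
  omega

end LinearForms

/-! ### Numbers with prescribed prime factors -/

theorem dvd_pow_of_lt_two_pow {s a k : ℕ} (hs : s ≠ 0) (hlt : s < 2 ^ k)
    (hp : ∀ p, p.Prime → p ∣ s → p ∣ a) : s ∣ a ^ k := by
  refine (Nat.dvd_iff_prime_pow_dvd_dvd _ _).2 fun p j hpp hj ↦ ?_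
  obtain rfl | hj0 := eq_or_ne j 0
  · simp
  have hjk : j ≤ k := by
    refine (Nat.pow_lt_pow_iff_right one_lt_two).1 ?_ |>.le
    calc 2 ^ j ≤ p ^ j := Nat.pow_le_pow_left hpp.two_le j
      _ ≤ s := Nat.le_of_dvd (Nat.pos_of_ne_zero hs) hj
      _ < 2 ^ k := hlt
  exact (pow_dvd_pow p hjk).trans (pow_dvd_pow_of_dvd (hp p hpp ((dvd_pow_self p hj0).trans hj)) k)

theorem dvd_of_coprime_of_add_eq_mul {d c n a s : ℕ} (hdc : d.Coprime c) (hds : d ∣ s)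
    (h : a + s = n * c) (ha : ∀ p, p.Prime → p ∣ d → ∃ t, p ^ t ∣ a ∧ n < p ^ t) : d ∣ n := by
  obtain rfl | hn := eq_or_ne n 0
  · simp
  refine (Nat.dvd_iff_prime_pow_dvd_dvd _ _).2 fun p j hp hj ↦ ?_
  obtain rfl | hj0 := eq_or_ne j 0
  · simp
  obtain ⟨t, hta, hnt⟩ := ha p hp ((dvd_pow_self p hj0).trans hj)
  have hmin : p ^ min j t ∣ n := by
    have hsum : p ^ min j t ∣ a + s := dvd_add ((pow_dvd_pow p (min_le_right j t)).trans hta)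
      ((pow_dvd_pow p (min_le_left j t)).trans (hj.trans hds))
    have hcop : (p ^ min j t).Coprime c :=
      hdc.coprime_dvd_left ((pow_dvd_pow p (min_le_left j t)).trans hj)
    exact hcop.dvd_of_dvd_mul_right (h ▸ hsum)
  have hlt : min j t < t := (Nat.pow_lt_pow_iff_right hp.one_lt).1
    ((Nat.le_of_dvd (Nat.pos_of_ne_zero hn) hmin).trans_lt hnt)
  rwa [min_eq_left (by omega)] at hmin

theorem ordCompl_mem_factoredNumbers {S : Finset ℕ} {p s : ℕ} (hp : p.Prime)
    (hs : s ∈ Nat.factoredNumbers (insert p S)) : ordCompl[p] s ∈ Nat.factoredNumbers S := by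
  refine Nat.mem_factoredNumbers'.2 fun q hq hqs ↦ ?_
  obtain rfl | hqS := Finset.mem_insert.1
    (Nat.mem_factoredNumbers'.1 hs q hq (hqs.trans (Nat.ordCompl_dvd s p)))
  · exact absurd hqs (Nat.not_dvd_ordCompl hp (Nat.ne_zero_of_mem_factoredNumbers hs))
  · exact hqS

theorem factorial_mem_factoredNumbers {m : ℕ} (hm : m < 11) :
    m ! ∈ Nat.factoredNumbers {2, 3, 5, 7} := by
  refine Nat.mem_factoredNumbers'.2 fun p hp hpm ↦ ?_
  have hp11 : p < 11 := (hp.dvd_factorial.1 hpm).trans_lt hm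
  clear hpm
  revert hp
  decide +revert

/-- The odd primes of the set `𝒫 = {2, 3, 5, 7}`. -/
def oddPrime : Fin 3 → ℕ := ![3, 5, 7]

theorem odd_oddPrime : ∀ i, Odd (oddPrime i) := by decide

theorem exists_eq_prod_oddPrime_pow {t b : ℕ} (ht : t ∈ Nat.factoredNumbers {3, 5, 7})
    (hb : t < 2 ^ b) : ∃ e : Fin 3 → ℕ, t = ∏ i, oddPrime i ^ e i ∧ ∑ i, e i < b := by
  have hprod : ∏ i, oddPrime i ^ t.factorization (oddPrime i) = t := by
    conv_rhs => rw [← Nat.prod_factorization_pow_eq_self (Nat.ne_zero_of_mem_factoredNumbers ht)]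
    rw [Finsupp.prod_of_support_subset (s := {3, 5, 7}) _
      (Nat.primeFactors_subset_of_mem_factoredNumbers ht) _ fun _ _ ↦ pow_zero _]
    simp [oddPrime, Fin.prod_univ_three, mul_assoc]
  refine ⟨fun i ↦ t.factorization (oddPrime i), hprod.symm,
    (Nat.pow_lt_pow_iff_right one_lt_two).1 (lt_of_le_of_lt ?_ hb)⟩
  rw [← Finset.prod_pow_eq_pow_sum]
  conv_rhs => rw [← hprod]
  gcongr with i
  revert i
  decide

/-! ### Growth of factorials -/

theorem mul_two_pow_le_factorial_add {k l : ℕ} (hk : 3 ≤ k) (hl : 0 < l)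
    (h : l * 2 ^ l ≤ k !) (i : ℕ) : (l + i) * 2 ^ (l + i) ≤ (k + i)! := by
  induction i with
  | zero => exact h
  | succ i ih =>
    have hfactor : (l + i + 1) * 2 ≤ (k + i + 1) * (l + i) := by nlinarith
    calc (l + (i + 1)) * 2 ^ (l + (i + 1)) = (l + i + 1) * 2 * 2 ^ (l + i) := by ring
      _ ≤ (k + i + 1) * (l + i) * 2 ^ (l + i) := by gcongr
      _ ≤ (k + i + 1) * (k + i)! := by rw [mul_assoc]; gcongr
      _ = (k + (i + 1))! := rfl

theorem add_lt_add_of_factorial_lt {k l m n : ℕ} (hk : 3 ≤ k) (hl : 0 < l) (h : l * 2 ^ l ≤ k !)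
    (hkm : k ≤ m) (hmn : m ! < n * 2 ^ n) : l + m < n + k := by
  by_contra! hle
  obtain ⟨i, rfl⟩ := Nat.exists_eq_add_of_le hkm
  have hmono : n * 2 ^ n ≤ (l + i) * 2 ^ (l + i) := by
    gcongr
    all_goals omega
  exact absurd (hmono.trans (mul_two_pow_le_factorial_add hk hl h i)) hmn.not_ge

theorem factorization_two_factorial_lt_of_factorial_lt {m n : ℕ} (h : m ! < n * 2 ^ n) :
    (m !).factorization 2 < n := by
  by_contra! hle
  have hdvd : 2 ^ n ∣ m ! :=
    (Nat.prime_two.pow_dvd_iff_le_factorization m.factorial_ne_zero).2 hle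
  have hnm : n ≤ m := hle.trans (factorization_two_factorial_le m)
  obtain hm | hm := lt_or_ge m 6
  · interval_cases m <;> interval_cases n <;> simp [Nat.factorial] at h hdvd
  · have := add_lt_add_of_factorial_lt (l := 6) (by simp) (by simp) (by decide) hm h
    omega

/-! ### Odd parts of factorials plus a small odd number -/

theorem not_two_pow_dvd_ordCompl_factorial_add {K k U : ℕ} (hK : K ≠ 0)
    (h : checkedRun (fun _ r ↦ r + U < 2 ^ K) (oddFactorialStep K) k 0 1 ≠ 0) {m u : ℕ}
    (hm : m < 2 ^ k) (hu : 0 < u) (huU : u ≤ U) : ¬ 2 ^ K ∣ ordCompl[2] m ! + u := by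
  intro hdvd
  have hlt := forall_ordCompl_factorial_mod hK h hm
  have hmod : 2 ^ K ∣ ordCompl[2] m ! % 2 ^ K + u := by
    rw [Nat.dvd_iff_mod_eq_zero] at hdvd ⊢
    rwa [Nat.mod_add_mod]
  exact absurd (Nat.le_of_dvd (by omega) hmod) (by omega)

theorem checkedRun_add_lt_two_pow_40_ne_zero :
    checkedRun (fun _ r ↦ r + 880 < 2 ^ 40) (oddFactorialStep 40) 8 0 1 ≠ 0 := by
  decide +kernel

theorem checkedRun_add_lt_two_pow_256_ne_zero :
    checkedRun (fun _ r ↦ r + 10 ^ 66 < 2 ^ 256) (oddFactorialStep 256) 14 0 1 ≠ 0 := by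
  decide +kernel

/-! ### Odd parts of factorials plus a product of powers of 3, 5 and 7 -/

/-- The multipliers were found by lattice reduction: multiplied by each of them, the 2-adic
logarithms of 3, 5 and 7 modulo `2 ^ 720` all become about as small as `2 ^ 480`. -/
def dualMultiplier : Fin 3 → ℕ :=
  ![18223484654452774869232503914887603597791343412132619836054256282305521 * 10 ^ 146 +
      1980939186332267711667864543259326604438491957571177851212454648809242762 * 10 ^ 73 +
      8538018438515950691536773931199085292973012163934495739373281444360648388,
    2722973110059924542989932843047073520845173430607732574872140570538653 * 10 ^ 146 +
      1302387391320447449801130954520120945593462947426642781058589886650451751 * 10 ^ 73 +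
      7006570029782242917923233386383144672556132775075841086204494656935255334,
    40205818600348038065909756043457273583001671981270371030064867784791364 * 10 ^ 146 +
      3589137642217322457386233174681928629139831686631370784208661495961080031 * 10 ^ 73 +
      4696194615309310975383768483073989927570638327718407078102941087830288157]

/-- Row `j` consists of the absolutely least residues modulo `2 ^ 720` of the logarithms of 3, 5
and 7 multiplied by `dualMultiplier j`. -/
def dualMatrix : Matrix (Fin 3) (Fin 3) ℤ :=
  .of fun j i ↦ (dualMultiplier j * twoAdicLog 180 (oddPrime i) : ℤ).bmod (2 ^ 720)

theorem modEq_bmod_two_pow (a : ℤ) (N : ℕ) : a ≡ a.bmod (2 ^ N) [ZMOD 2 ^ N] := by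
  simpa [Int.ModEq] using (Int.bmod_emod (x := a) (m := 2 ^ N)).symm

theorem dualMultiplier_mul_modEq (j i : Fin 3) :
    (dualMultiplier j : ℤ) * twoAdicLog 180 (oddPrime i) ≡ dualMatrix j i [ZMOD 2 ^ 720] := by
  rw [dualMatrix, Matrix.of_apply]
  exact modEq_bmod_two_pow _ 720

theorem abs_dualMatrix_le : ∀ j i, |dualMatrix j i| ≤ 2 ^ 481 := by
  decide +kernel

theorem det_dualMatrix_ne_zero : dualMatrix.det ≠ 0 := by
  rw [Matrix.det_fin_three]
  decide +kernel

theorem isTwoAdicLog_oddPrime (i : Fin 3) :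
    IsTwoAdicLog 720 (oddPrime i) (twoAdicLog 180 (oddPrime i)) :=
  isTwoAdicLog_twoAdicLog 180 (odd_oddPrime i)

/- The sum of the exponents of 3, 5 and 7 is at most `3 * 10 ^ 66`, and the entries of `dualMatrix`
are at most `2 ^ 481`. -/
theorem checkedRun_twoAdicLog_ne_zero :
    checkedRun (fun m r ↦ 11 ≤ m → 2 * (3 * 10 ^ 66 * 2 ^ 481) <
      (dualMultiplier 0 * twoAdicLog 180 r + 3 * 10 ^ 66 * 2 ^ 481) % 2 ^ 720)
      (oddFactorialStep 720) 9 0 1 ≠ 0 := by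
  decide +kernel

theorem not_two_pow_dvd_ordCompl_factorial_add_of_lt_11 {m u n : ℕ} (hm : m < 11)
    (hu : u ∈ Nat.factoredNumbers {3, 5, 7}) (hn : n < 10 ^ 66)
    (hlt : u < 2 ^ (2 * n)) : ¬ 2 ^ 720 ∣ ordCompl[2] m ! + u := by
  obtain ⟨e, rfl, he⟩ := exists_eq_prod_oddPrime_pow hu hlt
  have hfact : ordCompl[2] m ! < 2 ^ 22 :=
    calc ordCompl[2] m ! ≤ m ! := Nat.ordCompl_le _ _
      _ ≤ 10 ! := Nat.factorial_le (by omega)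
      _ < 2 ^ 22 := by decide
  obtain ⟨e', he'eq, he'⟩ := exists_eq_prod_oddPrime_pow
    (ordCompl_mem_factoredNumbers Nat.prime_two (factorial_mem_factoredNumbers hm)) hfact
  have hsum : (∑ i, (e i + e' i : ℤ)) * 2 ^ 481 < 2 ^ 720 := by
    have : (∑ i, (e i + e' i : ℤ)) ≤ 3 * 10 ^ 66 := by
      rw [Finset.sum_add_distrib]
      exact_mod_cast (by omega : ∑ i, e i + ∑ i, e' i ≤ 3 * 10 ^ 66)
    calc (∑ i, (e i + e' i : ℤ)) * 2 ^ 481 ≤ 3 * 10 ^ 66 * 2 ^ 481 := by gcongr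
      _ < 2 ^ 720 := by norm_num
  rw [he'eq]
  exact_mod_cast not_two_pow_dvd_prod_pow_add_prod_pow (by norm_num)
    (fun i ↦ mod_cast odd_oddPrime i) isTwoAdicLog_oddPrime dualMultiplier_mul_modEq
    abs_dualMatrix_le det_dualMatrix_ne_zero hsum

theorem not_two_pow_dvd_ordCompl_factorial_add_of_lt_512 {m u n : ℕ} (hm : m < 512)
    (hu : u ∈ Nat.factoredNumbers {3, 5, 7}) (hn : n < 10 ^ 66)
    (hlt : u < 2 ^ (2 * n)) : ¬ 2 ^ 720 ∣ ordCompl[2] m ! + u := by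
  obtain hm11 | hm11 := lt_or_ge m 11
  · exact not_two_pow_dvd_ordCompl_factorial_add_of_lt_11 hm11 hu hn hlt
  set r := ordCompl[2] m ! % 2 ^ 720 with hr
  have hrodd : Odd r := (odd_ordCompl_two m.factorial_ne_zero).mod_even (by decide)
  have hcheck := forall_ordCompl_factorial_mod (by norm_num) checkedRun_twoAdicLog_ne_zero hm hm11
  obtain ⟨e, rfl, he⟩ := exists_eq_prod_oddPrime_pow hu hlt
  have hsum : (∑ i, (e i : ℤ)) * 2 ^ 481 ≤ 3 * 10 ^ 66 * 2 ^ 481 := by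
    gcongr
    exact_mod_cast (by omega : ∑ i, e i ≤ 3 * 10 ^ 66)
  have hnot : ¬ 2 ^ 720 ∣ r + ∏ i, oddPrime i ^ e i := by
    exact_mod_cast not_two_pow_dvd_add_prod_pow (by norm_num) (fun i ↦ mod_cast odd_oddPrime i)
      isTwoAdicLog_oddPrime (dualMultiplier_mul_modEq 0) (abs_dualMatrix_le 0)
      (mod_cast hrodd) (isTwoAdicLog_twoAdicLog 180 hrodd) hsum (mod_cast hcheck)
  rwa [Nat.dvd_iff_mod_eq_zero, hr, Nat.mod_add_mod, ← Nat.dvd_iff_mod_eq_zero] at hnot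

/-! ### The equation `m ! + s = n * 2 ^ n` -/

section FactorialAddFactored

variable {m n s : ℕ}

theorem ordCompl_factorial_add_ordCompl (hs : s ≠ 0) (h : m ! + s = n * 2 ^ n) :
    ordCompl[2] m ! + ordCompl[2] s = n * 2 ^ (n - (m !).factorization 2) := by
  have hvn : (m !).factorization 2 < n := factorization_two_factorial_lt_of_factorial_lt (by omega)
  have hfact : 2 ^ (m !).factorization 2 * ordCompl[2] m ! = m ! :=
    Nat.ordProj_mul_ordCompl_eq_self _ _
  have hodd := odd_ordCompl_two m.factorial_ne_zero
  set v := (m !).factorization 2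
  set o := m ! / 2 ^ v
  have hpow : 2 ^ n = 2 ^ v * 2 ^ (n - v) := (pow_mul_pow_sub 2 hvn.le).symm
  obtain ⟨u, hu⟩ : 2 ^ v ∣ s := (Nat.dvd_add_right (Dvd.intro o hfact)).1
    (h ▸ (pow_dvd_pow 2 hvn.le).mul_left n)
  have hsum : o + u = n * 2 ^ (n - v) := by
    refine Nat.eq_of_mul_eq_mul_left (pow_pos two_pos v) ?_
    rw [mul_add, hfact, ← hu, h, hpow]
    ring
  have hu_odd : ¬ 2 ∣ u := by
    have heven : 2 ∣ n * 2 ^ (n - v) := (dvd_pow_self 2 (by omega)).mul_left n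
    obtain ⟨a, ha⟩ := hodd
    omega
  rwa [hu, Nat.ordCompl_pow_mul_of_not_dvd v Nat.prime_two hu_odd]

theorem two_pow_dvd_ordCompl_factorial_add_ordCompl (hs : s ≠ 0)
    (h : m ! + s = n * 2 ^ n) {K : ℕ} (hK : m + K ≤ n) :
    2 ^ K ∣ ordCompl[2] m ! + ordCompl[2] s := by
  rw [ordCompl_factorial_add_ordCompl hs h]
  have := factorization_two_factorial_le m
  exact (pow_dvd_pow 2 (by omega)).mul_left n

theorem mul_two_pow_le_factorial_mul (hs : s ≠ 0) (h : m ! + s = n * 2 ^ n) :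
    n * 2 ^ n ≤ m ! * (ordCompl[2] s + 1) := by
  have hvn : (m !).factorization 2 < n := factorization_two_factorial_lt_of_factorial_lt (by omega)
  have hpos := Nat.ordCompl_pos 2 m.factorial_ne_zero
  have hsum := ordCompl_factorial_add_ordCompl hs h
  have hfact : 2 ^ (m !).factorization 2 * ordCompl[2] m ! = m ! :=
    Nat.ordProj_mul_ordCompl_eq_self _ _
  set v := (m !).factorization 2
  calc n * 2 ^ n = 2 ^ v * (n * 2 ^ (n - v)) := by
        rw [← pow_mul_pow_sub 2 hvn.le]
        ring
    _ = 2 ^ v * (m ! / 2 ^ v + ordCompl[2] s) := by rw [hsum]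
    _ ≤ 2 ^ v * (m ! / 2 ^ v * (ordCompl[2] s + 1)) := by
        gcongr
        linarith [Nat.le_mul_of_pos_left (ordCompl[2] s) hpos]
    _ = m ! * (ordCompl[2] s + 1) := by rw [← mul_assoc, hfact]

theorem lt_two_pow_two_mul (h : m ! + s = n * 2 ^ n) : s < 2 ^ (2 * n) :=
  calc s < m ! + s := Nat.lt_add_of_pos_left m.factorial_pos
    _ = n * 2 ^ n := h
    _ ≤ 2 ^ n * 2 ^ n := by gcongr; exact Nat.lt_two_pow_self.le
    _ = 2 ^ (2 * n) := by rw [two_mul, pow_add]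

theorem ordCompl_dvd_of_pow_dvd_factorial {a b c : ℕ} (hs : s ∈ Nat.factoredNumbers {2, 3, 5, 7})
    (h : m ! + s = n * 2 ^ n) (h3 : 3 ^ a ∣ m !) (h5 : 5 ^ b ∣ m !) (h7 : 7 ^ c ∣ m !)
    (hn3 : n < 3 ^ a) (hn5 : n < 5 ^ b) (hn7 : n < 7 ^ c) : ordCompl[2] s ∣ n := by
  have hs0 := Nat.ne_zero_of_mem_factoredNumbers hs
  have hcop : (ordCompl[2] s).Coprime (2 ^ n) :=
    (Nat.coprime_ordCompl Nat.prime_two hs0).symm.pow_right n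
  refine dvd_of_coprime_of_add_eq_mul hcop (Nat.ordCompl_dvd s 2) h fun p hp hps ↦ ?_
  have hmem := Nat.mem_factoredNumbers'.1 (ordCompl_mem_factoredNumbers Nat.prime_two hs) p hp hps
  simp only [Finset.mem_insert, Finset.mem_singleton] at hmem
  obtain rfl | rfl | rfl := hmem
  exacts [⟨a, h3, hn3⟩, ⟨b, h5, hn5⟩, ⟨c, h7, hn7⟩]

theorem lt_add_720_of_lt_512 (hs : s ∈ Nat.factoredNumbers {2, 3, 5, 7})
    (h : m ! + s = n * 2 ^ n) (hn : n < 10 ^ 66) (hm512 : m < 512) : n < m + 720 := by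
  by_contra! hle
  refine not_two_pow_dvd_ordCompl_factorial_add_of_lt_512 hm512
    (ordCompl_mem_factoredNumbers Nat.prime_two hs) hn
    ((Nat.ordCompl_le s 2).trans_lt (lt_two_pow_two_mul h)) ?_
  exact two_pow_dvd_ordCompl_factorial_add_ordCompl
    (Nat.ne_zero_of_mem_factoredNumbers hs) h hle

theorem lt_32_of_lt_512 (hs : s ∈ Nat.factoredNumbers {2, 3, 5, 7})
    (h : m ! + s = n * 2 ^ n) (hn : n < 10 ^ 66) (hm512 : m < 512) : m < 32 := by
  by_contra! hm32
  have hs0 := Nat.ne_zero_of_mem_factoredNumbers hs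
  have hlt : m ! < n * 2 ^ n := by omega
  have hn720 := lt_add_720_of_lt_512 hs h hn hm512
  have hm160 : m < 160 := by
    by_contra! hm160
    have := add_lt_add_of_factorial_lt (l := 880) (by simp) (by simp) (by decide +kernel) hm160 hlt
    omega
  have hmn : m + 40 < n := by
    have := add_lt_add_of_factorial_lt (l := 72) (by simp) (by simp) (by decide +kernel) hm32 hlt
    omega
  have hdvd (d : ℕ) (hd : d ∣ 32 !) : d ∣ m ! := hd.trans (Nat.factorial_dvd_factorial hm32)
  have hsn : ordCompl[2] s ∣ n := ordCompl_dvd_of_pow_dvd_factorial hs h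
    (hdvd (3 ^ 14) (by decide)) (hdvd (5 ^ 7) (by decide)) (hdvd (7 ^ 4) (by decide))
    (by omega) (by omega) (by omega)
  refine not_two_pow_dvd_ordCompl_factorial_add (by simp) checkedRun_add_lt_two_pow_40_ne_zero
    (m := m) (by omega) (Nat.ordCompl_pos 2 hs0)
    ((Nat.le_of_dvd (by omega) hsn).trans (by omega)) ?_
  exact two_pow_dvd_ordCompl_factorial_add_ordCompl hs0 h hmn.le

theorem ten_pow_four_lt_of_512_le (hs : s ∈ Nat.factoredNumbers {2, 3, 5, 7})
    (h : m ! + s = n * 2 ^ n) (hn : n < 10 ^ 66) (hm : 512 ≤ m) :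
    10 ^ 4 < m ∧ n * 2 ^ n + 1 ≤ m ! * m ! := by
  have hs0 := Nat.ne_zero_of_mem_factoredNumbers hs
  have hmn : m + 720 < n := by
    have := add_lt_add_of_factorial_lt (l := 1232) (n := n) (by simp) (by simp) (by decide +kernel)
      hm (by omega)
    omega
  have hdvd (d : ℕ) (hd : d ∣ 512 !) : d ∣ m ! := hd.trans (Nat.factorial_dvd_factorial hm)
  have hsn : ordCompl[2] s ∣ n := ordCompl_dvd_of_pow_dvd_factorial hs h
    (hdvd (3 ^ 140) (by decide +kernel)) (hdvd (5 ^ 100) (by decide +kernel))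
    (hdvd (7 ^ 80) (by decide +kernel)) (by omega) (by omega) (by omega)
  have hs_le : ordCompl[2] s ≤ 10 ^ 66 := (Nat.le_of_dvd (by omega) hsn).trans hn.le
  constructor
  · by_contra! hle
    refine not_two_pow_dvd_ordCompl_factorial_add (by simp) checkedRun_add_lt_two_pow_256_ne_zero
      (m := m) (by omega) (Nat.ordCompl_pos 2 hs0) hs_le ?_
    exact two_pow_dvd_ordCompl_factorial_add_ordCompl hs0 h (by omega)
  · calc n * 2 ^ n + 1 ≤ m ! * (ordCompl[2] s + 1) + m ! :=
        add_le_add (mul_two_pow_le_factorial_mul hs0 h) m.factorial_pos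
      _ = m ! * (ordCompl[2] s + 2) := by ring
      _ ≤ m ! * (10 ^ 66 + 2) := by gcongr
      _ ≤ m ! * m ! := by
        gcongr
        exact le_trans (by decide +kernel) (Nat.factorial_le hm)

/-- The pairs `(n, m)` with `0 < m < 32` and `n < 752` such that `n * 2 ^ n - m !` is positive and
has no prime factors other than 2, 3, 5 and 7. -/
def solutionPairs : List (ℕ × ℕ) :=
  [(1, 1), (2, 1), (2, 2), (2, 3), (3, 3), (4, 1), (4, 4), (5, 5), (6, 3), (6, 4), (9, 6)]

theorem checkedRun_solutionPairs_ne_zero :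
    checkedRun (fun m F ↦ ∀ n < 752, n * 2 ^ n - F ∣ 210 ^ 800 → (n, m) ∈ solutionPairs)
      (fun m F ↦ (m + 1) * F) 5 1 1 ≠ 0 := by
  decide +kernel

theorem mem_solutionPairs_of_lt_32 (hm : m ≠ 0) (hs : s ∈ Nat.factoredNumbers {2, 3, 5, 7})
    (h : m ! + s = n * 2 ^ n) (hn : n < 10 ^ 66) (hm32 : m < 32) : (n, m) ∈ solutionPairs := by
  have hn752 : n < 752 := (lt_add_720_of_lt_512 hs h hn (by omega)).trans_le (by omega)
  have hs_lt : s < 2 ^ 800 :=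
    calc s < m ! + s := Nat.lt_add_of_pos_left m.factorial_pos
      _ = n * 2 ^ n := h
      _ ≤ 752 * 2 ^ 752 := by gcongr; simp
      _ < 2 ^ 800 := by norm_num
  have hsdvd : s ∣ 210 ^ 800 := by
    refine dvd_pow_of_lt_two_pow (Nat.ne_zero_of_mem_factoredNumbers hs) hs_lt fun p hp hps ↦ ?_
    have hmem := Nat.mem_factoredNumbers'.1 hs p hp hps
    simp only [Finset.mem_insert, Finset.mem_singleton] at hmem
    obtain rfl | rfl | rfl | rfl := hmem <;> norm_num
  refine (checkedRun_spec (e := Nat.factorial) Nat.factorial_succ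
    checkedRun_solutionPairs_ne_zero).1 m (by omega) (by omega) n hn752 ?_
  rwa [← h, Nat.add_sub_cancel_left]

theorem mem_solutionPairs_or_ten_pow_four_lt (hm : m ≠ 0)
    (hs : s ∈ Nat.factoredNumbers {2, 3, 5, 7}) (h : m ! + s = n * 2 ^ n) (hn : n < 10 ^ 66) :
    (n, m) ∈ solutionPairs ∨ 10 ^ 4 < m ∧ n * 2 ^ n + 1 ≤ m ! * m ! := by
  obtain hm512 | hm512 := lt_or_ge m 512
  · exact .inl (mem_solutionPairs_of_lt_32 hm hs h hn (lt_32_of_lt_512 hs h hn hm512))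
  · exact .inr (ten_pow_four_lt_of_512_le hs h hn hm512)

end FactorialAddFactored

/-! ### The equation `k ! + m ! = n * 2 ^ n` -/

theorem two_pow_dvd_factorial_of_dvd_factorial_add_factorial {k m n : ℕ} (hmk : m ≤ k)
    (h : 2 ^ n ∣ k ! + m !) : 2 ^ n ∣ (m + 2)! := by
  obtain ⟨a, ha⟩ : 2 ∣ (m + 1) * (m + 2) := (Nat.even_mul_succ_self (m + 1)).two_dvd
  have hfact : (m + 2)! = m ! * (2 * a) := by
    rw [← ha, Nat.factorial_succ, Nat.factorial_succ]
    ring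
  obtain rfl | rfl | hk : k = m ∨ k = m + 1 ∨ m + 2 ≤ k := by omega
  · exact h.trans ⟨a, by rw [hfact]; ring⟩
  · exact h.trans ⟨m + 1, by simp only [Nat.factorial_succ]; ring⟩
  · obtain ⟨b, hb⟩ := Nat.factorial_dvd_factorial hk
    have hsum : k ! + m ! = m ! * (2 * (a * b) + 1) := by
      rw [hb, hfact]
      ring
    have hcop : (2 ^ n).Coprime (2 * (a * b) + 1) :=
      (Nat.coprime_two_left.2 (odd_two_mul_add_one _)).pow_left n
    exact (hcop.dvd_of_dvd_mul_right (hsum ▸ h)).trans (Nat.factorial_dvd_factorial (by omega))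

theorem factorial_add_factorial_eq_mul_two_pow {k m n : ℕ} (hm : 0 < m) (hmk : m ≤ k)
    (h : k ! + m ! = n * 2 ^ n) : (n, k, m) = (1, 1, 1) ∨ (n, k, m) = (2, 3, 2) := by
  have hn : n ≤ m + 2 := by
    have hdvd := two_pow_dvd_factorial_of_dvd_factorial_add_factorial hmk (h ▸ dvd_mul_left _ n)
    exact ((Nat.prime_two.pow_dvd_iff_le_factorization (m + 2).factorial_ne_zero).1 hdvd).trans
      (factorization_two_factorial_le _)
  have hk : k < 7 := by
    by_contra! hk
    have hlt : k ! < n * 2 ^ n := h ▸ Nat.lt_add_of_pos_right m.factorial_pos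
    have := add_lt_add_of_factorial_lt (l := 9) (by simp) (by simp) (by decide) hk hlt
    omega
  interval_cases k <;> interval_cases m <;> interval_cases n <;> simp_all [Nat.factorial]

/-- Theorem 3 (degenerate solutions): all degenerate solutions of `C_n = m₁! + m₂! + s`
with `C_n = n·2^n + 1`, `m₁ ≥ m₂ ≥ 1`, `s` a positive integer whose prime factors lie in
`{2, 3, 5, 7}` and `n < 10^66` are the twelve listed tuples, except possibly if
`m₂ = 1`, `m₁ > 10⁴` and `C_n ≤ (m₁!)²` hold simultaneously. Degeneracy means that at
least one of `m₁!`, `m₂!`, `m₁! + m₂!` equals `n·2^n` or `1`. -/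
theorem cullen_two_factorials_S_unit_degenerate
    (n m₁ m₂ s : ℕ) (hn : 0 < n) (hm₁ : 0 < m₁) (hm₂ : 0 < m₂) (hm : m₂ ≤ m₁)
    (hs : 0 < s) (hsP : ∀ p, p.Prime → p ∣ s → p ∈ ({2, 3, 5, 7} : Finset ℕ))
    (hN : n < 10 ^ 66)
    (heq : n * 2 ^ n + 1 = Nat.factorial m₁ + Nat.factorial m₂ + s)
    (hdeg : Nat.factorial m₁ = n * 2 ^ n ∨ Nat.factorial m₁ = 1 ∨
      Nat.factorial m₂ = n * 2 ^ n ∨ Nat.factorial m₂ = 1 ∨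
      Nat.factorial m₁ + Nat.factorial m₂ = n * 2 ^ n ∨
      Nat.factorial m₁ + Nat.factorial m₂ = 1)
    (hexc : ¬ (m₂ = 1 ∧ 10 ^ 4 < m₁ ∧ n * 2 ^ n + 1 ≤ Nat.factorial m₁ * Nat.factorial m₁)) :
    (n, m₁, m₂, s) ∈ ({(1, 1, 1, 1), (2, 1, 1, 7), (2, 2, 1, 6), (2, 3, 1, 2),
      (2, 3, 2, 1), (3, 3, 1, 18), (4, 1, 1, 63), (4, 4, 1, 40), (5, 5, 1, 40),
      (6, 3, 1, 378), (6, 4, 1, 360), (9, 6, 1, 3888)} : Set (ℕ × ℕ × ℕ × ℕ)) := by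
  have hcases : m₂ ! = 1 ∨ m₁ ! + m₂ ! = n * 2 ^ n := by
    have := m₁.factorial_pos
    have := m₂.factorial_pos
    have := Nat.factorial_le hm
    omega
  obtain hone | hsum := hcases
  · obtain rfl : m₂ = 1 := le_antisymm (Nat.factorial_eq_one.1 hone) hm₂
    have h : m₁ ! + s = n * 2 ^ n := by omega
    obtain hpair | hlarge :=
      mem_solutionPairs_or_ten_pow_four_lt hm₁.ne' (Nat.mem_factoredNumbers'.2 hsP) h hN
    · simp only [solutionPairs, List.mem_cons, Prod.mk.injEq, List.not_mem_nil, or_false] at hpair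
      rcases hpair with ⟨rfl, rfl⟩ | ⟨rfl, rfl⟩ | ⟨rfl, rfl⟩ | ⟨rfl, rfl⟩ | ⟨rfl, rfl⟩ |
        ⟨rfl, rfl⟩ | ⟨rfl, rfl⟩ | ⟨rfl, rfl⟩ | ⟨rfl, rfl⟩ | ⟨rfl, rfl⟩ | ⟨rfl, rfl⟩ <;>
        simp [Nat.factorial] at h ⊢ <;> omega
    · exact absurd ⟨rfl, hlarge⟩ hexc
  · obtain rfl : s = 1 := by omega
    obtain h | h := factorial_add_factorial_eq_mul_two_pow hm₂ hm hsum <;> simp_all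
end

section
/- Let W_n = n·2^n − 1 denote the n-th Woodall number and let S denote the set of positive integers all of whose prime factors lie in {2, 3, 5, 7}. Then the only solution of the equation W_n = 1! + s with n a positive integer, n < 10^66, and s ∈ S is n = 2, s = 6, i.e., W_2 = 1! + 6. -/
/-!
If `n * 2 ^ n = s + 2` and `p ^ k ∣ s`, then `n * 2 ^ n ≡ 2 [MOD p ^ k]`. For odd `p`, with
`2 ^ L ≡ 1 [MOD p]` and `L` coprime to `p`, this congruence has at most one solution modulo
`L * p ^ k` in each class modulo `L`: once `n` is known modulo `L * p ^ j`, so is `2 ^ n` modulo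
`p ^ (j + 1)`, and therefore `n` modulo `p ^ (j + 1)`. For `p = 3, 5, 7` and `k` moderately large,
every solution other than `1` exceeds `10 ^ 66`. This bounds the exponents of `3`, `5` and `7` in
`s`; that of `2` is at most `1`. Hence `s` divides an explicit integer, which bounds `n` by a few
hundred.
-/

theorem pow_pow_modEq_pow_pow {a b p : ℕ} (h : a ≡ b [MOD p]) (j : ℕ) :
    a ^ p ^ j ≡ b ^ p ^ j [MOD p ^ (j + 1)] := by
  rw [Nat.modEq_iff_dvd] at h ⊢
  push_cast
  exact dvd_sub_pow_of_dvd_sub h j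

theorem pow_modEq_pow_of_modEq_mul_pow {a p L j m n : ℕ} (hL : a ^ L ≡ 1 [MOD p])
    (h : m ≡ n [MOD L * p ^ j]) : a ^ m ≡ a ^ n [MOD p ^ (j + 1)] := by
  have hperiod : a ^ (L * p ^ j) ≡ 1 [MOD p ^ (j + 1)] := by
    simpa only [pow_mul, one_pow] using pow_pow_modEq_pow_pow hL j
  rw [← ZMod.natCast_eq_natCast_iff] at hperiod ⊢
  push_cast at hperiod ⊢
  exact pow_eq_pow_of_modEq h hperiod

theorem modEq_mul_pow_of_mul_pow_modEq {a p L m n : ℕ} (ha : a.Coprime p) (hLp : L.Coprime p)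
    (hL : a ^ L ≡ 1 [MOD p]) (hmn : m ≡ n [MOD L]) {k : ℕ}
    (h : m * a ^ m ≡ n * a ^ n [MOD p ^ k]) : m ≡ n [MOD L * p ^ k] := by
  induction k with
  | zero => simpa using hmn
  | succ j ih =>
    have hpow : a ^ m ≡ a ^ n [MOD p ^ (j + 1)] :=
      pow_modEq_pow_of_modEq_mul_pow hL (ih (h.of_dvd (pow_dvd_pow p j.le_succ)))
    have hmul : m * a ^ m ≡ n * a ^ m [MOD p ^ (j + 1)] := h.trans (hpow.symm.mul_left n)
    have hcancel : m ≡ n [MOD p ^ (j + 1)] :=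
      Nat.ModEq.cancel_right_of_coprime (ha.symm.pow (j + 1) m) hmul
    exact (Nat.modEq_and_modEq_iff_modEq_mul (hLp.pow_right (j + 1))).1 ⟨hmn, hcancel⟩

theorem modEq_mul_pow_of_mul_pow_eq {a c p L k n r : ℕ} (ha : a.Coprime p) (hLp : L.Coprime p)
    (hL : a ^ L ≡ 1 [MOD p]) (hn : n * a ^ n ≡ c [MOD p ^ k])
    (hr : (r * a ^ r : ZMod (p ^ k)) = c) (hnr : n ≡ r [MOD L]) : n ≡ r [MOD L * p ^ k] := by
  have hrc : r * a ^ r ≡ c [MOD p ^ k] := by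
    rw [← ZMod.natCast_eq_natCast_iff]
    exact_mod_cast hr
  exact modEq_mul_pow_of_mul_pow_modEq ha hLp hL hnr (hn.trans hrc.symm)

-- The residues here and for `5` and `7` come from lifting a solution modulo `L * p ^ j` to
-- `L * p ^ (j + 1)`, starting from each class modulo `L`.
theorem modEq_of_mul_two_pow_modEq_two_three_pow {n : ℕ} (h : n * 2 ^ n ≡ 2 [MOD 3 ^ 139]) :
    n ≡ 1 [MOD 2 * 3 ^ 139] ∨
    n ≡ 1780364649578693192282169238786106439697282677604945689117235624118
      [MOD 2 * 3 ^ 139] := by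
  have hlift {r : ℕ} (hr : (r * 2 ^ r : ZMod (3 ^ 139)) = 2) (hnr : n ≡ r [MOD 2]) :
      n ≡ r [MOD 2 * 3 ^ 139] :=
    modEq_mul_pow_of_mul_pow_eq (by decide) (by decide) (by decide) h (by exact_mod_cast hr) hnr
  obtain hn | hn : n % 2 = 1 ∨ n % 2 = 0 := by omega
  · exact .inl (hlift (by push_cast; reduce_mod_char) hn)
  · exact .inr (hlift (by push_cast; reduce_mod_char) hn)

theorem modEq_of_mul_two_pow_modEq_two_five_pow {n : ℕ} (h : n * 2 ^ n ≡ 2 [MOD 5 ^ 95]) :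
    n ≡ 1 [MOD 4 * 5 ^ 95] ∨
    n ≡ 4871073342569149304405035395950661088564509290602565719192125760958 [MOD 4 * 5 ^ 95] ∨
    n ≡ 7474232138673028739135464638925082581728469398899450458402856603179 [MOD 4 * 5 ^ 95] ∨
    n ≡ 2961908171939841220483362485605263974704194579116214545104494723112
      [MOD 4 * 5 ^ 95] := by
  have hlift {r : ℕ} (hr : (r * 2 ^ r : ZMod (5 ^ 95)) = 2) (hnr : n ≡ r [MOD 4]) :
      n ≡ r [MOD 4 * 5 ^ 95] :=
    modEq_mul_pow_of_mul_pow_eq (by decide) (by decide) (by decide) h (by exact_mod_cast hr) hnr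
  obtain hn | hn | hn | hn : n % 4 = 1 ∨ n % 4 = 2 ∨ n % 4 = 3 ∨ n % 4 = 0 := by omega
  · exact .inl (hlift (by push_cast; reduce_mod_char) hn)
  · exact .inr (.inl (hlift (by push_cast; reduce_mod_char) hn))
  · exact .inr (.inr (.inl (hlift (by push_cast; reduce_mod_char) hn)))
  · exact .inr (.inr (.inr (hlift (by push_cast; reduce_mod_char) hn)))

theorem modEq_of_mul_two_pow_modEq_two_seven_pow {n : ℕ} (h : n * 2 ^ n ≡ 2 [MOD 7 ^ 78]) :
    n ≡ 1 [MOD 3 * 7 ^ 78] ∨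
    n ≡ 1943728540872828544710474790980551391632278369901869348214088201206 [MOD 3 * 7 ^ 78] ∨
    n ≡ 1688984004690996351255035093470237944911766261254543325873560910897
      [MOD 3 * 7 ^ 78] := by
  have hlift {r : ℕ} (hr : (r * 2 ^ r : ZMod (7 ^ 78)) = 2) (hnr : n ≡ r [MOD 3]) :
      n ≡ r [MOD 3 * 7 ^ 78] :=
    modEq_mul_pow_of_mul_pow_eq (by decide) (by decide) (by decide) h (by exact_mod_cast hr) hnr
  obtain hn | hn | hn : n % 3 = 1 ∨ n % 3 = 2 ∨ n % 3 = 0 := by omega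
  · exact .inl (hlift (by push_cast; reduce_mod_char) hn)
  · exact .inr (.inl (hlift (by push_cast; reduce_mod_char) hn))
  · exact .inr (.inr (hlift (by push_cast; reduce_mod_char) hn))

/-- An upper bound for the exponent of `p ∈ {2, 3, 5, 7}` in `n * 2 ^ n - 2` for
`1 < n < 10 ^ 66`. For odd `p` it is the least `e` such that every solution `n > 1` of
`n * 2 ^ n ≡ 2 [MOD p ^ (e + 1)]` is at least `10 ^ 66`. The value `0` at other `p` is arbitrary. -/
def exponentBound : ℕ → ℕ
  | 2 => 1
  | 3 => 138
  | 5 => 94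
  | 7 => 77
  | _ => 0

theorem not_pow_exponentBound_succ_dvd {n s p : ℕ} (h1 : 1 < n) (hN : n < 10 ^ 66)
    (h : n * 2 ^ n = s + 2) (hp : p ∈ ({2, 3, 5, 7} : Finset ℕ)) :
    ¬ p ^ (exponentBound p + 1) ∣ s := by
  intro hdvd
  have hmod : n * 2 ^ n ≡ 2 [MOD p ^ (exponentBound p + 1)] := h ▸ Nat.add_modEq_right_iff.2 hdvd
  simp only [Finset.mem_insert, Finset.mem_singleton] at hp
  obtain rfl | rfl | rfl | rfl := hp
  · have hfour : 2 ^ 2 ∣ s + 2 := h ▸ (pow_dvd_pow 2 h1).mul_left n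
    have hfour_s : 2 ^ 2 ∣ s := hdvd
    omega
  · obtain hr | hr := modEq_of_mul_two_pow_modEq_two_three_pow hmod <;>
      rw [Nat.ModEq] at hr <;> omega
  · obtain hr | hr | hr | hr := modEq_of_mul_two_pow_modEq_two_five_pow hmod <;>
      rw [Nat.ModEq] at hr <;> omega
  · obtain hr | hr | hr := modEq_of_mul_two_pow_modEq_two_seven_pow hmod <;>
      rw [Nat.ModEq] at hr <;> omega

theorem dvd_prod_pow_of_mem_factoredNumbers {P : Finset ℕ} {e : ℕ → ℕ} {s : ℕ}
    (hs : s ∈ Nat.factoredNumbers P) (he : ∀ p ∈ P, ¬ p ^ (e p + 1) ∣ s) :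
    s ∣ ∏ p ∈ P, p ^ e p := by
  rw [Nat.dvd_iff_prime_pow_dvd_dvd]
  intro p k hp hk
  obtain rfl | hkpos := Nat.eq_zero_or_pos k
  · simp
  have hpP : p ∈ P := Nat.mem_factoredNumbers'.1 hs p hp ((dvd_pow_self p hkpos.ne').trans hk)
  have hle : k ≤ e p := by
    by_contra! hlt
    exact he p hpP ((pow_dvd_pow p hlt).trans hk)
  exact (pow_dvd_pow p hle).trans (Finset.dvd_prod_of_mem (fun q ↦ q ^ e q) hpP)

theorem lt_of_mul_two_pow_sub_two_dvd {n : ℕ}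
    (h : n * 2 ^ n - 2 ∣ ∏ p ∈ {2, 3, 5, 7}, p ^ exponentBound p) : n < 655 := by
  obtain rfl | hn := n.eq_zero_or_pos
  · norm_num
  have hle : n * 2 ^ n - 2 ≤ ∏ p ∈ {2, 3, 5, 7}, p ^ exponentBound p :=
    Nat.le_of_dvd (by decide +kernel) h
  have hpow : 2 ^ n ≤ (∏ p ∈ {2, 3, 5, 7}, p ^ exponentBound p) + 2 :=
    (Nat.le_mul_of_pos_left _ hn).trans (Nat.le_add_of_sub_le hle)
  have hprod : (∏ p ∈ {2, 3, 5, 7}, p ^ exponentBound p) + 2 < 2 ^ 655 := by decide +kernel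
  exact (pow_lt_pow_iff_right₀ one_lt_two).1 (hpow.trans_lt hprod)

theorem eq_two_of_mul_two_pow_sub_two_dvd {n : ℕ} (h1 : 1 < n)
    (h : n * 2 ^ n - 2 ∣ ∏ p ∈ {2, 3, 5, 7}, p ^ exponentBound p) : n = 2 := by
  have hsearch : ∀ m < 655, 1 < m →
      m * 2 ^ m - 2 ∣ ∏ p ∈ {2, 3, 5, 7}, p ^ exponentBound p → m = 2 := by
    decide +kernel
  exact hsearch n (lt_of_mul_two_pow_sub_two_dvd h) h1 h

/-- Remark: the only solution of `W_n = 1! + s` with `W_n = n·2^n - 1` the `n`-th Woodall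
number, `n` a positive integer with `n < 10^66`, and `s` a positive integer whose prime
factors lie in `{2, 3, 5, 7}`, is `n = 2`, `s = 6` (i.e. `W_2 = 1! + 6`). -/
theorem woodall_eq_one_factorial_add_S_unit
    (n s : ℕ) (hn : 0 < n) (hN : n < 10 ^ 66) (hs : 0 < s)
    (hsP : ∀ p, p.Prime → p ∣ s → p ∈ ({2, 3, 5, 7} : Finset ℕ)) :
    n * 2 ^ n - 1 = Nat.factorial 1 + s ↔ n = 2 ∧ s = 6 := by
  constructor
  · intro h
    rw [Nat.factorial_one] at h
    have heq : n * 2 ^ n = s + 2 := by omega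
    have h1 : 1 < n := by
      by_contra! hle
      obtain rfl : n = 1 := by omega
      omega
    have hdvd : s ∣ ∏ p ∈ {2, 3, 5, 7}, p ^ exponentBound p :=
      dvd_prod_pow_of_mem_factoredNumbers (Nat.mem_factoredNumbers'.2 hsP)
        fun p ↦ not_pow_exponentBound_succ_dvd h1 hN heq
    obtain rfl : s = n * 2 ^ n - 2 := by omega
    obtain rfl : n = 2 := eq_two_of_mul_two_pow_sub_two_dvd h1 hdvd
    exact ⟨rfl, rfl⟩
  · rintro ⟨rfl, rfl⟩
    rfl
end
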